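/- arXiv:0711.3488 — 2 statements merged into one kernel-verified Lean document; each statement's English description precedes it below -/
import Mathlib

section
/- Let r ≥ 2, n > r^15, and let G be a graph of order n. If μ(G) > μ(T_r(n)), then js_{r+1}(G) > n^{r-1} / r^{2r+4}. -/
/-!
The proof follows a saturation scheme: either `G` has a large induced subgraph whose spectrum is
visibly denser than an `r`-partite graph allows, and clique counting gives the joint, or it has a
large induced subgraph of large minimum degree, to which a stability theorem applies.

Write `m` for the number of vertices of an induced subgraph, `μ` for its largest eigenvalue, and let
`ε = 1 / r ^ 4`. If some vertex has degree at most `(1 - 1 / r - ε) m` while `μ / m` is close to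
`1 - 1 / r`, the smallest entry of the Perron vector is well below average, and deleting the
corresponding vertex raises `μ / m` by more than `ε / (2 m)` (`exists_removal`). Choosing a set `S`
of at least half of the vertices that maximises a suitable combination of `μ / m` and `m` therefore
gives (`exists_core`) a set satisfying one of two alternatives.

* `S` has about half of the vertices, and `μ / m` exceeds `1 - 1 / r` by at least `3 ε / 16`.
  Weight the vertices by the normalised Perron vector: no vertex is heavy, and the edge density is at
  least `μ / m`. A weighted Moon–Moser inequality (`moon_moser`) bounds the weight of the
  `(r+1)`-cliques from below, and averaging over edges gives the joint (`joint_of_weight`,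
  `joint_of_lam`).
* Every degree inside `S` exceeds `(1 - 1 / r - ε) m`. If `S` contains an `(r+1)`-clique, one of the
  edges of that clique has large codegree and extends greedily to many `(r+1)`-cliques
  (`joint_of_minDegree`). Otherwise the Andrásfai–Erdős–Sós theorem makes the subgraph
  `r`-colourable. When `S` is a proper subset, this contradicts the bound `μ ≤ (1 - 1 / r) m` for
  `r`-colourable graphs (`specMax_le_of_colouring`); when `S` is everything, it contradicts the fact
  that the Turán graph has the largest eigenvalue among `r`-colourable graphs
  (`specMax_le_turan`).
-/

/-- The largest adjacency eigenvalue of a finite simple graph. -/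
noncomputable def SimpleGraph.specMax {V : Type*} [Fintype V] [DecidableEq V]
    (G : SimpleGraph V) : ℝ :=
  letI := Classical.decRel G.Adj
  ⨆ i, (Matrix.IsHermitian.eigenvalues
    (A := G.adjMatrix ℝ)
    (by rw [Matrix.IsHermitian, Matrix.conjTranspose_eq_transpose_of_trivial]
        exact SimpleGraph.isSymm_adjMatrix G)) i

/-- `G.jointSize r` is the maximum size of an `r`-joint in `G`, i.e. the maximum number
of distinct `r`-cliques of `G` sharing a common edge. -/
noncomputable def SimpleGraph.jointSize {V : Type*} [Fintype V] (G : SimpleGraph V)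
    (r : ℕ) : ℕ :=
  sSup {t : ℕ | ∃ u v : V, G.Adj u v ∧ ∃ S : Finset (Finset V),
    S.card = t ∧ ∀ s ∈ S, G.IsNClique r s ∧ u ∈ s ∧ v ∈ s}

namespace SpectralJoints

open Finset

/-- The adjacency indicator of `G` as a real number. -/
noncomputable def ind {V : Type*} (G : SimpleGraph V) (u v : V) : ℝ := by
  classical exact if G.Adj u v then 1 else 0

/-! ### The largest eigenvalue and its Perron vector -/

section Spectral

variable {V : Type*} (G : SimpleGraph V)

lemma ind_nonneg (u v : V) : 0 ≤ ind G u v := by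
  unfold ind; split_ifs <;> norm_num

lemma ind_le_one (u v : V) : ind G u v ≤ 1 := by
  unfold ind; split_ifs <;> norm_num

lemma ind_of_adj {u v : V} (h : G.Adj u v) : ind G u v = 1 := by
  unfold ind; simp [h]

lemma ind_of_not_adj {u v : V} (h : ¬ G.Adj u v) : ind G u v = 0 := by
  unfold ind; simp [h]

lemma ind_comm (u v : V) : ind G u v = ind G v u := by
  by_cases h : G.Adj u v
  · rw [ind_of_adj G h, ind_of_adj G h.symm]
  · rw [ind_of_not_adj G h, ind_of_not_adj G fun h' => h h'.symm]

variable [Fintype V] [DecidableEq V]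

/-- `specMax G • 1 - A` is positive semidefinite, and `specMax G` is an eigenvalue of `A`. -/
lemma specMax_aux : ∃ A : Matrix V V ℝ, (∀ u v, A u v = ind G u v) ∧
    (Matrix.PosSemidef (algebraMap ℝ _ G.specMax - A)) ∧
    (Nonempty V → ∃ z : V → ℝ, z ≠ 0 ∧ A.mulVec z = G.specMax • z) := by
  classical
  let := Classical.decRel G.Adj
  have hA : (G.adjMatrix ℝ).IsHermitian := by
    rw [Matrix.IsHermitian, Matrix.conjTranspose_eq_transpose_of_trivial]
    exact SimpleGraph.isSymm_adjMatrix G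
  have hs : G.specMax = ⨆ i, hA.eigenvalues i := rfl
  refine ⟨G.adjMatrix ℝ, fun u v => ?_, ?_, ?_⟩
  · by_cases h : G.Adj u v
    · rw [ind_of_adj G h]; simp [h]
    · rw [ind_of_not_adj G h]; simp [h]
  · rw [Matrix.posSemidef_iff_isHermitian_and_spectrum_nonneg]
    constructor
    · refine Matrix.IsHermitian.sub ?_ hA
      rw [Matrix.algebraMap_eq_diagonal]
      exact Matrix.isHermitian_diagonal _
    · intro t ht
      rw [← spectrum.singleton_sub_eq, hA.spectrum_real_eq_range_eigenvalues] at ht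
      obtain ⟨a, ha, b, ⟨i, rfl⟩, rfl⟩ := Set.mem_sub.1 ht
      rw [Set.mem_singleton_iff] at ha
      subst ha
      have := le_ciSup (Set.finite_range hA.eigenvalues).bddAbove i
      simp only [Set.mem_ofPred_eq, sub_nonneg]
      rw [hs]; exact this
  · intro hne
    obtain ⟨i, hi⟩ := exists_eq_ciSup_of_finite (f := hA.eigenvalues)
    refine ⟨hA.eigenvectorBasis i, ?_, ?_⟩
    · intro h
      apply hA.eigenvectorBasis.orthonormal.ne_zero i
      ext j
      exact congrFun h j
    · rw [hs, ← hi]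
      exact hA.mulVec_eigenvectorBasis i

/-- The Rayleigh principle, in the form of an inequality for an arbitrary vector. -/
lemma rayleigh (x : V → ℝ) :
    ∑ u, ∑ v, ind G u v * x u * x v ≤ G.specMax * ∑ u, x u ^ 2 := by
  obtain ⟨A, hA, hp, -⟩ := specMax_aux G
  have h := hp.dotProduct_mulVec_nonneg x
  rw [Matrix.sub_mulVec, dotProduct_sub, Matrix.algebraMap_eq_diagonal] at h
  simp only [dotProduct, Matrix.mulVec, star_trivial, hA, Matrix.diagonal_apply, mul_sum,
    ite_mul, zero_mul, sum_ite_eq, mem_univ, if_true, Pi.algebraMap_apply,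
    Algebra.algebraMap_self_apply] at h
  have h1 : ∑ u, ∑ v, ind G u v * x u * x v = ∑ u, ∑ v, x u * (ind G u v * x v) :=
    sum_congr rfl fun u _ => sum_congr rfl fun v _ => by ring
  have h2 : G.specMax * ∑ u, x u ^ 2 = ∑ u, x u * (G.specMax * x u) := by
    rw [mul_sum]; exact sum_congr rfl fun u _ => by ring
  linarith

/-- Perron: the absolute value of a top eigenvector is again a top eigenvector, since it maximises
the Rayleigh quotient. -/
lemma exists_perron [Nonempty V] : ∃ x : V → ℝ, (∀ u, 0 ≤ x u) ∧ ∑ u, x u ^ 2 = 1 ∧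
    ∀ u, ∑ v, ind G u v * x v = G.specMax * x u := by
  obtain ⟨A, hA, hp, hz⟩ := specMax_aux G
  obtain ⟨z, hz0, hz⟩ := hz inferInstance
  set μ := G.specMax
  set y : V → ℝ := fun u => |z u|
  have hpos : 0 < ∑ u, z u ^ 2 := by
    obtain ⟨u, hu⟩ := Function.ne_iff.1 hz0
    exact sum_pos' (fun _ _ => sq_nonneg _) ⟨u, mem_univ _, by
      have : z u ≠ 0 := hu
      positivity⟩
  have hzq : ∑ u, ∑ v, ind G u v * z u * z v = μ * ∑ u, z u ^ 2 := by
    rw [mul_sum]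
    refine sum_congr rfl fun u _ => ?_
    have := congrFun hz u
    simp only [Matrix.mulVec, dotProduct, hA, Pi.smul_apply, smul_eq_mul] at this
    calc ∑ v, ind G u v * z u * z v = z u * ∑ v, ind G u v * z v := by
          rw [mul_sum]; exact sum_congr rfl fun v _ => by ring
      _ = _ := by rw [this]; ring
  have hyq : μ * ∑ u, y u ^ 2 ≤ ∑ u, ∑ v, ind G u v * y u * y v := by
    simp only [y, sq_abs]
    rw [← hzq]
    refine sum_le_sum fun u _ => sum_le_sum fun v _ => ?_
    rw [mul_assoc, mul_assoc]
    refine mul_le_mul_of_nonneg_left ?_ (ind_nonneg G u v)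
    rw [← abs_mul]; exact le_abs_self _
  have h0 : star y ⬝ᵥ ((algebraMap ℝ (Matrix V V ℝ) μ - A).mulVec y) = 0 := by
    refine le_antisymm ?_ (hp.dotProduct_mulVec_nonneg y)
    rw [Matrix.sub_mulVec, dotProduct_sub, Matrix.algebraMap_eq_diagonal]
    simp only [dotProduct, Matrix.mulVec, star_trivial, hA, Matrix.diagonal_apply, mul_sum,
      ite_mul, zero_mul, sum_ite_eq, mem_univ, if_true, Pi.algebraMap_apply,
      Algebra.algebraMap_self_apply]
    have h1 : ∑ u, ∑ v, ind G u v * y u * y v = ∑ u, ∑ v, y u * (ind G u v * y v) :=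
      sum_congr rfl fun u _ => sum_congr rfl fun v _ => by ring
    have h2 : μ * ∑ u, y u ^ 2 = ∑ u, y u * (μ * y u) := by
      rw [mul_sum]; exact sum_congr rfl fun u _ => by ring
    linarith
  have h1 := (hp.dotProduct_mulVec_zero_iff y).1 h0
  have h2 : ∀ u, ∑ v, ind G u v * y v = μ * y u := by
    intro u
    have := congrFun h1 u
    rw [Matrix.sub_mulVec, Matrix.algebraMap_eq_diagonal] at this
    simp only [Pi.sub_apply, Matrix.mulVec, dotProduct, hA, Matrix.diagonal_apply,
      ite_mul, zero_mul, sum_ite_eq, mem_univ, if_true, Pi.algebraMap_apply,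
      Algebra.algebraMap_self_apply, Pi.zero_apply] at this
    linarith
  have hN : ∑ u, y u ^ 2 = ∑ u, z u ^ 2 := by simp [y]
  set N := Real.sqrt (∑ u, z u ^ 2)
  have hNpos : 0 < N := Real.sqrt_pos.2 hpos
  have hNsq : N ^ 2 = ∑ u, z u ^ 2 := Real.sq_sqrt hpos.le
  refine ⟨fun u => y u / N, fun u => div_nonneg (abs_nonneg _) hNpos.le, ?_, fun u => ?_⟩
  · simp only [div_pow]
    rw [← sum_div, hN, ← hNsq, div_self (by positivity)]
  · calc ∑ v, ind G u v * (y v / N) = (∑ v, ind G u v * y v) / N := by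
          rw [sum_div]; exact sum_congr rfl fun v _ => by ring
      _ = _ := by rw [h2 u]; ring

/-- Collatz–Wielandt lower bound. -/
lemma le_specMax_of_superharmonic (μ : ℝ) (y : V → ℝ) (hy : ∀ u, 0 ≤ y u) (hy0 : ∃ u, y u ≠ 0)
    (h : ∀ u, μ * y u ≤ ∑ v, ind G u v * y v) : μ ≤ G.specMax := by
  have h1 := rayleigh G y
  have hpos : 0 < ∑ u, y u ^ 2 := by
    obtain ⟨u, hu⟩ := hy0
    exact sum_pos' (fun _ _ => sq_nonneg _) ⟨u, mem_univ _, by positivity⟩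
  have h2 : μ * ∑ u, y u ^ 2 ≤ ∑ u, ∑ v, ind G u v * y u * y v := by
    rw [mul_sum]
    refine sum_le_sum fun u _ => ?_
    calc μ * y u ^ 2 = y u * (μ * y u) := by ring
      _ ≤ y u * ∑ v, ind G u v * y v := mul_le_mul_of_nonneg_left (h u) (hy u)
      _ = _ := by rw [mul_sum]; exact sum_congr rfl fun v _ => by ring
  exact le_of_mul_le_mul_right (h2.trans h1) hpos

end Spectral

/-! ### Spectral bounds for multipartite graphs -/

section Colour

/-- The size of the `i`-th class of the colouring `c`. -/
def cls {V : Type*} [Fintype V] {r : ℕ} (c : V → Fin r) (i : Fin r) : ℕ :=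
  (univ.filter fun v => c v = i).card

variable {V : Type*} [Fintype V] {r : ℕ} (c : V → Fin r)

lemma sum_cls : ∑ i, cls c i = Fintype.card V := by
  unfold cls
  rw [← card_univ]
  exact (card_eq_sum_card_fiberwise (fun _ _ => by simp)).symm

lemma sum_comp_cls (f : Fin r → ℝ) : ∑ v, f (c v) = ∑ i, (cls c i : ℝ) * f i := by
  rw [← sum_fiberwise_of_maps_to (s := univ) (t := univ) (g := c) (fun _ _ => mem_univ _)]
  refine sum_congr rfl fun i _ => ?_
  rw [sum_congr rfl (g := fun _ => f i) (fun v hv => by rw [(mem_filter.1 hv).2])]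
  simp [cls]

variable [DecidableEq V] (G : SimpleGraph V)

/-- The characteristic inequality of an `r`-partite graph, obtained by summing the Perron equation
over each colour class. -/
lemma one_le_of_colouring [Nonempty V] (hc : ∀ u v, G.Adj u v → c u ≠ c v)
    (hμ : 0 < G.specMax) : 1 ≤ ∑ i, (cls c i : ℝ) / (G.specMax + cls c i) := by
  obtain ⟨x, hx0, hx1, hx⟩ := exists_perron G
  set μ := G.specMax
  set T := ∑ v, x v
  set S : Fin r → ℝ := fun i => ∑ v ∈ univ.filter (fun v => c v = i), x v
  have hST : ∑ i, S i = T := sum_fiberwise_of_maps_to (fun _ _ => mem_univ _) _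
  have hT : 0 < T := by
    refine lt_of_le_of_ne (sum_nonneg fun v _ => hx0 v) fun h => ?_
    have := (sum_eq_zero_iff_of_nonneg fun v _ => hx0 v).1 h.symm
    rw [sum_eq_zero fun v hv => by rw [this v hv]; simp] at hx1
    exact zero_ne_one hx1
  have h1 : ∀ u, μ * x u ≤ T - S (c u) := by
    intro u
    rw [← hx u, le_sub_iff_add_le]
    simp only [S, T, sum_filter, ← sum_add_distrib]
    refine sum_le_sum fun v _ => ?_
    by_cases h : G.Adj u v
    · rw [if_neg (hc u v h).symm, add_zero]
      nlinarith [ind_le_one G u v, hx0 v]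
    · rw [ind_of_not_adj G h, zero_mul, zero_add]
      split_ifs
      · exact le_rfl
      · exact hx0 v
  have h2 : ∀ i, S i ≤ T * ((cls c i : ℝ) / (μ + cls c i)) := by
    intro i
    have : μ * S i ≤ cls c i * (T - S i) := by
      simp only [S]
      rw [mul_sum]
      calc ∑ v ∈ univ.filter (fun v => c v = i), μ * x v
          ≤ ∑ v ∈ univ.filter (fun v => c v = i), (T - S i) :=
            sum_le_sum fun v hv => by
              have := h1 v; rwa [(mem_filter.1 hv).2] at this
        _ = _ := by rw [sum_const, nsmul_eq_mul]; rfl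
    rw [← mul_div_assoc, le_div_iff₀ (by positivity)]
    linarith
  have h3 : T ≤ T * ∑ i, (cls c i : ℝ) / (μ + cls c i) := by
    rw [mul_sum]; nth_rewrite 1 [← hST]
    exact sum_le_sum fun i _ => h2 i
  nlinarith

/-- Conversely, a complete multipartite graph satisfying the characteristic inequality at `μ` has
spectral radius at least `μ`. -/
lemma le_specMax_of_multipartite [Nonempty V] (hc : ∀ u v, c u ≠ c v → G.Adj u v) (μ : ℝ)
    (hμ : 0 < μ) (h : 1 ≤ ∑ i, (cls c i : ℝ) / (μ + cls c i)) : μ ≤ G.specMax := by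
  set f : Fin r → ℝ := fun i => 1 / (μ + cls c i)
  have hf : ∀ i, 0 < f i := fun i => by simp only [f]; positivity
  refine le_specMax_of_superharmonic G μ (fun v => f (c v)) (fun v => (hf _).le)
    ⟨Classical.arbitrary V, (hf _).ne'⟩ fun u => ?_
  have h1 : ∑ v, f (c v) = ∑ i, (cls c i : ℝ) / (μ + cls c i) := by
    rw [sum_comp_cls]; exact sum_congr rfl fun i _ => by simp only [f]; ring
  have h2 : ∑ v ∈ univ.filter (fun v => c v = c u), f (c v) = cls c (c u) * f (c u) := by
    rw [sum_congr rfl (g := fun _ => f (c u)) (fun v hv => by rw [(mem_filter.1 hv).2])]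
    simp [cls]
  have h3 : ∑ v, f (c v) ≤ ∑ v, ind G u v * f (c v) +
      ∑ v ∈ univ.filter (fun v => c v = c u), f (c v) := by
    rw [sum_filter, ← sum_add_distrib]
    refine sum_le_sum fun v _ => ?_
    split_ifs with hv
    · nlinarith [ind_nonneg G u v, hf (c v)]
    · rw [ind_of_adj G (hc u v fun h => hv h.symm)]; linarith
  have h4 : μ * f (c u) = 1 - cls c (c u) * f (c u) := by
    simp only [f]; field_simp; ring
  linarith

/-- `x ↦ x / (μ + x)` is concave, so a sum of its values at naturals of given total is largest
when the naturals are balanced: the function lies below its chord through `q` and `q + 1`. -/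
lemma sum_div_le_of_balanced (μ : ℝ) (hμ : 0 < μ) (q : ℕ) (t s : Fin r → ℕ)
    (hs : ∀ i, s i = q ∨ s i = q + 1) (hsum : ∑ i, t i = ∑ i, s i) :
    ∑ i, (t i : ℝ) / (μ + t i) ≤ ∑ i, (s i : ℝ) / (μ + s i) := by
  set D : ℝ := μ / ((μ + q) * (μ + q + 1))
  have h1 : ∀ i, (t i : ℝ) / (μ + t i) ≤ q / (μ + q) + (t i - q) * D := by
    intro i
    have key : (q / (μ + q) + (t i - q) * D) - (t i : ℝ) / (μ + t i) =
        μ * (((t i : ℝ) - q) * (t i - q - 1)) / ((μ + q) * (μ + q + 1) * (μ + t i)) := by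
      simp only [D]; field_simp; ring
    have : 0 ≤ ((t i : ℝ) - q) * (t i - q - 1) := by
      rcases le_or_gt (t i) q with h | h
      · have : (t i : ℝ) ≤ q := by exact_mod_cast h
        nlinarith
      · have : (q : ℝ) + 1 ≤ t i := by exact_mod_cast h
        nlinarith
    have : 0 ≤ μ * (((t i : ℝ) - q) * (t i - q - 1)) / ((μ + q) * (μ + q + 1) * (μ + t i)) := by
      positivity
    linarith
  have h2 : ∀ i, (s i : ℝ) / (μ + s i) = q / (μ + q) + (s i - q) * D := by
    intro i
    rcases hs i with h | h <;> rw [h]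
    · ring
    · simp only [D]; push_cast; field_simp; ring
  have h3 : (∑ i, (t i : ℝ)) = ∑ i, (s i : ℝ) := by exact_mod_cast hsum
  calc _ ≤ ∑ i, ((q : ℝ) / (μ + q) + (t i - q) * D) := sum_le_sum fun i _ => h1 i
    _ = ∑ i, ((q : ℝ) / (μ + q) + (s i - q) * D) := by
      simp only [sum_add_distrib, ← sum_mul, sum_sub_distrib, h3]
    _ = _ := (sum_congr rfl fun i _ => h2 i).symm

/-- An `r`-colourable graph satisfies `μ ≤ (1 - 1 / r) m`: in the characteristic inequality the
concave function `x ↦ x / (μ + x)` lies below its tangent at `m / r`. -/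
lemma specMax_le_of_colouring [Nonempty V] (hr : 0 < r) (hc : ∀ u v, G.Adj u v → c u ≠ c v) :
    G.specMax ≤ (1 - 1 / (r : ℝ)) * Fintype.card V := by
  have hr' : (1 : ℝ) ≤ r := by exact_mod_cast hr
  have hm : (0 : ℝ) < Fintype.card V := by exact_mod_cast Fintype.card_pos
  set m : ℝ := (Fintype.card V : ℝ)
  rcases le_or_gt G.specMax 0 with h | hμ
  · refine h.trans (mul_nonneg ?_ hm.le)
    rw [sub_nonneg, div_le_one (by linarith)]; exact hr'
  have h1 := one_le_of_colouring c G hc hμ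
  set μ := G.specMax
  set τ : ℝ := m / r
  have hτ : 0 < τ := by positivity
  have h2 : ∀ i, (cls c i : ℝ) / (μ + cls c i) ≤
      τ / (μ + τ) + (cls c i - τ) * (μ / (μ + τ) ^ 2) := by
    intro i
    have : (τ / (μ + τ) + (cls c i - τ) * (μ / (μ + τ) ^ 2)) - (cls c i : ℝ) / (μ + cls c i)
        = μ * ((cls c i : ℝ) - τ) ^ 2 / ((μ + τ) ^ 2 * (μ + cls c i)) := by
      field_simp; ring
    have h : 0 ≤ μ * ((cls c i : ℝ) - τ) ^ 2 / ((μ + τ) ^ 2 * (μ + cls c i)) := by positivity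
    linarith
  have h3 : (∑ i, (cls c i : ℝ)) = m := by
    simp only [m]; rw [← sum_cls c]; push_cast; rfl
  have h4 : 1 ≤ r * (τ / (μ + τ)) := by
    refine (h1.trans (sum_le_sum fun i _ => h2 i)).trans (le_of_eq ?_)
    rw [sum_add_distrib, ← sum_mul, sum_sub_distrib, h3]
    simp only [sum_const, card_univ, Fintype.card_fin, nsmul_eq_mul, τ]
    field_simp; ring
  rw [← mul_div_assoc, le_div_iff₀ (by positivity)] at h4
  have h5 : (r : ℝ) * τ = m := by simp only [τ]; field_simp
  have h6 : (1 - 1 / (r : ℝ)) * m = m - τ := by simp only [τ]; ring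
  linarith

end Colour

/-! ### The Turán graph -/

section Turan

/-- The colouring of the Turán graph by residues. -/
def turanColour (n r : ℕ) (hr : 0 < r) (v : Fin n) : Fin r := ⟨v % r, Nat.mod_lt _ hr⟩

lemma cls_turanColour (n r : ℕ) (hr : 0 < r) (i : Fin r) :
    cls (turanColour n r hr) i = n / r ∨ cls (turanColour n r hr) i = n / r + 1 := by
  have h : cls (turanColour n r hr) i = Nat.count (· ≡ i [MOD r]) n := by
    rw [Nat.count_eq_card_filter_range, cls, ← card_map Fin.valEmbedding]
    congr 1
    ext k
    simp only [mem_map, mem_filter, mem_univ, true_and, turanColour, Fin.ext_iff, Nat.ModEq,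
      Nat.mod_eq_of_lt i.2, mem_range, Fin.valEmbedding_apply]
    exact ⟨fun ⟨v, hv, hk⟩ => hk ▸ ⟨v.2, hv⟩, fun ⟨hk, hv⟩ => ⟨⟨k, hk⟩, hv, rfl⟩⟩
  rw [h, Nat.count_modEq_card _ hr]
  split_ifs <;> simp

/-- Among `r`-partite graphs of a given order, the Turán graph has the largest spectral radius. -/
lemma specMax_le_turan {V : Type*} [Fintype V] [DecidableEq V] [Nonempty V] {r : ℕ} (hr : 0 < r)
    (G : SimpleGraph V) (hG : G.Colorable r) (hpos : 0 < G.specMax) :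
    G.specMax ≤ (SimpleGraph.turanGraph (Fintype.card V) r).specMax := by
  obtain ⟨C⟩ := hG
  set n := Fintype.card V with hn
  have hn0 : 0 < n := Fintype.card_pos
  have : Nonempty (Fin n) := ⟨⟨0, hn0⟩⟩
  have h1 := one_le_of_colouring (fun v => C v) G (fun u v h => C.valid h) hpos
  refine le_specMax_of_multipartite (turanColour n r hr) _ ?_ _ hpos
    (h1.trans (sum_div_le_of_balanced _ hpos (n / r) _ _ (cls_turanColour n r hr) ?_))
  · intro u v h
    rw [SimpleGraph.turanGraph_adj]
    exact fun h' => h (Fin.ext h')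
  · rw [sum_cls, sum_cls, Fintype.card_fin]

/-- The spectral radius of the Turán graph is at least its average degree, which falls short of
`(1 - 1 / r) n` by at most `r / n` because the parts have nearly equal sizes. -/
lemma turan_lower (n r : ℕ) (hr : 0 < r) (hn : 0 < n) :
    (1 - 1 / (r : ℝ)) * n - r / n ≤ (SimpleGraph.turanGraph n r).specMax := by
  set c := turanColour n r hr
  have hr' : (0 : ℝ) < r := by exact_mod_cast hr
  have hn' : (0 : ℝ) < n := by exact_mod_cast hn
  have h1 := rayleigh (SimpleGraph.turanGraph n r) (fun _ => 1)
  simp only [mul_one, one_pow, sum_const, card_univ, Fintype.card_fin, nsmul_eq_mul] at h1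
  have hsum : (∑ i, (cls c i : ℝ)) = n := by
    have := sum_cls c; rw [Fintype.card_fin] at this; exact_mod_cast this
  have h2 : ∀ u, (n : ℝ) - cls c (c u) ≤ ∑ v, ind (SimpleGraph.turanGraph n r) u v := by
    intro u
    have e : (cls c (c u) : ℝ) = ∑ v, if c v = c u then (1 : ℝ) else 0 := by simp [cls]
    have e' : (n : ℝ) = ∑ v : Fin n, (1 : ℝ) := by simp
    rw [e, sub_le_iff_le_add, ← sum_add_distrib]
    nth_rewrite 1 [e']
    refine sum_le_sum fun v _ => ?_
    split_ifs with h
    · linarith [ind_nonneg (SimpleGraph.turanGraph n r) u v]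
    · rw [ind_of_adj _ (SimpleGraph.turanGraph_adj.2 fun h' => h (Fin.ext h'.symm))]; simp
  have h3 : (n : ℝ) ^ 2 - ∑ i, (cls c i : ℝ) ^ 2 ≤
      ∑ u, ∑ v, ind (SimpleGraph.turanGraph n r) u v := by
    refine le_trans (le_of_eq ?_) (sum_le_sum fun u _ => h2 u)
    rw [sum_sub_distrib, sum_comp_cls c (fun i => (cls c i : ℝ))]
    simp [pow_two]
  have h4 : ∑ i, ((cls c i : ℝ) - n / r) ^ 2 ≤ r := by
    calc _ ≤ ∑ i : Fin r, (1 : ℝ) := by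
          refine sum_le_sum fun i _ => ?_
          have ha : ((n / r : ℕ) : ℝ) ≤ (n : ℝ) / r := Nat.cast_div_le
          have hb : (n : ℝ) / r < ((n / r : ℕ) : ℝ) + 1 := by
            rw [div_lt_iff₀ hr']
            exact_mod_cast Nat.lt_mul_of_div_lt (Nat.lt_succ_self _) hr
          rcases cls_turanColour n r hr i with h | h <;> (simp only [c, h]; push_cast; nlinarith)
      _ = r := by simp
  have h5 : ∑ i, ((cls c i : ℝ) - n / r) ^ 2 = ∑ i, (cls c i : ℝ) ^ 2 - (n : ℝ) ^ 2 / r := by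
    have : ∀ i, ((cls c i : ℝ) - n / r) ^ 2 =
      (cls c i : ℝ) ^ 2 - (cls c i : ℝ) * (2 * (n / r)) + (n / r : ℝ) ^ 2 := fun i => by ring
    simp only [this, sum_add_distrib, sum_sub_distrib, ← sum_mul, hsum]
    simp only [sum_const, card_univ, Fintype.card_fin, nsmul_eq_mul]
    field_simp; ring
  have h6 : ((1 - 1 / (r : ℝ)) * n - r / n) * n ≤
      (SimpleGraph.turanGraph n r).specMax * n := by
    have : ((1 - 1 / (r : ℝ)) * n - r / n) * n = (n : ℝ) ^ 2 - (n : ℝ) ^ 2 / r - r := by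
      field_simp
    linarith
  exact le_of_mul_le_mul_right h6 hn'

end Turan

/-! ### Cliques and joints -/

section Cliques

open Classical in
/-- The cliques of `G` with `s` vertices. -/
noncomputable def cliques {V : Type*} [Fintype V] (G : SimpleGraph V) (s : ℕ) :
    Finset (Finset V) := univ.filter fun K => G.IsNClique s K

open Classical in
/-- The common neighbourhood of a vertex set `K`. -/
noncomputable def ext {V : Type*} [Fintype V] (G : SimpleGraph V) (K : Finset V) : Finset V :=
  univ.filter fun v => ∀ u ∈ K, G.Adj u v

variable {V : Type*} [Fintype V] (G : SimpleGraph V)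

lemma mem_cliques {s : ℕ} {K : Finset V} : K ∈ cliques G s ↔ G.IsNClique s K := by
  simp [cliques]

lemma mem_ext {K : Finset V} {v : V} : v ∈ ext G K ↔ ∀ u ∈ K, G.Adj u v := by
  simp [ext]

lemma le_jointSize {k : ℕ} {u v : V} (huv : G.Adj u v) (S : Finset (Finset V))
    (hS : ∀ s ∈ S, G.IsNClique k s ∧ u ∈ s ∧ v ∈ s) : S.card ≤ G.jointSize k := by
  refine le_csSup ⟨Fintype.card (Finset V), ?_⟩ ⟨u, v, huv, S, rfl, hS⟩
  rintro t ⟨_, _, _, S, rfl, _⟩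
  exact card_le_univ S

/-- The subgraph of `G` induced by a finite set `S`, as a graph on the subtype of `S`. -/
abbrev sub (S : Finset V) : SimpleGraph S := G.comap (Function.Embedding.subtype (· ∈ S))

lemma jointSize_sub_le (S : Finset V) (k : ℕ) : (sub G S).jointSize k ≤ G.jointSize k := by
  refine csSup_le' ?_
  rintro t ⟨u, v, huv, T, rfl, hT⟩
  rw [← card_map (Finset.mapEmbedding (Function.Embedding.subtype (· ∈ S))).toEmbedding]
  refine le_jointSize G (u := u) (v := v) huv _ fun K hK => ?_
  obtain ⟨L, hL, rfl⟩ := mem_map.1 hK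
  obtain ⟨h1, h2, h3⟩ := hT L hL
  exact ⟨h1.map.mono (SimpleGraph.map_comap_le _ _), mem_map_of_mem _ h2, mem_map_of_mem _ h3⟩

variable [DecidableEq V]

/-- Double counting of the pairs formed by an `(s+1)`-clique and one of its vertices. -/
lemma sum_cliques_succ (s : ℕ) (F : Finset V → V → ℝ) :
    ∑ K ∈ cliques G (s + 1), ∑ i ∈ K, F (K.erase i) i =
      ∑ R ∈ cliques G s, ∑ i ∈ ext G R, F R i := by
  rw [sum_sigma', sum_sigma']
  refine sum_bij' (fun p _ => ⟨p.1.erase p.2, p.2⟩) (fun p _ => ⟨insert p.2 p.1, p.2⟩)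
    ?_ ?_ ?_ ?_ ?_
  · rintro ⟨K, i⟩ h
    obtain ⟨hK, hi⟩ := mem_sigma.1 h
    rw [mem_cliques] at hK
    refine mem_sigma.2 ⟨(mem_cliques G).2 ?_, (mem_ext G).2 fun u hu => ?_⟩
    · exact hK.erase_of_mem hi
    · exact hK.isClique (mem_of_mem_erase hu) hi (ne_of_mem_erase hu)
  · rintro ⟨R, i⟩ h
    obtain ⟨hR, hi⟩ := mem_sigma.1 h
    rw [mem_cliques] at hR
    rw [mem_ext] at hi
    exact mem_sigma.2 ⟨(mem_cliques G).2 (hR.insert fun u hu => (hi u hu).symm),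
      mem_insert_self _ _⟩
  · rintro ⟨K, i⟩ h
    obtain ⟨hK, hi⟩ := mem_sigma.1 h
    simp [insert_erase hi]
  · rintro ⟨R, i⟩ h
    obtain ⟨hR, hi⟩ := mem_sigma.1 h
    have : i ∉ R := fun hiR => G.loopless.irrefl i ((mem_ext G).1 hi i hiR)
    simp [erase_insert this]
  · rintro ⟨K, i⟩ h
    rfl

lemma sum_cliques_one (f : Finset V → ℝ) : ∑ K ∈ cliques G 1, f K = ∑ u, f {u} := by
  have : cliques G 1 = univ.image fun u : V => ({u} : Finset V) := by
    ext K; simp [mem_cliques, SimpleGraph.isNClique_one, eq_comm]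
  rw [this, sum_image fun a _ b _ h => singleton_injective h]

/-! ### Weighted clique counting -/

section MoonMoser

variable (y : V → ℝ)

/-- The total `y`-weight of the `s`-cliques of `G`, a clique weighing the product of the weights of
its vertices. -/
noncomputable def wt (s : ℕ) : ℝ := ∑ K ∈ cliques G s, ∏ v ∈ K, y v

lemma wt_nonneg (hy : ∀ v, 0 ≤ y v) (s : ℕ) : 0 ≤ wt G y s :=
  sum_nonneg fun _ _ => prod_nonneg fun v _ => hy v

lemma wt_succ (s : ℕ) : (s + 1 : ℝ) * wt G y (s + 1) =
    ∑ R ∈ cliques G s, (∏ v ∈ R, y v) * ∑ i ∈ ext G R, y i := by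
  simp only [mul_sum]
  rw [← sum_cliques_succ G s (fun R i => (∏ v ∈ R, y v) * y i), wt, mul_sum]
  refine sum_congr rfl fun K hK => ?_
  rw [sum_congr rfl (g := fun _ => ∏ v ∈ K, y v) fun i hi => prod_erase_mul K y hi]
  rw [sum_const, ((mem_cliques G).1 hK).card_eq]
  simp

lemma wt_one : wt G y 1 = ∑ v, y v := by
  rw [wt, sum_cliques_one]; simp

lemma two_mul_wt_two : 2 * wt G y 2 = ∑ u, ∑ v, ind G u v * y u * y v := by
  classical
  have h := wt_succ G y 1
  norm_num at h
  rw [h, sum_cliques_one]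
  refine sum_congr rfl fun u _ => ?_
  rw [prod_singleton, mul_sum, ext, sum_filter]
  refine sum_congr rfl fun v _ => ?_
  by_cases hv : G.Adj u v
  · simp [hv, ind_of_adj]
  · simp [hv, ind_of_not_adj]

/-- A vertex outside the common neighbourhood of `K` lies in the common neighbourhood of at most one
of the sets `K.erase i`. -/
lemma sum_ext_erase_le (hy : ∀ v, 0 ≤ y v) (hy1 : ∑ v, y v = 1) (s : ℕ) (K : Finset V)
    (hK : K.card = s + 1) :
    ∑ i ∈ K, ∑ v ∈ ext G (K.erase i), y v ≤ 1 + s * ∑ v ∈ ext G K, y v := by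
  classical
  have h1 : ∑ i ∈ K, ∑ v ∈ ext G (K.erase i), y v =
      ∑ v, ((K.filter fun i => v ∈ ext G (K.erase i)).card : ℝ) * y v := by
    have : ∀ i ∈ K, ∑ v ∈ ext G (K.erase i), y v =
        ∑ v, if v ∈ ext G (K.erase i) then y v else 0 := fun i _ => by
      rw [← sum_filter]; congr 1; ext; simp
    rw [sum_congr rfl this, sum_comm]
    refine sum_congr rfl fun v _ => ?_
    rw [← sum_filter]; simp
  have h2 : 1 + s * ∑ v ∈ ext G K, y v =
      ∑ v, (1 + (s : ℝ) * if v ∈ ext G K then 1 else 0) * y v := by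
    have e : ∑ v ∈ ext G K, y v = ∑ v, if v ∈ ext G K then y v else 0 := by
      rw [← sum_filter]; congr 1; ext; simp
    have e' : 1 + s * ∑ v ∈ ext G K, y v = ∑ v, y v + s * ∑ v ∈ ext G K, y v := by rw [hy1]
    rw [e', e, mul_sum, ← sum_add_distrib]
    refine sum_congr rfl fun v _ => ?_
    split_ifs <;> ring
  rw [h1, h2]
  refine sum_le_sum fun v _ => mul_le_mul_of_nonneg_right ?_ (hy v)
  split_ifs with hv
  · have : (K.filter fun i => v ∈ ext G (K.erase i)).card ≤ s + 1 := hK ▸ card_filter_le _ _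
    have : ((K.filter fun i => v ∈ ext G (K.erase i)).card : ℝ) ≤ s + 1 := by exact_mod_cast this
    linarith
  · have : (K.filter fun i => v ∈ ext G (K.erase i)).card ≤ 1 := by
      rw [card_le_one]
      intro i hi j hj
      by_contra hij
      apply hv
      rw [mem_filter, mem_ext] at hi hj
      refine (mem_ext G).2 fun u hu => ?_
      by_cases h : u = i
      · exact hj.2 u (mem_erase.2 ⟨h ▸ hij, hu⟩)
      · exact hi.2 u (mem_erase.2 ⟨h, hu⟩)
    have : ((K.filter fun i => v ∈ ext G (K.erase i)).card : ℝ) ≤ 1 := by exact_mod_cast this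
    linarith

/-- A weighted Moon–Moser inequality. -/
lemma moon_moser (hy : ∀ v, 0 ≤ y v) (hy1 : ∑ v, y v = 1) (s : ℕ) :
    ((s + 1 : ℝ) * wt G y (s + 1)) ^ 2 ≤
      wt G y s * (wt G y (s + 1) + s * ((s + 2 : ℝ) * wt G y (s + 2))) := by
  set w : Finset V → ℝ := fun K => ∏ v ∈ K, y v
  set e : Finset V → ℝ := fun K => ∑ v ∈ ext G K, y v
  have hw : ∀ K, 0 ≤ w K := fun K => prod_nonneg fun v _ => hy v
  have h1 : ∑ R ∈ cliques G s, w R * e R ^ 2 ≤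
      wt G y (s + 1) + s * ((s + 2 : ℝ) * wt G y (s + 2)) := by
    have h3 := wt_succ G y (s + 1)
    have h4 : ∑ R ∈ cliques G s, w R * e R ^ 2 =
        ∑ R ∈ cliques G s, ∑ i ∈ ext G R, w R * y i * e R :=
      sum_congr rfl fun R _ => by
        rw [← sum_mul, ← mul_sum, pow_two, mul_assoc]
    rw [h4, ← sum_cliques_succ G s (fun R i => w R * y i * e R)]
    have h5 : (s + 2 : ℝ) * wt G y (s + 2) = ∑ K ∈ cliques G (s + 1), w K * e K := by
      rw [← h3]; push_cast; ring
    rw [h5, wt, mul_sum, ← sum_add_distrib]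
    refine sum_le_sum fun K hK => ?_
    rw [sum_congr rfl (g := fun i => w K * e (K.erase i)) fun i hi => by
      simp only [w]; rw [prod_erase_mul K y hi], ← mul_sum]
    have := sum_ext_erase_le G y hy hy1 s K ((mem_cliques G).1 hK).card_eq
    calc w K * ∑ i ∈ K, e (K.erase i) ≤ w K * (1 + s * e K) :=
          mul_le_mul_of_nonneg_left this (hw K)
      _ = _ := by simp only [w]; ring
  have h2 : (∑ R ∈ cliques G s, w R * e R) ^ 2 ≤
      (∑ R ∈ cliques G s, w R) * ∑ R ∈ cliques G s, w R * e R ^ 2 :=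
    sum_sq_le_sum_mul_sum_of_sq_le_mul _ (fun R _ => hw R)
      (fun R _ => mul_nonneg (hw R) (sq_nonneg _)) fun R _ => le_of_eq (by ring)
  rw [wt_succ]
  exact h2.trans (mul_le_mul_of_nonneg_left h1 (wt_nonneg G y hy s))

/-- Iterating the Moon–Moser inequality: if the edge density is at least `1 - β`, the expected weight
of the common neighbourhood of a random `(s+1)`-clique is at least `1 - (s + 1) β`. -/
lemma wt_ratio (hy : ∀ v, 0 ≤ y v) (hy1 : ∑ v, y v = 1) (β : ℝ)
    (h2 : 1 - β ≤ 2 * wt G y 2) (s : ℕ) (hs : ∀ i : ℕ, i ≤ s → (i : ℝ) * β < 1) :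
    0 < wt G y (s + 1) ∧
      (1 - (s + 1 : ℝ) * β) * wt G y (s + 1) ≤ (s + 2 : ℝ) * wt G y (s + 2) := by
  induction s with
  | zero =>
    have := wt_one G y
    rw [hy1] at this
    simp only [zero_add, this]
    norm_num
    linarith
  | succ s ih =>
    obtain ⟨h0, h1⟩ := ih fun i hi => hs i (hi.trans (Nat.le_succ _))
    have hb := hs (s + 1) le_rfl
    push_cast at hb ⊢
    have hmm := moon_moser G y hy hy1 (s + 1)
    push_cast at hmm
    rw [show s + 1 + 1 = s + 2 from rfl, show s + 1 + 2 = s + 3 from rfl] at *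
    set a := wt G y (s + 1)
    set b := wt G y (s + 2)
    set d := wt G y (s + 3)
    have hd : 0 ≤ d := wt_nonneg G y hy _
    have hq : 0 < 1 - (s + 1 : ℝ) * β := by linarith
    have hs0 : (0 : ℝ) ≤ s := Nat.cast_nonneg s
    have hb0 : 0 < b := by
      have : 0 < (s + 2 : ℝ) * b := lt_of_lt_of_le (mul_pos hq h0) h1
      exact (mul_pos_iff_of_pos_left (by positivity)).1 this
    refine ⟨hb0, ?_⟩
    set X := b + (s + 1 : ℝ) * ((s + 1 + 2 : ℝ) * d)
    have hX : 0 ≤ X := by positivity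
    have h5 : (s + 2 : ℝ) * b * ((1 - (s + 1 : ℝ) * β) * ((s + 2 : ℝ) * b)) ≤
        (s + 2 : ℝ) * b * X := by
      calc _ = (1 - (s + 1 : ℝ) * β) * ((s + 1 + 1 : ℝ) * b) ^ 2 := by ring
        _ ≤ (1 - (s + 1 : ℝ) * β) * (a * X) := mul_le_mul_of_nonneg_left hmm hq.le
        _ = ((1 - (s + 1 : ℝ) * β) * a) * X := by ring
        _ ≤ _ := mul_le_mul_of_nonneg_right h1 hX
    have h6 := le_of_mul_le_mul_left h5 (by positivity)
    have h7 : (s + 1 : ℝ) * ((1 - (s + 1 + 1 : ℝ) * β) * b) ≤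
        (s + 1 : ℝ) * ((s + 1 + 2 : ℝ) * d) := by
      simp only [X] at h6; nlinarith
    exact le_of_mul_le_mul_left h7 (by positivity)

/-- An edge density exceeding the Turán density by `c` forces a positive weight of `(r+1)`-cliques,
by multiplying the bounds of `wt_ratio`; with `β = 1 / r - c` only the last factor needs `c > 0`. -/
lemma wt_lower (hy : ∀ v, 0 ≤ y v) (hy1 : ∑ v, y v = 1) (r : ℕ) (hr : 2 ≤ r) (c : ℝ)
    (hc : 0 < c) (h2 : 1 - 1 / (r : ℝ) + c ≤ 2 * wt G y 2) :
    c * (2 * wt G y 2) ≤ (r + 1 : ℝ) * (r - 1) * (r : ℝ) ^ (r - 2) * wt G y (r + 1) := by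
  obtain ⟨k, rfl⟩ := Nat.exists_eq_add_of_le' hr
  have hrat := wt_ratio G y hy hy1 (1 / ((k + 2 : ℕ) : ℝ) - c) (by linarith)
  have hr0 : (0 : ℝ) < ((k + 2 : ℕ) : ℝ) := by positivity
  set r : ℝ := ((k + 2 : ℕ) : ℝ)
  have hrk : r = k + 2 := by simp [r]
  have hβ : ∀ i : ℕ, i ≤ k + 1 → (i : ℝ) * (1 / r - c) < 1 := by
    intro i hi
    have hi' : (i : ℝ) ≤ k + 1 := by exact_mod_cast hi
    have h1 : (i : ℝ) * (1 / r) < 1 := by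
      rw [mul_one_div, div_lt_one hr0]; linarith
    have : 0 ≤ (i : ℝ) * c := by positivity
    linarith
  have key : ∀ j : ℕ, j ≤ k →
      2 * wt G y 2 * (k.choose j : ℝ) ≤ (j + 2 : ℝ) * (j + 1) * r ^ j * wt G y (j + 2) := by
    intro j
    induction j with
    | zero => intro _; simp
    | succ j ih =>
      intro hj
      have ih := ih (by omega)
      have hjk : (j : ℝ) + 1 ≤ k := by exact_mod_cast hj
      obtain ⟨h0, h1⟩ := hrat (j + 1) fun i hi => hβ i (by omega)
      push_cast at h0 h1 ⊢
      rw [show j + 1 + 1 = j + 2 from rfl, show j + 1 + 2 = j + 3 from rfl] at *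
      have h3 : ((k : ℝ) - j) * wt G y (j + 2) ≤ r * ((j + 3 : ℝ) * wt G y (j + 3)) := by
        have : ((k : ℝ) - j) ≤ r * (1 - (j + 1 + 1 : ℝ) * (1 / r - c)) := by
          have e : r * (1 - (j + 1 + 1 : ℝ) * (1 / r - c)) =
            r - (j + 2) + r * (j + 2) * c := by field_simp; ring
          have : 0 ≤ r * (j + 2) * c := by positivity
          linarith
        calc _ ≤ r * (1 - (j + 1 + 1 : ℝ) * (1 / r - c)) * wt G y (j + 2) :=
              mul_le_mul_of_nonneg_right this h0.le
          _ = r * ((1 - (j + 1 + 1 : ℝ) * (1 / r - c)) * wt G y (j + 2)) := by ring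
          _ ≤ r * ((j + 1 + 2 : ℝ) * wt G y (j + 3)) := mul_le_mul_of_nonneg_left h1 hr0.le
          _ = _ := by ring
      have hch : (k.choose (j + 1) : ℝ) * (j + 1) = k.choose j * (k - j) := by
        have := Nat.choose_succ_right_eq k j
        rw [← Nat.cast_sub (by omega : j ≤ k)]
        exact_mod_cast this
      refine le_of_mul_le_mul_left ?_ (by positivity : (0 : ℝ) < j + 1)
      calc (j + 1 : ℝ) * (2 * wt G y 2 * (k.choose (j + 1) : ℝ))
          = (2 * wt G y 2 * (k.choose j : ℝ)) * (k - j) := by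
            linear_combination (2 * wt G y 2) * hch
        _ ≤ ((j + 2 : ℝ) * (j + 1) * r ^ j * wt G y (j + 2)) * (k - j) :=
            mul_le_mul_of_nonneg_right ih (by linarith)
        _ = ((j + 2 : ℝ) * (j + 1) * r ^ j) * ((k - j) * wt G y (j + 2)) := by ring
        _ ≤ ((j + 2 : ℝ) * (j + 1) * r ^ j) * (r * ((j + 3 : ℝ) * wt G y (j + 3))) :=
            mul_le_mul_of_nonneg_left h3 (by positivity)
        _ = _ := by ring
  have h3 := key k le_rfl
  rw [Nat.choose_self, Nat.cast_one, mul_one] at h3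
  obtain ⟨h0, h1⟩ := hrat (k + 1) fun i hi => hβ i (by omega)
  push_cast at h0 h1
  have e : 1 - ((k : ℝ) + 1 + 1) * (1 / r - c) = r * c := by
    rw [show (k : ℝ) + 1 + 1 = r by rw [hrk]; ring]; field_simp; ring
  rw [e] at h1
  rw [show k + 1 + 1 = k + 2 from rfl, show k + 1 + 2 = k + 2 + 1 from rfl] at *
  rw [show k + 2 - 2 = k by omega]
  have hk1 : r - 1 = k + 1 := by rw [hrk]; ring
  calc c * (2 * wt G y 2) ≤ c * ((k + 2 : ℝ) * (k + 1) * r ^ k * wt G y (k + 2)) :=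
        mul_le_mul_of_nonneg_left h3 hc.le
    _ = ((k + 1) * r ^ k) * (r * c * wt G y (k + 2)) := by rw [hrk]; ring
    _ ≤ ((k + 1) * r ^ k) * (((k : ℝ) + 1 + 2) * wt G y (k + 2 + 1)) :=
        mul_le_mul_of_nonneg_left h1 (by positivity)
    _ = _ := by rw [hk1, hrk]; ring

/-- Some edge lies in many `(r+1)`-cliques as soon as their total weight is large and no single
vertex weighs more than `W`. -/
lemma wt_le_joint (hy : ∀ v, 0 ≤ y v) (W : ℝ) (hW : ∀ v, y v ≤ W) (r : ℕ) :
    (r + 1 : ℝ) * r * wt G y (r + 1) ≤ G.jointSize (r + 1) * W ^ (r - 1) * (2 * wt G y 2) := by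
  classical
  set J : ℝ := (G.jointSize (r + 1) : ℝ)
  have h1 : (r + 1 : ℝ) * r * wt G y (r + 1) =
      ∑ u, ∑ v, ∑ K ∈ cliques G (r + 1), if u ∈ K ∧ v ∈ K.erase u then ∏ w ∈ K, y w else 0 := by
    rw [wt, mul_sum]
    have : ∀ K ∈ cliques G (r + 1), (r + 1 : ℝ) * r * ∏ w ∈ K, y w =
        ∑ u, ∑ v, if u ∈ K ∧ v ∈ K.erase u then ∏ w ∈ K, y w else 0 := by
      intro K hK
      have hc := ((mem_cliques G).1 hK).card_eq
      have : ∀ u, (∑ v, if u ∈ K ∧ v ∈ K.erase u then ∏ w ∈ K, y w else 0) =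
          if u ∈ K then r * ∏ w ∈ K, y w else 0 := by
        intro u
        by_cases hu : u ∈ K
        · simp only [hu, true_and, if_true]
          rw [← sum_filter, sum_const, filter_univ_mem, card_erase_of_mem hu, hc]
          simp
        · simp [hu]
      simp only [this]
      rw [← sum_filter, sum_const, filter_univ_mem, hc]
      simp [mul_assoc]
    rw [sum_congr rfl this, sum_comm]
    refine sum_congr rfl fun u _ => sum_comm
  rw [h1, two_mul_wt_two, mul_sum]
  refine sum_le_sum fun u _ => ?_
  rw [mul_sum]
  refine sum_le_sum fun v _ => ?_
  have hW0 : 0 ≤ W := (hy u).trans (hW u)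
  by_cases huv : G.Adj u v
  · rw [ind_of_adj G huv, one_mul, ← sum_filter]
    set S := (cliques G (r + 1)).filter fun K => u ∈ K ∧ v ∈ K.erase u
    have hS : (S.card : ℝ) ≤ J := by
      have := le_jointSize G huv S (k := r + 1) fun K hK => by
        obtain ⟨h1, h2, h3⟩ := mem_filter.1 hK
        exact ⟨(mem_cliques G).1 h1, h2, mem_of_mem_erase h3⟩
      simp only [J]; exact_mod_cast this
    calc ∑ K ∈ S, ∏ w ∈ K, y w ≤ ∑ K ∈ S, y u * y v * W ^ (r - 1) := by
          refine sum_le_sum fun K hK => ?_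
          obtain ⟨h1, h2, h3⟩ := mem_filter.1 hK
          rw [← mul_prod_erase K y h2, ← mul_prod_erase _ y h3, ← mul_assoc]
          refine mul_le_mul_of_nonneg_left ?_ (mul_nonneg (hy u) (hy v))
          refine (prod_le_prod (fun w _ => hy w) fun w _ => hW w).trans (le_of_eq ?_)
          rw [prod_const, card_erase_of_mem h3, card_erase_of_mem h2,
            ((mem_cliques G).1 h1).card_eq]
          congr 1
      _ = S.card * (y u * y v * W ^ (r - 1)) := by simp
      _ ≤ J * (y u * y v * W ^ (r - 1)) :=
          mul_le_mul_of_nonneg_right hS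
            (mul_nonneg (mul_nonneg (hy u) (hy v)) (pow_nonneg hW0 _))
      _ = _ := by ring
  · rw [ind_of_not_adj G huv]
    simp only [zero_mul, mul_zero]
    refine le_of_eq (sum_eq_zero fun K hK => if_neg ?_)
    rintro ⟨h2, h3⟩
    exact huv (((mem_cliques G).1 hK).isClique h2 (mem_of_mem_erase h3) (ne_of_mem_erase h3).symm)

/-- A weighting without heavy vertices whose edge density exceeds the Turán density by `c` produces
a large joint. The edge weight cancels between `wt_lower` and `wt_le_joint`. -/
lemma joint_of_weight (hy : ∀ v, 0 ≤ y v) (hy1 : ∑ v, y v = 1) (W : ℝ) (hW : ∀ v, y v ≤ W)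
    (r : ℕ) (hr : 2 ≤ r) (c : ℝ) (hc : 0 < c)
    (h2 : 1 - 1 / (r : ℝ) + c ≤ ∑ u, ∑ v, ind G u v * y u * y v) :
    r * c ≤ G.jointSize (r + 1) * W ^ (r - 1) * ((r - 1) * (r : ℝ) ^ (r - 2)) := by
  rw [← two_mul_wt_two] at h2
  have h3 := wt_lower G y hy hy1 r hr c hc h2
  have h4 := wt_le_joint G y hy W hW r
  have hr' : (2 : ℝ) ≤ r := by exact_mod_cast hr
  have hpos : 0 < 2 * wt G y 2 := by
    refine lt_of_lt_of_le ?_ h2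
    have : 1 / (r : ℝ) ≤ 1 := by rw [div_le_one (by linarith)]; linarith
    linarith
  refine le_of_mul_le_mul_right ?_ hpos
  calc r * c * (2 * wt G y 2) = r * (c * (2 * wt G y 2)) := by ring
    _ ≤ r * ((r + 1 : ℝ) * (r - 1) * (r : ℝ) ^ (r - 2) * wt G y (r + 1)) :=
        mul_le_mul_of_nonneg_left h3 (by linarith)
    _ = ((r - 1) * (r : ℝ) ^ (r - 2)) * ((r + 1 : ℝ) * r * wt G y (r + 1)) := by ring
    _ ≤ ((r - 1) * (r : ℝ) ^ (r - 2)) *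
        (G.jointSize (r + 1) * W ^ (r - 1) * (2 * wt G y 2)) :=
        mul_le_mul_of_nonneg_left h4 (mul_nonneg (by linarith) (by positivity))
    _ = _ := by ring

end MoonMoser

/-! ### Joints in graphs of large minimum degree -/

section Extension

lemma codegree_arith (R : ℝ) (hR : 2 ≤ R) :
    (R + 1) * R * (1 - 2 / R + (R - 2) / R ^ 4 + 1 / (3 * R ^ 3)) <
      2 * (R - 1) * ((R + 1) * (1 - 1 / R - 1 / R ^ 4)) - R * (R - 1) := by
  have hR0 : 0 < R := by linarith
  have key : 2 * (R - 1) * ((R + 1) * (1 - 1 / R - 1 / R ^ 4)) - R * (R - 1) -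
      (R + 1) * R * (1 - 2 / R + (R - 2) / R ^ 4 + 1 / (3 * R ^ 3)) =
      (2 * R ^ 3 - 4 * R ^ 2 + 6 * R + 6) / (3 * R ^ 4) := by
    field_simp; ring
  have : 0 < (2 * R ^ 3 - 4 * R ^ 2 + 6 * R + 6) / (3 * R ^ 4) := by
    refine div_pos ?_ (by positivity)
    nlinarith [mul_nonneg (sq_nonneg R) (sub_nonneg.2 hR)]
  linarith

lemma card_ext_pair (u v : V) :
    ((ext G {u, v}).card : ℝ) = ∑ w, ind G u w * ind G v w := by
  classical
  rw [ext, card_filter, Nat.cast_sum]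
  refine sum_congr rfl fun w _ => ?_
  by_cases h1 : G.Adj u w <;> by_cases h2 : G.Adj v w <;>
    simp [h1, h2, ind_of_adj, ind_of_not_adj]

lemma card_ext_singleton (u : V) : ((ext G {u}).card : ℝ) = ∑ w, ind G u w := by
  classical
  rw [ext, card_filter, Nat.cast_sum]
  refine sum_congr rfl fun w _ => ?_
  by_cases h1 : G.Adj u w <;> simp [h1, ind_of_adj, ind_of_not_adj]

/-- In a graph of large minimum degree, some pair among any `r + 1` vertices has codegree exceeding
`(1 - 2 / r) m` by a margin. This is an average over the pairs; the margin comes from the fact that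
the number of neighbours a vertex has among the `r + 1` given ones is an integer. -/
lemma exists_codegree [Nonempty V] (r : ℕ) (hr : 2 ≤ r) (K : Finset V) (hK : K.card = r + 1)
    (hdeg : ∀ u, (1 - 1 / (r : ℝ) - 1 / (r : ℝ) ^ 4) * Fintype.card V < (ext G {u}).card) :
    ∃ u ∈ K, ∃ v ∈ K, u ≠ v ∧
      (1 - 2 / (r : ℝ) + (r - 2) / (r : ℝ) ^ 4 + 1 / (3 * (r : ℝ) ^ 3)) * Fintype.card V ≤
        (ext G {u, v}).card := by
  classical
  by_contra! hcon
  have hm : (0 : ℝ) < Fintype.card V := by exact_mod_cast Fintype.card_pos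
  have hR : (2 : ℝ) ≤ r := by exact_mod_cast hr
  have hcR : (K.card : ℝ) = r + 1 := by exact_mod_cast hK
  have har := codegree_arith r hR
  set B : ℝ := 1 - 2 / (r : ℝ) + (r - 2) / (r : ℝ) ^ 4 + 1 / (3 * (r : ℝ) ^ 3)
  set A : ℝ := 1 - 1 / (r : ℝ) - 1 / (r : ℝ) ^ 4
  set m : ℝ := (Fintype.card V : ℝ)
  have h1 : ∑ u ∈ K, ∑ v ∈ K.erase u, ((ext G {u, v}).card : ℝ) ≤ (r + 1) * (r * (B * m)) := by
    calc _ ≤ ∑ u ∈ K, ∑ v ∈ K.erase u, B * m := by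
          refine sum_le_sum fun u hu => sum_le_sum fun v hv => ?_
          exact (hcon u hu v (mem_of_mem_erase hv) (ne_of_mem_erase hv).symm).le
      _ = ∑ u ∈ K, r * (B * m) := by
          refine sum_congr rfl fun u hu => ?_
          rw [sum_const, card_erase_of_mem hu, hK]; simp
      _ = _ := by rw [sum_const, nsmul_eq_mul, hcR]
  set d : V → ℝ := fun w => ∑ u ∈ K, ind G u w
  have h2 : ∑ u ∈ K, ∑ v ∈ K.erase u, ((ext G {u, v}).card : ℝ) = ∑ w, (d w ^ 2 - d w) := by
    have e : ∀ u ∈ K, ∑ v ∈ K.erase u, ((ext G {u, v}).card : ℝ) =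
        ∑ w, (ind G u w * d w - ind G u w) := by
      intro u hu
      simp only [card_ext_pair]
      rw [sum_comm]
      refine sum_congr rfl fun w _ => ?_
      rw [← mul_sum]
      have : d w = ind G u w + ∑ v ∈ K.erase u, ind G v w := (add_sum_erase K _ hu).symm
      rw [this]
      by_cases h : G.Adj u w
      · rw [ind_of_adj G h]; ring
      · rw [ind_of_not_adj G h]; ring
    rw [sum_congr rfl e, sum_comm]
    refine sum_congr rfl fun w _ => ?_
    rw [sum_sub_distrib, ← sum_mul, pow_two]
  have h3 : ∀ w, 2 * (r - 1) * d w - r * (r - 1) ≤ d w ^ 2 - d w := by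
    intro w
    have : d w = ((K.filter fun u => G.Adj u w).card : ℝ) := by
      simp only [d]
      rw [card_filter, Nat.cast_sum]
      refine sum_congr rfl fun u _ => ?_
      by_cases h : G.Adj u w <;> simp [h, ind_of_adj, ind_of_not_adj]
    set D := (K.filter fun u => G.Adj u w).card
    -- `d w` is an integer, so it does not lie strictly between `r - 1` and `r`
    have hint : 0 ≤ (d w - r) * (d w - r + 1) := by
      rw [this]
      rcases lt_or_ge D r with h | h
      · have : (D : ℝ) + 1 ≤ r := by exact_mod_cast h
        nlinarith
      · have : (r : ℝ) ≤ D := by exact_mod_cast h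
        nlinarith
    nlinarith
  have h4 : (r + 1) * (A * m) ≤ ∑ w, d w := by
    simp only [d]
    rw [sum_comm, ← hcR, ← nsmul_eq_mul, ← sum_const]
    refine sum_le_sum fun u _ => ?_
    rw [← card_ext_singleton]
    exact (hdeg u).le
  have h5 : 2 * (r - 1) * ∑ w, d w - r * (r - 1) * m ≤ ∑ w, (d w ^ 2 - d w) := by
    refine le_trans (le_of_eq ?_) (sum_le_sum fun w _ => h3 w)
    rw [sum_sub_distrib, ← mul_sum, sum_const, card_univ, nsmul_eq_mul]; ring
  have h6 : 2 * ((r : ℝ) - 1) * ((r + 1) * (A * m)) ≤ 2 * (r - 1) * ∑ w, d w :=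
    mul_le_mul_of_nonneg_left h4 (by linarith)
  have h7 := mul_lt_mul_of_pos_right har hm
  nlinarith

/-- A vertex set containing `u` and `v` has at least as many common neighbours as `u` and `v`, minus the
non-neighbours of its other vertices. -/
lemma card_ext_lower (K : Finset V) (u v : V) (j : ℕ) (hu : u ∈ K) (hv : v ∈ K) (huv : u ≠ v)
    (hK : K.card = j + 2) (A B : ℝ) (hdeg : ∀ u, A ≤ (ext G {u}).card)
    (hco : B ≤ (ext G {u, v}).card) :
    B - j * (Fintype.card V - A) ≤ (ext G K).card := by
  classical
  set L := (K.erase u).erase v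
  have hL : L.card = j := by
    rw [card_erase_of_mem (mem_erase.2 ⟨huv.symm, hv⟩), card_erase_of_mem hu, hK]; omega
  have hsub : ext G {u, v} ⊆ ext G K ∪ L.biUnion fun w => (ext G {w})ᶜ := by
    intro x hx
    rw [mem_union]
    by_cases h : x ∈ ext G K
    · exact Or.inl h
    right
    rw [mem_ext] at h hx
    push Not at h
    obtain ⟨w, hw, hwx⟩ := h
    refine mem_biUnion.2 ⟨w, ?_, ?_⟩
    · refine mem_erase.2 ⟨?_, mem_erase.2 ⟨?_, hw⟩⟩
      · rintro rfl; exact hwx (hx _ (by simp))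
      · rintro rfl; exact hwx (hx _ (by simp))
    · rw [mem_compl, mem_ext]
      exact fun h => hwx (h w (mem_singleton_self w))
  have h1 := (card_le_card hsub).trans (card_union_le _ _)
  have h2 : ((L.biUnion fun w => (ext G {w})ᶜ).card : ℝ) ≤ j * (Fintype.card V - A) := by
    calc _ ≤ ∑ w ∈ L, (((ext G {w})ᶜ).card : ℝ) := by exact_mod_cast card_biUnion_le
      _ ≤ ∑ w ∈ L, (Fintype.card V - A) := by
          refine sum_le_sum fun w _ => ?_
          rw [card_compl, Nat.cast_sub (card_le_univ _)]
          linarith [hdeg w]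
      _ = _ := by rw [sum_const, hL, nsmul_eq_mul]
  have h3 : ((ext G {u, v}).card : ℝ) ≤ (ext G K).card +
      ((L.biUnion fun w => (ext G {w})ᶜ).card : ℝ) := by exact_mod_cast h1
  linarith

open Classical in
/-- The number of `(j+2)`-cliques containing `u` and `v`. -/
noncomputable def num (u v : V) (j : ℕ) : ℕ :=
  ((cliques G (j + 2)).filter fun K => u ∈ K ∧ v ∈ K).card

/-- If every `(j+2)`-set containing `u` and `v` has at least `D` common neighbours, each clique
counted by `num G u v j` extends in `D` ways, and each larger clique arises at most `j + 1` times. -/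
lemma num_succ (u v : V) (huv : u ≠ v) (j : ℕ) (D : ℝ)
    (hD : ∀ K : Finset V, u ∈ K → v ∈ K → K.card = j + 2 → D ≤ (ext G K).card) :
    D * num G u v j ≤ (j + 1 : ℝ) * num G u v (j + 1) := by
  classical
  have h := sum_cliques_succ G (j + 2) fun R _ => if u ∈ R ∧ v ∈ R then (1 : ℝ) else 0
  have h1 : D * num G u v j ≤
      ∑ R ∈ cliques G (j + 2), ∑ _i ∈ ext G R, if u ∈ R ∧ v ∈ R then (1 : ℝ) else 0 := by
    rw [num, card_filter, Nat.cast_sum, mul_sum]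
    refine sum_le_sum fun R hR => ?_
    rw [sum_const, nsmul_eq_mul]
    split_ifs with hi
    · simpa using hD R hi.1 hi.2 ((mem_cliques G).1 hR).card_eq
    · simp
  have h2 : ∑ K ∈ cliques G (j + 2 + 1), ∑ i ∈ K,
      (if u ∈ K.erase i ∧ v ∈ K.erase i then (1 : ℝ) else 0) = (j + 1 : ℝ) * num G u v (j + 1) := by
    rw [num, card_filter, Nat.cast_sum, mul_sum]
    refine sum_congr rfl fun K hK => ?_
    split_ifs with hi
    · have e : ∀ i ∈ K, (if u ∈ K.erase i ∧ v ∈ K.erase i then (1 : ℝ) else 0) =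
          if i ∈ (K.erase u).erase v then 1 else 0 := by
        intro i hiK
        congr 1
        simp only [mem_erase, hi.1, hi.2, hiK, and_true, ne_eq, eq_iff_iff]
        constructor
        · exact fun h => ⟨fun h' => h.2 h'.symm, fun h' => h.1 h'.symm⟩
        · exact fun h => ⟨fun h' => h.2 h'.symm, fun h' => h.1 h'.symm⟩
      rw [sum_congr rfl e, ← sum_filter, sum_const, filter_mem_eq_inter,
        inter_eq_right.2 ((erase_subset _ _).trans (erase_subset _ _)),
        card_erase_of_mem (mem_erase.2 ⟨huv.symm, hi.2⟩), card_erase_of_mem hi.1,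
        ((mem_cliques G).1 hK).card_eq]
      simp
    · rw [Nat.cast_zero, mul_zero]
      refine sum_eq_zero fun i _ => if_neg fun h => hi ?_
      exact ⟨mem_of_mem_erase h.1, mem_of_mem_erase h.2⟩
  rw [← h2, h]; exact h1

/-- In a graph of large minimum degree a single `(r+1)`-clique forces a large joint: an edge of
large codegree extends greedily to many cliques. -/
lemma joint_of_minDegree [Nonempty V] (r : ℕ) (hr : 2 ≤ r) (K : Finset V)
    (hK : G.IsNClique (r + 1) K)
    (hdeg : ∀ u, (1 - 1 / (r : ℝ) - 1 / (r : ℝ) ^ 4) * Fintype.card V < (ext G {u}).card) :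
    (Fintype.card V / r : ℝ) ^ (r - 2) * (Fintype.card V / (3 * (r : ℝ) ^ 3)) ≤
      (r - 1) * G.jointSize (r + 1) := by
  classical
  obtain ⟨u, hu, v, hv, huv, hco⟩ := exists_codegree G r hr K hK.card_eq hdeg
  have hadj : G.Adj u v := hK.isClique hu hv huv
  have hm : (0 : ℝ) < Fintype.card V := by exact_mod_cast Fintype.card_pos
  obtain ⟨k, rfl⟩ := Nat.exists_eq_add_of_le' hr
  set m : ℝ := (Fintype.card V : ℝ)
  have hr0 : (0 : ℝ) < ((k + 2 : ℕ) : ℝ) := by positivity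
  set r : ℝ := ((k + 2 : ℕ) : ℝ)
  have hrk : r = k + 2 := by simp [r]
  have hstep : ∀ j : ℕ, j ≤ k →
      (((k : ℝ) - j) / r + 1 / (3 * r ^ 3)) * m * num G u v j ≤
        (j + 1 : ℝ) * num G u v (j + 1) := by
    intro j hj
    have hj' : (j : ℝ) ≤ k := by exact_mod_cast hj
    refine num_succ G u v huv j _ fun L hu hv hL => ?_
    refine le_trans ?_ (card_ext_lower G L u v j hu hv huv hL _ _ (fun u => (hdeg u).le) hco)
    have e : (1 - 2 / r + (r - 2) / r ^ 4 + 1 / (3 * r ^ 3)) * m -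
        j * (m - (1 - 1 / r - 1 / r ^ 4) * m) =
        (((k : ℝ) - j) / r + 1 / (3 * r ^ 3)) * m + (k - j) / r ^ 4 * m := by
      rw [show (k : ℝ) = r - 2 by rw [hrk]; ring]; field_simp; ring
    have : 0 ≤ ((k : ℝ) - j) / r ^ 4 * m := by
      have : 0 ≤ (k : ℝ) - j := by linarith
      positivity
    linarith
  -- dropping the margin is harmless for `j < k`; the last step, where `k - j = 0`, lives off it
  have key : ∀ j : ℕ, j ≤ k → (k.choose j : ℝ) * (m / r) ^ j ≤ num G u v j := by
    intro j
    induction j with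
    | zero =>
      intro _
      have : 1 ≤ num G u v 0 := by
        refine card_pos.2 ⟨{u, v}, mem_filter.2 ⟨(mem_cliques G).2 ?_, by simp, by simp⟩⟩
        rw [SimpleGraph.isNClique_iff, card_pair huv]
        exact ⟨by rw [coe_pair]; exact SimpleGraph.isClique_pair.2 fun _ => hadj, rfl⟩
      simpa using this
    | succ j ih =>
      intro hj
      have ih := ih (by omega)
      have hjk : (j : ℝ) + 1 ≤ k := by exact_mod_cast hj
      have h1 := hstep j (by omega)
      have hch : (k.choose (j + 1) : ℝ) * (j + 1) = k.choose j * (k - j) := by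
        have := Nat.choose_succ_right_eq k j
        rw [← Nat.cast_sub (by omega : j ≤ k)]
        exact_mod_cast this
      refine le_of_mul_le_mul_left ?_ (by positivity : (0 : ℝ) < j + 1)
      have hkj : 0 ≤ (k : ℝ) - j := by linarith
      calc (j + 1 : ℝ) * ((k.choose (j + 1) : ℝ) * (m / r) ^ (j + 1))
          = (((k : ℝ) - j) / r * m) * ((k.choose j : ℝ) * (m / r) ^ j) := by
            rw [pow_succ]; linear_combination ((m / r) ^ j * (m / r)) * hch
        _ ≤ (((k : ℝ) - j) / r * m) * num G u v j :=
            mul_le_mul_of_nonneg_left ih (by positivity)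
        _ ≤ (((k : ℝ) - j) / r + 1 / (3 * r ^ 3)) * m * num G u v j := by
            refine mul_le_mul_of_nonneg_right ?_ (Nat.cast_nonneg _)
            refine mul_le_mul_of_nonneg_right ?_ hm.le
            have : 0 ≤ 1 / (3 * r ^ 3) := by positivity
            linarith
        _ ≤ _ := h1
  have h1 := key k le_rfl
  have h2 := hstep k le_rfl
  have h3 : (num G u v (k + 1) : ℝ) ≤ G.jointSize (k + 2 + 1) := by
    have := le_jointSize G hadj ((cliques G (k + 1 + 2)).filter fun K => u ∈ K ∧ v ∈ K)
      (k := k + 2 + 1) fun K hK => by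
        obtain ⟨h1, h2, h3⟩ := mem_filter.1 hK
        exact ⟨(mem_cliques G).1 h1, h2, h3⟩
    exact_mod_cast this
  rw [Nat.choose_self, Nat.cast_one, one_mul] at h1
  rw [show k + 2 - 2 = k by omega, show r - 1 = k + 1 by rw [hrk]; ring]
  calc (m / r) ^ k * (m / (3 * r ^ 3)) ≤ num G u v k * (m / (3 * r ^ 3)) :=
        mul_le_mul_of_nonneg_right h1 (by positivity)
    _ = (((k : ℝ) - k) / r + 1 / (3 * r ^ 3)) * m * num G u v k := by ring
    _ ≤ _ := h2
    _ ≤ _ := mul_le_mul_of_nonneg_left h3 (by positivity)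

end Extension

end Cliques

/-! ### Removing vertices of small degree -/

section Removal

variable {V : Type*} [Fintype V] [DecidableEq V] (G : SimpleGraph V)

/-- The largest adjacency eigenvalue of the subgraph induced by `S`. -/
noncomputable def lam (S : Finset V) : ℝ := (sub G S).specMax

lemma ind_sub (S : Finset V) (u v : S) : ind (sub G S) u v = ind G u v := by
  by_cases h : G.Adj u v
  · rw [ind_of_adj G h, ind_of_adj (sub G S) h]
  · rw [ind_of_not_adj G h, ind_of_not_adj (sub G S) h]

lemma lam_rayleigh (S : Finset V) (x : V → ℝ) :
    ∑ u ∈ S, ∑ v ∈ S, ind G u v * x u * x v ≤ lam G S * ∑ u ∈ S, x u ^ 2 := by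
  have h := rayleigh (sub G S) fun u => x u
  simp only [ind_sub] at h
  rw [← sum_coe_sort S, ← sum_coe_sort S]
  simp only [← sum_coe_sort S]
  exact h

/-- The Perron vector of the subgraph induced by `S`, extended by zero to all vertices. -/
lemma lam_perron (S : Finset V) (hS : S.Nonempty) : ∃ x : V → ℝ, (∀ u, 0 ≤ x u) ∧
    (∀ u ∉ S, x u = 0) ∧ ∑ u ∈ S, x u ^ 2 = 1 ∧
    ∀ u ∈ S, ∑ v ∈ S, ind G u v * x v = lam G S * x u := by
  have := hS.to_subtype
  obtain ⟨z, h1, h2, h3⟩ := exists_perron (sub G S)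
  have e : ∀ u : S, (if h : (u : V) ∈ S then z ⟨u, h⟩ else 0) = z u := fun u => by simp
  refine ⟨fun u => if h : u ∈ S then z ⟨u, h⟩ else 0, ?_, ?_, ?_, ?_⟩
  · intro u; dsimp only; split_ifs
    · exact h1 _
    · exact le_rfl
  · intro u hu; simp [hu]
  · rw [← sum_coe_sort S]; simpa only [e] using h2
  · intro u hu
    have := h3 ⟨u, hu⟩
    simp only [ind_sub] at this
    rw [← sum_coe_sort S]; simp only [e]
    rw [this]; simp [hu, lam]

/-- The numerical core of vertex removal: `f` is the normalised eigenvalue, `δ` the normalised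
degree, and `P / m` the smallest squared entry of the Perron vector. -/
lemma removal_arith {m P f δ a ε : ℝ} (ha : 1 / 2 ≤ a) (hε : 0 < ε) (hε1 : ε ≤ 1 / 16)
    (hm : 100 ≤ ε * m) (hf : a - ε / 8 ≤ f) (hδ0 : 0 ≤ δ) (hδ : δ ≤ a - ε) (hP0 : 0 ≤ P)
    (hP : P * (f ^ 2 + δ * (1 - δ)) ≤ δ) :
    P < m ∧ (f + ε / 2 / m) * (m - 1) * (1 - P / m) < f * m * (1 - 2 * P / m) := by
  have hf0 : 0 < f := by linarith
  have hm0 : 0 < m := by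
    by_contra h
    nlinarith
  have hm1 : 100 ≤ m := by nlinarith
  have hP1 : P * (1 + 3 / 2 * ε) ≤ 1 := by
    rcases hδ0.eq_or_lt with h | h
    · subst h
      have : P = 0 := by
        by_contra hne
        have : 0 < P := lt_of_le_of_ne hP0 (Ne.symm hne)
        have : 0 < P * (f ^ 2 + 0 * (1 - 0)) := by positivity
        linarith
      rw [this]; norm_num
    · have h1 : 3 / 2 * ε * δ ≤ f ^ 2 - δ ^ 2 := by nlinarith
      have h2 : P * (3 / 2 * ε * δ) ≤ P * (f ^ 2 - δ ^ 2) := mul_le_mul_of_nonneg_left h1 hP0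
      have h3 : δ * (P * (1 + 3 / 2 * ε)) ≤ δ * 1 := by nlinarith
      exact le_of_mul_le_mul_left h3 h
  have hP2 : P ≤ 1 - 4 / 3 * ε := by
    by_contra! h
    nlinarith
  refine ⟨by nlinarith, ?_⟩
  have hPm : P / m ≤ ε / 100 := by
    rw [div_le_div_iff₀ hm0 (by norm_num)]; nlinarith
  have hq : 0 ≤ P / m := by positivity
  have e1 : f * m * (1 - 2 * P / m) = f * m - 2 * f * P := by field_simp
  have e2 : (f + ε / 2 / m) * (m - 1) * (1 - P / m) =
      f * m - f - f * P + f * (P / m) + ε / 2 * (1 - 1 / m) * (1 - P / m) := by field_simp; ring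
  have h4 : ε / 2 * (1 - 1 / m) * (1 - P / m) ≤ ε / 2 := by
    have h5 : 0 ≤ 1 / m := by positivity
    have h6 : 1 / m ≤ 1 := by rw [div_le_one hm0]; linarith
    have : (1 - 1 / m) * (1 - P / m) ≤ 1 := by nlinarith
    nlinarith
  have h7 : ε / 2 < f * (1 - P - P / m) := by
    have h8 : 5 / 4 * ε ≤ 1 - P - P / m := by linarith
    have h9 : 12 / 25 ≤ f := by linarith
    have := mul_le_mul h9 h8 (by positivity) hf0.le
    nlinarith
  rw [e1, e2]; nlinarith

/-- Deleting the vertex where the Perron vector is smallest increases the normalised eigenvalue,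
provided some vertex has small degree: a small degree forces a small entry of the vector. -/
lemma exists_removal (S : Finset V) (a ε : ℝ) (ha : 1 / 2 ≤ a) (hε : 0 < ε) (hε1 : ε ≤ 1 / 16)
    (hm : 100 ≤ ε * S.card) (hf : a - ε / 8 ≤ lam G S / S.card) (u : V) (hu : u ∈ S)
    (hd : ∑ v ∈ S, ind G u v ≤ (a - ε) * S.card) :
    ∃ w ∈ S, lam G S / S.card + ε / 2 / S.card < lam G (S.erase w) / (S.card - 1) := by
  obtain ⟨x, hx0, -, hx1, hx⟩ := lam_perron G S ⟨u, hu⟩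
  obtain ⟨w, hw, hmin⟩ := exists_min_image S x ⟨u, hu⟩
  refine ⟨w, hw, ?_⟩
  have hm0 : (0 : ℝ) < S.card := by exact_mod_cast card_pos.2 ⟨u, hu⟩
  set m : ℝ := (S.card : ℝ)
  set l := lam G S
  set d := ∑ v ∈ S, ind G u v
  have hd0 : 0 ≤ d := sum_nonneg fun v _ => ind_nonneg G u v
  set p := x w ^ 2
  have hp : ∀ v ∈ S, p ≤ x v ^ 2 := fun v hv => pow_le_pow_left₀ (hx0 w) (hmin v hv) 2
  have hp0 : 0 ≤ p := sq_nonneg _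
  have h1 : l ^ 2 * p ≤ d * (1 - (m - d) * p) := by
    calc l ^ 2 * p ≤ l ^ 2 * x u ^ 2 := mul_le_mul_of_nonneg_left (hp u hu) (sq_nonneg _)
      _ = (∑ v ∈ S, ind G u v * x v) ^ 2 := by rw [hx u hu]; ring
      _ ≤ d * ∑ v ∈ S, ind G u v * x v ^ 2 :=
          sum_sq_le_sum_mul_sum_of_sq_le_mul _ (fun v _ => ind_nonneg G u v)
            (fun v _ => mul_nonneg (ind_nonneg G u v) (sq_nonneg _)) fun v _ => by
              rw [← mul_assoc]; exact le_of_eq (by ring)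
      _ ≤ d * (1 - (m - d) * p) := by
          refine mul_le_mul_of_nonneg_left ?_ hd0
          have : (m - d) * p ≤ ∑ v ∈ S, (1 - ind G u v) * x v ^ 2 := by
            have e : (m - d) * p = ∑ v ∈ S, (1 - ind G u v) * p := by
              rw [← sum_mul, sum_sub_distrib]; simp [m, d]
            rw [e]
            exact sum_le_sum fun v hv =>
              mul_le_mul_of_nonneg_left (hp v hv) (by linarith [ind_le_one G u v])
          have e : ∑ v ∈ S, (1 - ind G u v) * x v ^ 2 = 1 - ∑ v ∈ S, ind G u v * x v ^ 2 := by
            rw [eq_sub_iff_add_eq, ← sum_add_distrib]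
            exact (sum_congr rfl fun v _ => by ring).trans hx1
          linarith
  have h2 : l * (1 - 2 * p) ≤ lam G (S.erase w) * (1 - p) := by
    have h := lam_rayleigh G (S.erase w) x
    have e1 : ∑ v ∈ S.erase w, x v ^ 2 = 1 - p := by
      rw [← hx1, ← add_sum_erase S _ hw]; simp [p]
    have e2 : ∑ u ∈ S.erase w, ∑ v ∈ S.erase w, ind G u v * x u * x v = l * (1 - 2 * p) := by
      have e3 : ∀ u ∈ S, ∑ v ∈ S.erase w, ind G u v * x u * x v =
          l * x u ^ 2 - x w * (ind G w u * x u) := by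
        intro u hu
        have : l * x u ^ 2 = ∑ v ∈ S, ind G u v * x u * x v := by
          rw [pow_two, ← mul_assoc, ← hx u hu, sum_mul]
          exact sum_congr rfl fun v _ => by ring
        rw [this, ← add_sum_erase S _ hw, ind_comm G u w]; ring
      rw [sum_congr rfl fun u hu => e3 u (mem_of_mem_erase hu), sum_sub_distrib, ← mul_sum,
        ← mul_sum, e1]
      have e4 := hx w hw
      rw [← add_sum_erase S _ hw, ind_of_not_adj G (G.loopless.irrefl w)] at e4
      have e5 : ∑ v ∈ S.erase w, ind G w v * x v = l * x w := by linarith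
      rw [e5]; simp only [p]; ring
    rw [e1, e2] at h; exact h
  have h3 : p * m * ((l / m) ^ 2 + d / m * (1 - d / m)) ≤ d / m := by
    have : p * m * ((l / m) ^ 2 + d / m * (1 - d / m)) = (l ^ 2 * p + d * (m - d) * p) / m := by
      field_simp
    rw [this]
    gcongr
    linarith
  obtain ⟨h4, h5⟩ := removal_arith ha hε hε1 hm hf (div_nonneg hd0 hm0.le)
    ((div_le_iff₀ hm0).2 hd) (mul_nonneg hp0 hm0.le) h3
  have hm1 : 1 < m := by nlinarith
  have e1 : p * m / m = p := by field_simp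
  have e2 : l / m * m = l := by field_simp
  rw [mul_div_assoc 2, e1, e2] at h5
  have hp1 : 0 < 1 - p := by nlinarith
  rw [lt_div_iff₀ (by linarith)]
  exact lt_of_mul_lt_mul_right (h5.trans_le h2) hp1.le

lemma specMax_le_lam_univ [Nonempty V] : G.specMax ≤ lam G univ := by
  obtain ⟨x, -, h1, h2⟩ := exists_perron G
  have h := lam_rayleigh G univ x
  rw [h1, mul_one] at h
  refine le_trans (le_of_eq ?_) h
  rw [← mul_one G.specMax, ← h1, mul_sum]
  refine sum_congr rfl fun u _ => ?_
  rw [pow_two, ← mul_assoc, ← h2 u, sum_mul]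
  exact sum_congr rfl fun v _ => by ring

/-- A set `S` of at least half the vertices whose normalised eigenvalue is at least that of `G`, with
a gain proportional to the number of vertices outside `S`, and which either has large minimum degree
or is about half of `V`. -/
lemma exists_core [Nonempty V] (a ε : ℝ) (ha : 1 / 2 ≤ a) (hε : 0 < ε) (hε1 : ε ≤ 1 / 16)
    (hn : 200 ≤ ε * Fintype.card V) (hG : a - ε / 8 ≤ G.specMax / Fintype.card V) :
    ∃ S : Finset V, Fintype.card V ≤ 2 * S.card ∧
      G.specMax / Fintype.card V + ε / 2 * (1 - S.card / Fintype.card V) ≤ lam G S / S.card ∧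
      ((∀ u ∈ S, (a - ε) * S.card < ∑ v ∈ S, ind G u v) ∨ 2 * S.card < Fintype.card V + 2) := by
  have hn0 : (0 : ℝ) < Fintype.card V := by exact_mod_cast Fintype.card_pos
  set n : ℝ := (Fintype.card V : ℝ)
  obtain ⟨S, hS, hmax⟩ := exists_max_image
    ((univ : Finset (Finset V)).filter fun S => Fintype.card V ≤ 2 * S.card)
    (fun S => lam G S / S.card + ε / 2 * (S.card / n))
    ⟨univ, by simp [card_univ]; omega⟩
  have hS := (mem_filter.1 hS).2
  have hSn : (S.card : ℝ) ≤ n := by simp only [n]; exact_mod_cast card_le_univ S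
  have hSn2 : n ≤ 2 * S.card := by simp only [n]; exact_mod_cast hS
  have hS0 : (0 : ℝ) < S.card := by linarith
  have hgain : G.specMax / n + ε / 2 * (1 - S.card / n) ≤ lam G S / S.card := by
    have h := hmax univ (by simp [card_univ]; omega)
    rw [card_univ] at h
    have h1 : G.specMax / n ≤ lam G univ / n := by gcongr; exact specMax_le_lam_univ G
    have h2 : n / n = 1 := div_self hn0.ne'
    change lam G univ / n + ε / 2 * (n / n) ≤ _ at h
    rw [h2] at h
    linarith
  refine ⟨S, hS, hgain, ?_⟩
  by_contra! hcon
  obtain ⟨⟨u, hu, hd⟩, hbig⟩ := hcon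
  have hfrac : (S.card : ℝ) / n ≤ 1 := (div_le_one hn0).2 hSn
  obtain ⟨w, hw, hlt⟩ := exists_removal G S a ε ha hε hε1 (by nlinarith)
    (by nlinarith) u hu hd
  have h := hmax (S.erase w) (by
    refine mem_filter.2 ⟨mem_univ _, ?_⟩
    rw [card_erase_of_mem hw]; omega)
  have hc : ((S.erase w).card : ℝ) = S.card - 1 := by
    rw [card_erase_of_mem hw, Nat.cast_sub (card_pos.2 ⟨u, hu⟩)]; simp
  rw [hc] at h
  have h1 : ε / 2 / n ≤ ε / 2 / S.card := by gcongr
  have h2 : ε / 2 * (((S.card : ℝ) - 1) / n) = ε / 2 * (S.card / n) - ε / 2 / n := by ring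
  linarith

end Removal

/-! ### The joint -/

section Joints

variable {V : Type*} [Fintype V] [DecidableEq V] (G : SimpleGraph V)

/-- If the normalised eigenvalue of an induced subgraph on at least half the vertices exceeds
`1 - 1 / r` by a margin, a weighted count of cliques, with the entries of the Perron vector as
weights, produces the joint. -/
lemma joint_of_lam [Nonempty V] (r : ℕ) (hr : 2 ≤ r) (S : Finset V)
    (hS : Fintype.card V ≤ 2 * S.card)
    (hl : 1 - 1 / (r : ℝ) + 3 / (16 * (r : ℝ) ^ 4) ≤ lam G S / S.card) :
    (Fintype.card V : ℝ) ^ (r - 1) / (r : ℝ) ^ (2 * r + 4) < G.jointSize (r + 1) := by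
  have hn : 0 < Fintype.card V := Fintype.card_pos
  have hSpos : 0 < S.card := by omega
  obtain ⟨x, hx0, hxS, hx1, hx⟩ := lam_perron G S (card_pos.1 hSpos)
  have hm0 : (0 : ℝ) < S.card := by exact_mod_cast hSpos
  have hmn : (Fintype.card V : ℝ) / 2 ≤ S.card := by
    have : (Fintype.card V : ℝ) ≤ 2 * S.card := by exact_mod_cast hS
    linarith
  have hn0 : (0 : ℝ) < Fintype.card V := by exact_mod_cast hn
  set n : ℝ := (Fintype.card V : ℝ)
  set m : ℝ := (S.card : ℝ)
  set l := lam G S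
  have hR : (2 : ℝ) ≤ r := by exact_mod_cast hr
  set c : ℝ := 3 / (16 * (r : ℝ) ^ 4)
  have hc : 0 < c := by positivity
  set s := ∑ v ∈ S, x v
  have hs0 : 0 < s := by
    refine lt_of_le_of_ne (sum_nonneg fun v _ => hx0 v) fun h => ?_
    have h0 := (sum_eq_zero_iff_of_nonneg fun v _ => hx0 v).1 h.symm
    have : ∑ v ∈ S, x v ^ 2 = 0 := sum_eq_zero fun v hv => by rw [h0 v hv]; ring
    linarith
  have hsm : s ^ 2 ≤ m := by
    have := sq_sum_le_card_mul_sum_sq (s := S) (f := x)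
    rw [hx1, mul_one] at this; exact this
  have ha : 0 < 1 - 1 / (r : ℝ) := by
    have : 1 / (r : ℝ) ≤ 1 / 2 := by gcongr
    linarith
  have hlm : (1 - 1 / (r : ℝ) + c) * m ≤ l := (le_div_iff₀ hm0).1 hl
  have hl0 : 0 < l := lt_of_lt_of_le (by positivity) hlm
  have hW : ∀ v, x v / s ≤ 1 / ((1 - 1 / (r : ℝ)) * m) := by
    intro v
    by_cases hv : v ∈ S
    · rw [div_le_div_iff₀ hs0 (by positivity), one_mul]
      have h1 : l * x v ≤ s := by
        rw [← hx v hv]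
        refine sum_le_sum fun w _ => ?_
        have := mul_le_mul_of_nonneg_right (ind_le_one G v w) (hx0 w)
        linarith
      have h2 : (1 - 1 / (r : ℝ)) * m ≤ l := by nlinarith
      nlinarith [mul_le_mul_of_nonneg_right h2 (hx0 v)]
    · rw [hxS v hv, zero_div]; positivity
  have hext : ∀ f : V → ℝ, ∑ v, f v * x v = ∑ v ∈ S, f v * x v := fun f =>
    (sum_subset (subset_univ S) fun v _ hv => by rw [hxS v hv, mul_zero]).symm
  have hy1 : ∑ v, x v / s = 1 := by
    have := hext fun _ => 1
    simp only [one_mul] at this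
    rw [← sum_div, this, div_self hs0.ne']
  have hq : ∑ u, ∑ v, ind G u v * (x u / s) * (x v / s) = l / s ^ 2 := by
    have e : ∀ u, ∑ v, ind G u v * (x u / s) * (x v / s) =
        ((∑ v ∈ S, ind G u v * x v) / s ^ 2) * x u := by
      intro u
      rw [← hext, sum_div, sum_mul]
      exact sum_congr rfl fun v _ => by field_simp
    simp only [e]
    rw [hext, ← mul_one (l / s ^ 2), ← hx1, mul_sum]
    exact sum_congr rfl fun u hu => by rw [hx u hu]; ring
  have key := joint_of_weight G (fun v => x v / s) (fun v => div_nonneg (hx0 v) hs0.le) hy1 _ hW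
    r hr c hc (by
      rw [hq]
      refine hl.trans ?_
      gcongr)
  obtain ⟨k, rfl⟩ := Nat.exists_eq_add_of_le' hr
  set J : ℝ := (G.jointSize (k + 2 + 1) : ℝ)
  have hJ : 0 ≤ J := Nat.cast_nonneg _
  rw [show k + 2 - 1 = k + 1 by omega] at key ⊢
  rw [show k + 2 - 2 = k by omega] at key
  rw [show 2 * (k + 2) + 4 = 2 * k + 8 by ring]
  have hRk : ((k + 2 : ℕ) : ℝ) = k + 2 := by simp
  set R : ℝ := ((k + 2 : ℕ) : ℝ)
  have hR0 : 0 < R := by linarith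
  have hR1 : 0 < R - 1 := by linarith
  have h1 : c * (R - 1) ^ k * m ^ (k + 1) ≤ J * R ^ (2 * k) := by
    have e : 1 / ((1 - 1 / R) * m) = R / ((R - 1) * m) := by field_simp
    rw [e, div_pow, mul_pow] at key
    have h2 := mul_le_mul_of_nonneg_left key
      (by positivity : 0 ≤ (R - 1) ^ k * m ^ (k + 1))
    have e2 : (R - 1) ^ k * m ^ (k + 1) *
        (J * (R ^ (k + 1) / ((R - 1) ^ (k + 1) * m ^ (k + 1))) * ((R - 1) * R ^ k)) =
        R * (J * R ^ (2 * k)) := by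
      field_simp; ring
    rw [e2] at h2
    refine le_of_mul_le_mul_left ?_ hR0
    linarith
  have h2 : c * (R - 1) ^ k * (n / 2) ^ (k + 1) ≤ J * R ^ (2 * k) := by
    refine le_trans ?_ h1
    gcongr
  have h3 : 2 ^ (k + 1) < R ^ 8 * c * (R - 1) ^ k := by
    have e : R ^ 8 * c = 3 / 16 * R ^ 4 := by simp only [c, R]; field_simp
    have h16 : (2 : ℝ) ^ 4 ≤ R ^ 4 := by gcongr
    have h4 : (2 : ℝ) ^ k ≤ (R - 1) ^ k := by
      rcases Nat.eq_zero_or_pos k with h | h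
      · subst h; simp
      · have : (1 : ℝ) ≤ k := by exact_mod_cast h
        gcongr
        linarith
    have h5 : (0 : ℝ) < 2 ^ k := by positivity
    rw [e, pow_succ]
    nlinarith
  rw [div_lt_iff₀ (by positivity)]
  rw [div_pow] at h2
  calc n ^ (k + 1) = 2 ^ (k + 1) * (n ^ (k + 1) / 2 ^ (k + 1)) := by field_simp
    _ < R ^ 8 * c * (R - 1) ^ k * (n ^ (k + 1) / 2 ^ (k + 1)) := by gcongr
    _ = R ^ 8 * (c * (R - 1) ^ k * (n ^ (k + 1) / 2 ^ (k + 1))) := by ring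
    _ ≤ R ^ 8 * (J * R ^ (2 * k)) := by gcongr
    _ = J * R ^ (2 * k + 8) := by ring

lemma card_ext_sub (S : Finset V) (u : S) :
    ((ext (sub G S) {u}).card : ℝ) = ∑ v ∈ S, ind G u v := by
  rw [card_ext_singleton, ← sum_coe_sort S]
  simp only [ind_sub]

/-- If an induced subgraph on at least half the vertices has large minimum degree and contains an
`(r+1)`-clique, then `G` has the required joint. -/
lemma joint_of_core [Nonempty V] (r : ℕ) (hr : 2 ≤ r) (S : Finset V)
    (hS : Fintype.card V ≤ 2 * S.card)
    (hdeg : ∀ u ∈ S, (1 - 1 / (r : ℝ) - 1 / (r : ℝ) ^ 4) * S.card < ∑ v ∈ S, ind G u v)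
    (hK : ¬ (sub G S).CliqueFree (r + 1)) :
    (Fintype.card V : ℝ) ^ (r - 1) / (r : ℝ) ^ (2 * r + 4) < G.jointSize (r + 1) := by
  have hn : 0 < Fintype.card V := Fintype.card_pos
  have hSpos : 0 < S.card := by omega
  have : Nonempty S := (card_pos.1 hSpos).to_subtype
  obtain ⟨K, hK⟩ : ∃ K, (sub G S).IsNClique (r + 1) K := by
    simpa [SimpleGraph.CliqueFree] using hK
  have key := joint_of_minDegree (sub G S) r hr K hK fun u => by
    rw [card_ext_sub, Fintype.card_coe]; exact hdeg u u.2
  rw [Fintype.card_coe] at key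
  have hsub : ((sub G S).jointSize (r + 1) : ℝ) ≤ G.jointSize (r + 1) := by
    exact_mod_cast jointSize_sub_le G S (r + 1)
  have hmn : (Fintype.card V : ℝ) / 2 ≤ S.card := by
    have : (Fintype.card V : ℝ) ≤ 2 * S.card := by exact_mod_cast hS
    linarith
  have hn0 : (0 : ℝ) < Fintype.card V := by exact_mod_cast hn
  have hR : (2 : ℝ) ≤ r := by exact_mod_cast hr
  obtain ⟨k, rfl⟩ := Nat.exists_eq_add_of_le' hr
  set J : ℝ := (G.jointSize (k + 2 + 1) : ℝ)
  set n : ℝ := (Fintype.card V : ℝ)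
  rw [show k + 2 - 1 = k + 1 by omega]
  rw [show k + 2 - 2 = k by omega] at key
  rw [show 2 * (k + 2) + 4 = 2 * k + 8 by ring]
  set R : ℝ := ((k + 2 : ℕ) : ℝ)
  have hR0 : 0 < R := by linarith
  have hR1 : 0 < R - 1 := by linarith
  have h1 : (n / 2 / R) ^ k * (n / 2 / (3 * R ^ 3)) ≤ (R - 1) * J := by
    refine le_trans (le_trans ?_ key) (mul_le_mul_of_nonneg_left hsub hR1.le)
    gcongr
  have hJ : 0 < J := by
    refine pos_of_mul_pos_right (lt_of_lt_of_le ?_ h1) hR1.le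
    positivity
  have h2 : 2 ^ (k + 1) * 3 * (R - 1) < R ^ (k + 5) := by
    have h3 : (2 : ℝ) ^ (k + 1) ≤ R ^ (k + 1) := by gcongr
    have h4 : 3 * (R - 1) < R ^ 4 := by
      have h8 : (2 : ℝ) ^ 3 ≤ R ^ 3 := by gcongr
      have : R ^ 4 = R ^ 3 * R := by ring
      nlinarith
    calc 2 ^ (k + 1) * 3 * (R - 1) = 2 ^ (k + 1) * (3 * (R - 1)) := by ring
      _ ≤ R ^ (k + 1) * (3 * (R - 1)) := by gcongr
      _ < R ^ (k + 1) * R ^ 4 := by gcongr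
      _ = _ := by ring
  rw [div_lt_iff₀ (by positivity)]
  calc n ^ (k + 1) = 2 ^ (k + 1) * 3 * R ^ (k + 3) *
        ((n / 2 / R) ^ k * (n / 2 / (3 * R ^ 3))) := by
        rw [div_pow, div_pow]; field_simp; ring
    _ ≤ 2 ^ (k + 1) * 3 * R ^ (k + 3) * ((R - 1) * J) := by gcongr
    _ = 2 ^ (k + 1) * 3 * (R - 1) * (R ^ (k + 3) * J) := by ring
    _ < R ^ (k + 5) * (R ^ (k + 3) * J) := by gcongr
    _ = J * R ^ (2 * k + 8) := by ring

/-- The Andrásfai–Erdős–Sós theorem applied to an induced subgraph of large minimum degree. -/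
lemma colorable_core (r : ℕ) (hr : 2 ≤ r) (S : Finset V) (hS : S.Nonempty)
    (hdeg : ∀ u ∈ S, (1 - 1 / (r : ℝ) - 1 / (r : ℝ) ^ 4) * S.card < ∑ v ∈ S, ind G u v)
    (hK : (sub G S).CliqueFree (r + 1)) : (sub G S).Colorable r := by
  classical
  have := hS.to_subtype
  refine SimpleGraph.colorable_of_cliqueFree_lt_minDegree hK ?_
  obtain ⟨v, hv⟩ := (sub G S).exists_minimal_degree_vertex
  rw [hv, Fintype.card_coe]
  have hd : ((sub G S).degree v : ℝ) = ∑ w ∈ S, ind G v w := by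
    rw [← card_ext_sub]
    rw [← SimpleGraph.card_neighborFinset_eq_degree]
    congr 2
    ext w; simp [mem_ext]
  have h := hdeg v v.2
  rw [← hd] at h
  refine Nat.div_lt_of_lt_mul ?_
  have hR : (2 : ℝ) ≤ r := by exact_mod_cast hr
  have e : (((3 * r - 4) * S.card : ℕ) : ℝ) = (3 * r - 4) * S.card := by
    rw [Nat.cast_mul, Nat.cast_sub (by omega)]; push_cast; ring
  have e' : (((3 * r - 1) * (sub G S).degree v : ℕ) : ℝ) =
      (3 * r - 1) * (sub G S).degree v := by
    rw [Nat.cast_mul, Nat.cast_sub (by omega)]; push_cast; ring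
  rw [← Nat.cast_lt (α := ℝ), e, e']
  have hm0 : (0 : ℝ) < S.card := by exact_mod_cast card_pos.2 hS
  set R : ℝ := (r : ℝ)
  have hA : (3 * R - 4) ≤ (3 * R - 1) * (1 - 1 / R - 1 / R ^ 4) := by
    have hR0 : 0 < R := by linarith
    have : (3 * R - 1) * (1 - 1 / R - 1 / R ^ 4) - (3 * R - 4) =
        (R ^ 3 - 3 * R + 1) / R ^ 4 := by field_simp; ring
    have h2 : 0 ≤ (R ^ 3 - 3 * R + 1) / R ^ 4 := by
      refine div_nonneg ?_ (by positivity)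
      nlinarith [mul_nonneg (mul_nonneg hR0.le (by linarith : 0 ≤ R - 2)) (by linarith : 0 ≤ R + 2)]
    linarith
  calc (3 * R - 4) * S.card ≤ (3 * R - 1) * (1 - 1 / R - 1 / R ^ 4) * S.card := by gcongr
    _ = (3 * R - 1) * ((1 - 1 / R - 1 / R ^ 4) * S.card) := by ring
    _ < _ := mul_lt_mul_of_pos_left h (by linarith)

end Joints

end SpectralJoints

/-- **Theorem 1** (Nikiforov, "Spectral saturation"). Let `r ≥ 2`, `n > r^15`, and `G` be a
graph of order `n`. If `μ(G) > μ(T_r(n))`, then `js_{r+1}(G) > n^(r-1) / r^(2r+4)`. -/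
theorem spectral_joints {V : Type*} [Fintype V] [DecidableEq V] (r n : ℕ)
    (hr : 2 ≤ r) (hn : r ^ 15 < n) (G : SimpleGraph V) (hcard : Fintype.card V = n)
    (hmu : (SimpleGraph.turanGraph n r).specMax < G.specMax) :
    (n : ℝ) ^ (r - 1) / (r : ℝ) ^ (2 * r + 4) < (G.jointSize (r + 1) : ℝ) := by
  open SpectralJoints Finset in
  subst hcard
  have hncard : 0 < Fintype.card V := by omega
  have : Nonempty V := Fintype.card_pos_iff.1 hncard
  have hlow := turan_lower (Fintype.card V) r (by omega) hncard
  have hR : (2 : ℝ) ≤ r := by exact_mod_cast hr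
  have hR0 : (0 : ℝ) < r := by linarith
  have hn0 : (0 : ℝ) < Fintype.card V := by exact_mod_cast hncard
  have hbig : (1000 : ℝ) * (r : ℝ) ^ 5 ≤ Fintype.card V := by
    have h1 : (2 : ℝ) ^ 10 ≤ (r : ℝ) ^ 10 := by gcongr
    have h2 : (r : ℝ) ^ 15 < Fintype.card V := by exact_mod_cast hn
    have h3 : (r : ℝ) ^ 15 = (r : ℝ) ^ 10 * (r : ℝ) ^ 5 := by ring
    have h4 : (0 : ℝ) < (r : ℝ) ^ 5 := by positivity
    nlinarith
  have hr4 : (2 : ℝ) ^ 4 ≤ (r : ℝ) ^ 4 := by gcongr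
  have hr5 : (r : ℝ) ^ 5 = (r : ℝ) ^ 4 * r := by ring
  set n : ℝ := (Fintype.card V : ℝ)
  have hε : 0 < 1 / (r : ℝ) ^ 4 := by positivity
  have hε1 : 1 / (r : ℝ) ^ 4 ≤ 1 / 16 := by
    refine one_div_le_one_div_of_le (by norm_num) ?_
    norm_num at hr4 ⊢; exact hr4
  have hra : 1 / (r : ℝ) ≤ 1 / 2 := by gcongr
  have hεn : 1000 * r ≤ 1 / (r : ℝ) ^ 4 * n := by
    rw [one_div, inv_mul_eq_div, le_div_iff₀ (by positivity)]; linarith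
  set ε : ℝ := 1 / (r : ℝ) ^ 4
  have hn1000 : 1000 ≤ n := by nlinarith
  -- the loss `r / n ^ 2` from comparing with the Turán graph is negligible
  have hloss : (r : ℝ) / n ^ 2 ≤ ε / 1000 / n := by
    rw [div_le_div_iff₀ (by positivity) hn0]
    nlinarith
  have hn1 : 1 / n ≤ 1 / 1000 := by gcongr
  have hloss2 : ε / 1000 / n ≤ ε / 1000000 := by
    have : ε / 1000 / n = ε / 1000 * (1 / n) := by ring
    rw [this]; nlinarith
  have hmuG : 1 - 1 / (r : ℝ) - r / n ^ 2 < G.specMax / n := by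
    rw [lt_div_iff₀ hn0]
    refine lt_of_eq_of_lt ?_ (hlow.trans_lt hmu)
    field_simp
  obtain ⟨S, hS, hf, hcase⟩ := exists_core G (1 - 1 / (r : ℝ)) ε (by linarith) hε hε1
    (by nlinarith) (by change _ ≤ G.specMax / n; linarith)
  change G.specMax / n + ε / 2 * (1 - S.card / n) ≤ _ at hf
  rcases hcase with hdeg | hsmall
  · by_cases hK : (sub G S).CliqueFree (r + 1)
    · exfalso
      have hSne : S.Nonempty := card_pos.1 (by omega)
      have hcol := colorable_core G r hr S hSne hdeg hK
      rcases (card_le_univ S).eq_or_lt with heq | hlt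
      -- nothing was removed: `G` is `r`-colourable, so the Turán graph beats it
      · obtain rfl := (card_eq_iff_eq_univ S).1 heq
        have hG : G.Colorable r :=
          hcol.of_hom ⟨fun v => (⟨v, mem_univ v⟩ : (univ : Finset V)), fun h => h⟩
        refine absurd hmu (not_lt.2 (specMax_le_turan (by omega) G hG ?_))
        have : 0 < G.specMax / n := by linarith
        exact (div_pos_iff_of_pos_right hn0).1 this
      -- something was removed: the gain pushes the core past the bound for `r`-colourable graphs
      · have := hSne.to_subtype
        obtain ⟨C⟩ := hcol
        have hle := specMax_le_of_colouring C (sub G S) (by omega) fun u v h => C.valid h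
        rw [Fintype.card_coe] at hle
        have hm0 : (0 : ℝ) < S.card := by exact_mod_cast card_pos.2 hSne
        have h1 : lam G S / S.card ≤ 1 - 1 / (r : ℝ) := (div_le_iff₀ hm0).2 hle
        have h2 : (S.card : ℝ) + 1 ≤ n := by simp only [n]; exact_mod_cast hlt
        have h3 : 1 / n ≤ 1 - S.card / n := by
          rw [one_sub_div hn0.ne']; gcongr; linarith
        have h4 : ε / 2 * (1 / n) ≤ ε / 2 * (1 - S.card / n) := by gcongr
        have h5 : ε / 1000 / n ≤ ε / 2 * (1 / n) := by
          have : ε / 1000 / n = ε / 1000 * (1 / n) := by ring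
          rw [this]
          gcongr
          norm_num
        linarith
    · exact joint_of_core G r hr S hS hdeg hK
  -- about half of the vertices were removed: the gain is nearly `ε / 4`, more than `3 ε / 16`
  · refine joint_of_lam G r hr S hS (le_trans ?_ hf)
    have h1 : 2 * (S.card : ℝ) ≤ n + 1 := by
      simp only [n]; exact_mod_cast (by omega : 2 * S.card ≤ Fintype.card V + 1)
    have h2 : (S.card : ℝ) / n ≤ 501 / 1000 := by
      rw [div_le_iff₀ hn0]; linarith
    have h3 : 3 / (16 * (r : ℝ) ^ 4) = 3 / 16 * ε := by simp only [ε]; field_simp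
    rw [h3]
    nlinarith
end

section
/- Let r ≥ 2, let c satisfy 2/ln n ≤ c ≤ r^{-(2r+9)(r+1)}, and let G be a graph of order n. If μ(G) > μ(T_r(n)), then G contains a copy of K_r^+(⌊c ln n⌋, …, ⌊c ln n⌋, ⌈n^{1-√c}⌉), the complete r-partite graph with the first r−1 parts of size ⌊c ln n⌋ and last part of size ⌈n^{1-√c}⌉, with an edge added inside the first part. -/
/-- `G` contains a copy of the complete multipartite graph whose parts have
sizes `s 0, …, s (r-1)`, with one extra edge added inside part `i₀`. -/
def SimpleGraph.ContainsKPartitePlus {V : Type*} (G : SimpleGraph V) {r : ℕ}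
    (s : Fin r → ℕ) (i₀ : Fin r) : Prop :=
  ∃ A : Fin r → Finset V,
    (Pairwise fun i j => Disjoint (A i) (A j)) ∧
    (∀ i, (A i).card = s i) ∧
    (∀ i j, i ≠ j → ∀ x ∈ A i, ∀ y ∈ A j, G.Adj x y) ∧
    (∃ x ∈ A i₀, ∃ y ∈ A i₀, x ≠ y ∧ G.Adj x y)

section
open Finset

/-! ### The largest eigenvalue and the Perron vector -/

open scoped Classical in
/-- Sum of the weights `x` over the neighbours of `v`. -/
noncomputable def nbSum {V : Type*} [Fintype V] (G : SimpleGraph V) (x : V → ℝ) (v : V) : ℝ :=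
  ∑ w, if G.Adj v w then x w else 0

/-- The Rayleigh principle. -/
theorem quad_le_specMax {V : Type*} [Fintype V] [DecidableEq V] (G : SimpleGraph V)
    (x : V → ℝ) : ∑ v, x v * nbSum G x v ≤ G.specMax * ∑ v, x v ^ 2 := by
  classical
  unfold SimpleGraph.specMax
  let inst := Classical.decRel G.Adj
  generalize_proofs hA
  have hmul : ∀ v, nbSum G x v = ((G.adjMatrix ℝ).mulVec x) v := by
    intro v
    simp [nbSum, Matrix.mulVec, dotProduct, SimpleGraph.adjMatrix_apply]
  let b := hA.eigenvectorBasis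
  let X : EuclideanSpace ℝ V := WithLp.toLp 2 x
  let Y : EuclideanSpace ℝ V := WithLp.toLp 2 ((G.adjMatrix ℝ).mulVec x)
  have h1 : ∑ v, x v * nbSum G x v = inner ℝ X Y := by
    simp [X, Y, PiLp.inner_apply, hmul, mul_comm]
  have h2 : ∑ v, x v ^ 2 = inner ℝ X X := by
    rw [PiLp.inner_apply]; simp [X, sq]
  have h3 : ∀ i, inner ℝ (b i) Y = hA.eigenvalues i * inner ℝ (b i) X := by
    intro i
    have := hA.mulVec_eigenvectorBasis i
    have e1 : inner ℝ (b i) Y = dotProduct ((G.adjMatrix ℝ).mulVec x) (b i).ofLp := by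
      simp [Y, PiLp.inner_apply, dotProduct]
    have e2 : inner ℝ (b i) X = dotProduct x (b i).ofLp := by
      simp [X, PiLp.inner_apply, dotProduct]
    rw [e1, e2, dotProduct_comm, Matrix.dotProduct_mulVec, ← Matrix.mulVec_transpose]
    rw [(SimpleGraph.isSymm_adjMatrix G).eq, this, smul_dotProduct, dotProduct_comm]
    rfl
  rw [h1, h2, ← b.sum_inner_mul_inner, ← b.sum_inner_mul_inner, Finset.mul_sum]
  refine Finset.sum_le_sum fun i _ => ?_
  rw [h3, real_inner_comm]
  have : hA.eigenvalues i ≤ ⨆ i, hA.eigenvalues i :=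
    le_ciSup (Set.finite_range _).bddAbove i
  nlinarith [mul_self_nonneg (inner ℝ (b i) X)]

theorem nbSum_add_single {V : Type*} [Fintype V] [DecidableEq V] (G : SimpleGraph V)
    (x : V → ℝ) (u : V) (t : ℝ) :
    ∑ v, (x + Pi.single u t : V → ℝ) v * nbSum G (x + Pi.single u t : V → ℝ) v =
      ∑ v, x v * nbSum G x v + 2 * t * nbSum G x u := by
  classical
  have h : ∀ v, nbSum G (x + Pi.single u t : V → ℝ) v = nbSum G x v + if G.Adj v u then t else 0 := by
    intro v
    unfold nbSum
    simp only [Pi.add_apply, ite_add_zero, Finset.sum_add_distrib]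
    congr 1
    rw [Finset.sum_eq_single u]
    · simp
    · intro b _ hb; simp [hb]
    · simp
  simp only [h, Pi.add_apply, add_mul, mul_add, Finset.sum_add_distrib]
  have h1 : ∑ v, x v * (if G.Adj v u then t else 0) = t * nbSum G x u := by
    unfold nbSum
    rw [Finset.mul_sum]
    refine Finset.sum_congr rfl fun v _ => ?_
    simp [G.adj_comm u v, mul_comm]
  have h2 : ∑ v, (Pi.single u t : V → ℝ) v * nbSum G x v = t * nbSum G x u := by
    rw [Finset.sum_eq_single u]
    · simp
    · intro b _ hb; simp [hb]
    · simp
  have h3 : ∑ v, (Pi.single u t : V → ℝ) v * (if G.Adj v u then t else 0) = 0 := by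
    refine Finset.sum_eq_zero fun v _ => ?_
    by_cases hv : v = u
    · subst hv; simp
    · simp [hv]
  rw [h1, h2, h3]; ring

theorem sum_sq_add_single {V : Type*} [Fintype V] [DecidableEq V] (x : V → ℝ) (u : V) (t : ℝ) :
    ∑ v, (x + Pi.single u t : V → ℝ) v ^ 2 = ∑ v, x v ^ 2 + 2 * t * x u + t ^ 2 := by
  have : ∀ v, (x + Pi.single u t : V → ℝ) v ^ 2
      = x v ^ 2 + if v = u then (2 * t * x u + t ^ 2) else 0 := by
    intro v
    by_cases hv : v = u
    · subst hv; simp; ring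
    · simp [hv]
  simp only [this, Finset.sum_add_distrib]
  simp; ring

/-- The absolute value of an eigenvector for the largest eigenvalue maximizes the Rayleigh quotient,
hence is an eigenvector itself. -/
theorem exists_perron {V : Type*} [Fintype V] [DecidableEq V] [Nonempty V] (G : SimpleGraph V) :
    ∃ x : V → ℝ, (∀ v, 0 ≤ x v) ∧ ∑ v, x v ^ 2 = 1 ∧ ∀ v, nbSum G x v = G.specMax * x v := by
  classical
  have key : ∃ e : V → ℝ, ∑ v, e v ^ 2 = 1 ∧ ∀ v, nbSum G e v = G.specMax * e v := by
    unfold SimpleGraph.specMax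
    let inst := Classical.decRel G.Adj
    generalize_proofs hA
    obtain ⟨i, hi⟩ := exists_eq_ciSup_of_finite (f := hA.eigenvalues)
    refine ⟨(hA.eigenvectorBasis i).ofLp, ?_, ?_⟩
    · have := hA.eigenvectorBasis.orthonormal.1 i
      rw [EuclideanSpace.norm_eq, Real.sqrt_eq_one] at this
      simpa using this
    · intro v
      rw [← hi]
      have := congrFun (hA.mulVec_eigenvectorBasis i) v
      rw [Pi.smul_apply, smul_eq_mul] at this
      rw [← this]
      simp [nbSum, Matrix.mulVec, dotProduct, SimpleGraph.adjMatrix_apply]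
  obtain ⟨e, he, hev⟩ := key
  have habs : ∑ v, |e v| ^ 2 = 1 := by simpa using he
  refine ⟨fun v => |e v|, fun v => abs_nonneg _, habs, fun u => ?_⟩
  have h1 : G.specMax ≤ ∑ v, |e v| * nbSum G (fun v => |e v|) v := by
    have : G.specMax = ∑ v, e v * nbSum G e v := by
      simp only [hev]
      calc G.specMax = G.specMax * ∑ v, e v ^ 2 := by rw [he, mul_one]
        _ = _ := by rw [Finset.mul_sum]; exact Finset.sum_congr rfl fun v _ => by ring
    rw [this]
    refine Finset.sum_le_sum fun v _ => ?_
    unfold nbSum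
    rw [Finset.mul_sum, Finset.mul_sum]
    refine Finset.sum_le_sum fun w _ => ?_
    split_ifs
    · rw [← abs_mul]; exact le_abs_self _
    · simp
  have h2 : ∀ t : ℝ, 0 ≤ G.specMax * (t * t)
      + 2 * (G.specMax * |e u| - nbSum G (fun v => |e v|) u) * t + 0 := by
    intro t
    have := quad_le_specMax G ((fun v => |e v|) + Pi.single u t)
    rw [nbSum_add_single, sum_sq_add_single, habs] at this
    nlinarith
  have h3 := discrim_le_zero h2
  rw [discrim] at h3
  have h4 : G.specMax * |e u| - nbSum G (fun v => |e v|) u = 0 := by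
    have : (G.specMax * |e u| - nbSum G (fun v => |e v|) u) ^ 2 ≤ 0 := by nlinarith
    exact pow_eq_zero_iff (two_ne_zero) |>.1 (le_antisymm this (sq_nonneg _))
  linarith

/-! ### Degree majorization and complete multipartite graphs -/

/-- Weighted Erdős majorization: the colour classes `χ` define a complete `r`-partite graph on `U`
whose weighted degrees dominate those of the `K_{r+1}`-free graph `G[U]`. By induction on `r`: the
non-neighbours of a vertex of maximal weighted degree form one class. -/
theorem majorize {V : Type*} [DecidableEq V] (G : SimpleGraph V) (x : V → ℝ) (hx : ∀ v, 0 ≤ x v)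
    (r : ℕ) : ∀ U : Finset V, (∀ S ⊆ U, ¬ G.IsNClique (r + 1) S) →
    ∃ χ : V → ℕ, (∀ v ∈ U, χ v < r) ∧
      ∀ v ∈ U, (∑ w ∈ U, open scoped Classical in if G.Adj v w then x w else 0)
        ≤ ∑ w ∈ U, if χ w ≠ χ v then x w else 0 := by
  classical
  induction r with
  | zero =>
    intro U hU
    have : ∀ v, v ∉ U := by
      intro v hv
      refine hU {v} (by simpa using hv) ?_
      simp
    exact ⟨fun _ => 0, fun v hv => absurd hv (this v), fun v hv => absurd hv (this v)⟩
  | succ r ih =>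
    intro U hU
    rcases U.eq_empty_or_nonempty with rfl | hne
    · exact ⟨fun _ => 0, by simp, by simp⟩
    obtain ⟨v, hvU, hmax⟩ := U.exists_max_image
      (fun v => ∑ w ∈ U, if G.Adj v w then x w else 0) hne
    obtain ⟨χ, hχ, hχ2⟩ := ih (U.filter (G.Adj v)) (by
      intro S hS hcl
      refine hU (insert v S) ?_ ?_
      · intro a ha
        rcases Finset.mem_insert.1 ha with rfl | ha
        · exact hvU
        · exact (Finset.mem_filter.1 (hS ha)).1
      · exact hcl.insert fun b hb => (Finset.mem_filter.1 (hS hb)).2)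
    refine ⟨fun w => if G.Adj v w then χ w else r, ?_, ?_⟩
    · intro w hw
      by_cases h : G.Adj v w
      · simp only [h, if_true]
        exact (hχ w (by simp [hw, h])).trans (Nat.lt_succ_self r)
      · simp [h]
    · intro u hu
      by_cases h : G.Adj v u
      · have h1 := hχ2 u (by simp [hu, h])
        rw [Finset.sum_filter, Finset.sum_filter] at h1
        have hl : ∀ w ∈ U, (if G.Adj u w then x w else 0) ≤
            (if G.Adj v w then (if G.Adj u w then x w else 0) else 0)
              + if G.Adj v w then 0 else x w := by
          intro w _
          split_ifs <;> simp [hx w]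
        have hr : ∀ w ∈ U, (if (if G.Adj v w then χ w else r) ≠
              (if G.Adj v u then χ u else r) then x w else 0) =
            (if G.Adj v w then (if χ w ≠ χ u then x w else 0) else 0)
              + if G.Adj v w then 0 else x w := by
          intro w _
          have hlt : χ u < r := hχ u (by simp [hu, h])
          simp only [h, if_true]
          by_cases hw : G.Adj v w
          · simp [hw]
          · simp [hw, hlt.ne']
        rw [Finset.sum_congr rfl hr]
        refine (Finset.sum_le_sum hl).trans ?_
        rw [Finset.sum_add_distrib, Finset.sum_add_distrib]
        linarith
      · refine (hmax u hu).trans (Finset.sum_le_sum fun w hw => ?_)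
        by_cases hvw : G.Adj v w
        · have hlt : χ w < r := hχ w (by simp [hw, hvw])
          simp [hvw, h, hlt.ne]
        · simp only [hvw, if_false]
          split_ifs <;> simp [hx w]

theorem multipartite_quad {V : Type*} [DecidableEq V] (U : Finset V) (χ : V → ℕ) (r : ℕ)
    (hχ : ∀ v ∈ U, χ v < r) (x : V → ℝ) :
    ∑ v ∈ U, x v * ∑ w ∈ U, (if χ w ≠ χ v then x w else 0) =
      (∑ v ∈ U, x v) ^ 2 - ∑ i ∈ range r, (∑ v ∈ U with χ v = i, x v) ^ 2 := by
  have h1 : ∀ v ∈ U, x v * ∑ w ∈ U, (if χ w ≠ χ v then x w else 0) =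
      x v * (∑ w ∈ U, x w) - x v * (∑ w ∈ U with χ w = χ v, x w) := by
    intro v _
    rw [← mul_sub, Finset.sum_filter, ← Finset.sum_sub_distrib]
    congr 1
    refine Finset.sum_congr rfl fun w _ => ?_
    by_cases h : χ w = χ v <;> simp [h]
  rw [Finset.sum_congr rfl h1, Finset.sum_sub_distrib, ← Finset.sum_mul, ← sq]
  congr 1
  rw [← Finset.sum_fiberwise_of_maps_to (s := U) (t := range r) (g := χ)
    (fun v hv => Finset.mem_range.2 (hχ v hv))]
  refine Finset.sum_congr rfl fun i _ => ?_
  rw [sq, Finset.sum_mul]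
  refine Finset.sum_congr rfl fun v hv => ?_
  rw [(Finset.mem_filter.1 hv).2]

/-- A complete multipartite graph with parts of sizes `n_i` has largest eigenvalue at most `λ` when
`∑ n_i / (n_i + λ) ≤ 1`, by the Cauchy-Schwarz inequality inside the parts and across them. -/
theorem multipartite_le_of_sum {V : Type*} [DecidableEq V] (U : Finset V) (χ : V → ℕ) (r : ℕ)
    (hχ : ∀ v ∈ U, χ v < r) (x : V → ℝ) (l : ℝ) (hl : 0 < l)
    (hsum : ∑ i ∈ range r, ((#{v ∈ U | χ v = i} : ℝ) / (#{v ∈ U | χ v = i} + l)) ≤ 1) :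
    ∑ v ∈ U, x v * ∑ w ∈ U, (if χ w ≠ χ v then x w else 0) ≤ l * ∑ v ∈ U, x v ^ 2 := by
  rw [multipartite_quad U χ r hχ]
  have hmaps : ∀ v ∈ U, χ v ∈ range r := fun v hv => Finset.mem_range.2 (hχ v hv)
  rw [← Finset.sum_fiberwise_of_maps_to hmaps x,
    ← Finset.sum_fiberwise_of_maps_to hmaps (fun v => x v ^ 2)]
  have hpos : ∀ i ∈ range r, 0 ≤ (∑ v ∈ U with χ v = i, x v) ^ 2
      + l * ∑ v ∈ U with χ v = i, x v ^ 2 := fun i _ => by positivity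
  have h := Finset.sum_sq_le_sum_mul_sum_of_sq_le_mul (range r)
    (r := fun i => ∑ v ∈ U with χ v = i, x v)
    (f := fun i => (∑ v ∈ U with χ v = i, x v) ^ 2 + l * ∑ v ∈ U with χ v = i, x v ^ 2)
    (g := fun i => (#{v ∈ U | χ v = i} : ℝ) / (#{v ∈ U | χ v = i} + l))
    hpos (fun i _ => by positivity) (fun i _ => by
      have hc : (0 : ℝ) ≤ #{v ∈ U | χ v = i} := Nat.cast_nonneg _
      have hcs := sq_sum_le_card_mul_sum_sq (s := {v ∈ U | χ v = i}) (f := x)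
      rw [mul_div_assoc', le_div_iff₀ (by positivity)]
      nlinarith)
  have h2 : (∑ i ∈ range r, ∑ v ∈ U with χ v = i, x v) ^ 2 ≤
      ∑ i ∈ range r, ((∑ v ∈ U with χ v = i, x v) ^ 2 + l * ∑ v ∈ U with χ v = i, x v ^ 2) :=
    h.trans (mul_le_of_le_one_right (Finset.sum_nonneg hpos) hsum)
  rw [Finset.sum_add_distrib, ← Finset.mul_sum] at h2
  linarith

theorem multipartite_le_alpha {V : Type*} [DecidableEq V] (U : Finset V) (χ : V → ℕ) (r : ℕ)
    (hr : 1 ≤ r) (hχ : ∀ v ∈ U, χ v < r) (x : V → ℝ) :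
    ∑ v ∈ U, x v * ∑ w ∈ U, (if χ w ≠ χ v then x w else 0) ≤
      (1 - 1 / r) * #U * ∑ v ∈ U, x v ^ 2 := by
  rw [multipartite_quad U χ r hχ]
  have hr' : (1 : ℝ) ≤ r := by exact_mod_cast hr
  have h1 : (∑ v ∈ U, x v) ^ 2 ≤ r * ∑ i ∈ range r, (∑ v ∈ U with χ v = i, x v) ^ 2 := by
    rw [← Finset.sum_fiberwise_of_maps_to
      (fun v hv => Finset.mem_range.2 (hχ v hv) : ∀ v ∈ U, χ v ∈ range r) x]
    simpa using sq_sum_le_card_mul_sum_sq (s := range r)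
      (f := fun i => ∑ v ∈ U with χ v = i, x v)
  have h2 := sq_sum_le_card_mul_sum_sq (s := U) (f := x)
  have h3 : (∑ v ∈ U, x v) ^ 2 / r ≤ ∑ i ∈ range r, (∑ v ∈ U with χ v = i, x v) ^ 2 := by
    rw [div_le_iff₀ (by positivity)]; linarith
  have h4 : (0 : ℝ) ≤ 1 - 1 / r := by
    rw [sub_nonneg, div_le_one (by positivity)]; exact hr'
  calc _ ≤ (∑ v ∈ U, x v) ^ 2 - (∑ v ∈ U, x v) ^ 2 / r := by linarith
    _ = (1 - 1 / r) * (∑ v ∈ U, x v) ^ 2 := by ring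
    _ ≤ (1 - 1 / r) * (#U * ∑ v ∈ U, x v ^ 2) := mul_le_mul_of_nonneg_left h2 h4
    _ = _ := by ring

/-- Size of the `i`-th part of the Turán graph `T_r(n)`. -/
def turanPart (n r i : ℕ) : ℕ := n / r + if i < n % r then 1 else 0


/-! ### The spectral radius of the Turán graph -/

theorem card_fin_mod (n r i : ℕ) (hi : i < r) :
    #{v : Fin n | (v : ℕ) % r = i} = turanPart n r i := by
  have h := Nat.count_modEq_card n (r := r) (by omega) i
  rw [Nat.mod_eq_of_lt hi, Nat.count_eq_card_filter_range] at h
  rw [turanPart, ← h, Finset.card_filter, Finset.card_filter,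
    Fin.sum_univ_eq_sum_range (fun v => if v % r = i then 1 else 0) n]
  simp [Nat.ModEq, Nat.mod_eq_of_lt hi]

theorem sum_fin_mod (n r : ℕ) (hr : 0 < r) (f : ℕ → ℝ) :
    ∑ v : Fin n, f ((v : ℕ) % r) = ∑ i ∈ range r, turanPart n r i * f i := by
  rw [← Finset.sum_fiberwise_of_maps_to' (s := univ) (t := range r) (g := fun v : Fin n => (v : ℕ) % r)
    (fun v _ => Finset.mem_range.2 (Nat.mod_lt _ hr)) f]
  refine Finset.sum_congr rfl fun i hi => ?_
  rw [Finset.sum_const, card_fin_mod n r i (Finset.mem_range.1 hi), nsmul_eq_mul]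

/-- The Rayleigh principle for the Turán graph and a vector equal to `f i` on the `i`-th part. -/
theorem turan_quad (n r : ℕ) (hr : 0 < r) (f : ℕ → ℝ) :
    (∑ i ∈ range r, turanPart n r i * f i) ^ 2 - ∑ i ∈ range r, (turanPart n r i * f i) ^ 2 ≤
      (SimpleGraph.turanGraph n r).specMax * ∑ i ∈ range r, turanPart n r i * f i ^ 2 := by
  classical
  have h := quad_le_specMax (SimpleGraph.turanGraph n r) (fun v => f ((v : ℕ) % r))
  have hnb : ∀ v : Fin n, nbSum (SimpleGraph.turanGraph n r) (fun v => f ((v : ℕ) % r)) v =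
      ∑ i ∈ range r, turanPart n r i * (if i ≠ (v : ℕ) % r then f i else 0) := by
    intro v
    rw [← sum_fin_mod n r hr (fun i => if i ≠ (v : ℕ) % r then f i else 0), nbSum]
    refine Finset.sum_congr rfl fun w _ => ?_
    by_cases hvw : (w : ℕ) % r = (v : ℕ) % r
    · simp [SimpleGraph.turanGraph, hvw]
    · simp [SimpleGraph.turanGraph, hvw, Ne.symm hvw]
  simp only [hnb] at h
  rw [sum_fin_mod n r hr (fun j => f j * ∑ i ∈ range r,
      turanPart n r i * (if i ≠ j then f i else 0)),
    sum_fin_mod n r hr (fun j => f j ^ 2)] at h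
  refine le_trans (le_of_eq ?_) h
  rw [sq, Finset.sum_mul, ← Finset.sum_sub_distrib]
  refine Finset.sum_congr rfl fun i hi => ?_
  have : ∑ j ∈ range r, (turanPart n r j : ℝ) * (if j ≠ i then f j else 0) =
      ∑ j ∈ range r, (turanPart n r j : ℝ) * f j - turanPart n r i * f i := by
    rw [eq_sub_iff_add_eq]
    rw [← Finset.sum_erase_add _ _ hi, ← Finset.sum_erase_add (range r) _ hi]
    simp only [ne_eq, not_true_eq_false, if_false, mul_zero, add_zero]
    congr 1
    refine Finset.sum_congr rfl fun j hj => ?_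
    rw [if_pos (Finset.ne_of_mem_erase hj)]
  rw [this]; ring

theorem sum_turanPart (n r : ℕ) (hr : 0 < r) :
    ∑ i ∈ range r, (turanPart n r i : ℝ) = n := by
  have := sum_fin_mod n r hr (fun _ => 1)
  simpa using this.symm

/-- The average degree bound `μ(T_r(n)) ≥ (1 - 1/r) n - r / (4n)`. -/
theorem turan_lower (n r : ℕ) (hr : 0 < r) (hn : 0 < n) :
    (1 - 1 / r) * (n : ℝ) - r / (4 * n) ≤ (SimpleGraph.turanGraph n r).specMax := by
  have h := turan_quad n r hr (fun _ => 1)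
  simp only [mul_one, one_pow, sum_turanPart n r hr] at h
  set q : ℝ := ((n / r : ℕ) : ℝ) with hq
  have h2 : ∑ i ∈ range r, (turanPart n r i : ℝ) ^ 2 = (2 * q + 1) * n - r * (q * (q + 1)) := by
    rw [← sum_turanPart n r hr, Finset.mul_sum]
    have : (r : ℝ) * (q * (q + 1)) = ∑ i ∈ range r, (q * (q + 1)) := by simp
    rw [this, ← Finset.sum_sub_distrib]
    refine Finset.sum_congr rfl fun i _ => ?_
    rw [turanPart]
    split_ifs
    · push_cast; rw [← hq]; ring
    · push_cast; rw [← hq]; ring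
  rw [h2] at h
  have hn' : (0 : ℝ) < n := by exact_mod_cast hn
  have hr' : (0 : ℝ) < r := by exact_mod_cast hr
  rw [← mul_le_mul_iff_left₀ hn']
  refine le_trans ?_ h
  have e : ((1 - 1 / r) * (n : ℝ) - r / (4 * n)) * n = (n : ℝ) ^ 2 - (n : ℝ) ^ 2 / r - r / 4 := by
    field_simp
  rw [e]
  have e2 : (n : ℝ) ^ 2 - ((2 * q + 1) * n - r * (q * (q + 1))) -
      ((n : ℝ) ^ 2 - (n : ℝ) ^ 2 / r - r / 4) = (n - r * q - r / 2) ^ 2 / r := by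
    field_simp; ring
  have : (0 : ℝ) ≤ (n - r * q - r / 2) ^ 2 / r := by positivity
  linarith

/-- Testing the Turán graph on the vector equal to `1 / (t_i + λ)` on the `i`-th part gives
one of the two inequalities in `∑ t_i / (t_i + λ) = 1`, the equation of its spectral radius `λ`. -/
theorem turan_part_sum_le (n r : ℕ) (hr : 0 < r)
    (hl : 0 < (SimpleGraph.turanGraph n r).specMax) :
    ∑ i ∈ range r, (turanPart n r i : ℝ) /
      (turanPart n r i + (SimpleGraph.turanGraph n r).specMax) ≤ 1 := by
  set l := (SimpleGraph.turanGraph n r).specMax with hldef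
  have h := turan_quad n r hr (fun i => 1 / (turanPart n r i + l))
  rw [← hldef, Finset.mul_sum] at h
  simp only [mul_one_div] at h
  set F := ∑ i ∈ range r, (turanPart n r i : ℝ) / (turanPart n r i + l) with hF
  have h2 : ∑ i ∈ range r, ((turanPart n r i : ℝ) / (turanPart n r i + l)) ^ 2 +
      ∑ i ∈ range r, l * (turanPart n r i * (1 / (turanPart n r i + l)) ^ 2) = F := by
    rw [hF, ← Finset.sum_add_distrib]
    refine Finset.sum_congr rfl fun i _ => ?_
    have : (0 : ℝ) < turanPart n r i + l := by positivity
    field_simp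
  have h3 : F * F ≤ F := by nlinarith
  by_contra hlt
  push Not at hlt
  nlinarith

/-- Among partitions of `n`, `∑ n_i / (n_i + λ)` is largest for the balanced one: `t / (t + λ)` is
concave, so at the integers it lies below its chord through `⌊n/r⌋` and `⌊n/r⌋ + 1`. -/
theorem sum_le_turan_sum (n r : ℕ) (hr : 0 < r) (l : ℝ) (hl : 0 < l) (p : ℕ → ℕ)
    (hp : ∑ i ∈ range r, p i = n) :
    ∑ i ∈ range r, (p i : ℝ) / (p i + l) ≤
      ∑ i ∈ range r, (turanPart n r i : ℝ) / (turanPart n r i + l) := by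
  set q : ℝ := ((n / r : ℕ) : ℝ) with hq
  have hq0 : 0 ≤ q := Nat.cast_nonneg _
  set L : ℝ → ℝ := fun t => q / (q + l) + (t - q) * ((q + 1) / (q + 1 + l) - q / (q + l)) with hL
  have hLsum : ∀ s : ℕ → ℝ, ∑ i ∈ range r, L (s i) = r * (q / (q + l)) +
      (∑ i ∈ range r, s i - r * q) * ((q + 1) / (q + 1 + l) - q / (q + l)) := by
    intro s
    simp only [hL, Finset.sum_add_distrib, ← Finset.sum_mul, Finset.sum_sub_distrib]
    simp
  have h1 : ∀ i ∈ range r, (p i : ℝ) / (p i + l) ≤ L (p i) := by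
    intro i _
    have hk : (0 : ℝ) ≤ p i := Nat.cast_nonneg _
    have hint : 0 ≤ ((p i : ℝ) - q) * ((p i : ℝ) - q - 1) := by
      rcases le_or_gt (p i) (n / r) with h | h
      · have : (p i : ℝ) ≤ q := by rw [hq]; exact_mod_cast h
        nlinarith
      · have : q + 1 ≤ (p i : ℝ) := by rw [hq]; exact_mod_cast h
        nlinarith
    have e : L (p i) - (p i : ℝ) / (p i + l) =
        l * (((p i : ℝ) - q) * ((p i : ℝ) - q - 1)) / ((q + l) * (q + 1 + l) * (p i + l)) := by
      simp only [hL]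
      field_simp
      ring
    have : 0 ≤ l * (((p i : ℝ) - q) * ((p i : ℝ) - q - 1)) /
      ((q + l) * (q + 1 + l) * (p i + l)) := by positivity
    linarith
  have h2 : ∀ i ∈ range r, (turanPart n r i : ℝ) / (turanPart n r i + l) = L (turanPart n r i) := by
    intro i _
    simp only [hL, turanPart]
    split_ifs
    · push_cast; rw [← hq]; ring
    · push_cast; rw [← hq]; ring
  rw [Finset.sum_congr rfl h2]
  refine (Finset.sum_le_sum h1).trans (le_of_eq ?_)
  rw [hLsum, hLsum, sum_turanPart n r hr, ← hp]
  push_cast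
  rfl


/-! ### A subset of large minimum degree containing a clique -/

/-- The graph on the same vertex set keeping only the edges of `G` inside `U`; it replaces the
induced subgraph `G[U]`, with the same spectral radius as soon as `U` is nonempty. -/
def restr {V : Type*} (G : SimpleGraph V) (U : Finset V) : SimpleGraph V where
  Adj v w := G.Adj v w ∧ v ∈ U ∧ w ∈ U
  symm := ⟨fun _ _ h => ⟨h.1.symm, h.2.2, h.2.1⟩⟩
  loopless := ⟨fun _ h => G.loopless.irrefl _ h.1⟩

theorem restr_univ {V : Type*} [Fintype V] (G : SimpleGraph V) : restr G univ = G := by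
  ext; simp [restr]

open scoped Classical in
theorem nbSum_restr {V : Type*} [Fintype V] (G : SimpleGraph V) (U : Finset V) (x : V → ℝ)
    (v : V) : nbSum (restr G U) x v =
      if v ∈ U then ∑ w ∈ U, if G.Adj v w then x w else 0 else 0 := by
  unfold nbSum restr
  split_ifs with hv
  · simp only [hv, true_and]
    rw [← Finset.sum_subset (Finset.subset_univ U)]
    · refine Finset.sum_congr rfl fun w hw => ?_
      simp [hw]
    · intro w _ hw
      simp [hw]
  · simp [hv]

open scoped Classical in
theorem quad_restr {V : Type*} [Fintype V] (G : SimpleGraph V) (U : Finset V) (x : V → ℝ) :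
    ∑ v, x v * nbSum (restr G U) x v =
      ∑ v ∈ U, x v * ∑ w ∈ U, if G.Adj v w then x w else 0 := by
  rw [← Finset.sum_subset (Finset.subset_univ U)]
  · refine Finset.sum_congr rfl fun w hw => ?_
    rw [nbSum_restr, if_pos hw]
  · intro w _ hw
    rw [nbSum_restr, if_neg hw, mul_zero]

theorem quad_perron {V : Type*} [Fintype V] (G : SimpleGraph V) (x : V → ℝ) (l : ℝ)
    (hx1 : ∑ v, x v ^ 2 = 1) (hx : ∀ v, nbSum G x v = l * x v) :
    ∑ v, x v * nbSum G x v = l := by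
  calc _ = l * ∑ v, x v ^ 2 := by
        rw [Finset.mul_sum]
        exact Finset.sum_congr rfl fun v _ => by rw [hx]; ring
    _ = l := by rw [hx1, mul_one]

theorem sum_sq_le_one {V : Type*} [Fintype V] (U : Finset V) (x : V → ℝ)
    (hx1 : ∑ v, x v ^ 2 = 1) : ∑ v ∈ U, x v ^ 2 ≤ 1 := by
  rw [← hx1]
  exact Finset.sum_le_sum_of_subset_of_nonneg (Finset.subset_univ U) fun v _ _ => sq_nonneg _

theorem specMax_restr_le_card {V : Type*} [Fintype V] [DecidableEq V] [Nonempty V]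
    (G : SimpleGraph V) (U : Finset V) : (restr G U).specMax ≤ #U := by
  classical
  obtain ⟨x, hx0, hx1, hx⟩ := exists_perron (restr G U)
  rw [← quad_perron _ x _ hx1 hx, quad_restr]
  calc _ ≤ ∑ v ∈ U, x v * ∑ w ∈ U, x w := by
        refine Finset.sum_le_sum fun v _ => mul_le_mul_of_nonneg_left ?_ (hx0 v)
        refine Finset.sum_le_sum fun w _ => ?_
        split_ifs <;> simp [hx0 w]
    _ = (∑ v ∈ U, x v) ^ 2 := by rw [← Finset.sum_mul, sq]
    _ ≤ #U * ∑ v ∈ U, x v ^ 2 := sq_sum_le_card_mul_sum_sq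
    _ ≤ #U := mul_le_of_le_one_right (Nat.cast_nonneg _) (sum_sq_le_one U x hx1)

/-- Wilf's bound: a `K_{r+1}`-free graph on `m` vertices has `μ ≤ (1 - 1/r) m`. -/
theorem specMax_restr_le_alpha {V : Type*} [Fintype V] [DecidableEq V] [Nonempty V]
    (G : SimpleGraph V) (U : Finset V) (r : ℕ) (hr : 1 ≤ r)
    (hfree : ∀ S ⊆ U, ¬ G.IsNClique (r + 1) S) :
    (restr G U).specMax ≤ (1 - 1 / r) * #U := by
  classical
  obtain ⟨x, hx0, hx1, hx⟩ := exists_perron (restr G U)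
  obtain ⟨χ, hχ, hmaj⟩ := majorize G x hx0 r U hfree
  rw [← quad_perron _ x _ hx1 hx, quad_restr]
  have hα : (0 : ℝ) ≤ 1 - 1 / r := by
    rw [sub_nonneg, div_le_one (by positivity)]; exact_mod_cast hr
  calc _ ≤ _ := Finset.sum_le_sum fun v hv => mul_le_mul_of_nonneg_left (hmaj v hv) (hx0 v)
    _ ≤ _ := multipartite_le_alpha U χ r hr hχ x
    _ ≤ _ := mul_le_of_le_one_right (by positivity) (sum_sq_le_one U x hx1)

/-- The spectral Turán theorem: a `K_{r+1}`-free graph of order `n` has `μ(G) ≤ μ(T_r(n))`. -/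
theorem spectral_turan {V : Type*} [Fintype V] [DecidableEq V] [Nonempty V]
    (G : SimpleGraph V) (r : ℕ) (hr : 1 ≤ r)
    (hl : 0 < (SimpleGraph.turanGraph (Fintype.card V) r).specMax)
    (hfree : ∀ S : Finset V, ¬ G.IsNClique (r + 1) S) :
    G.specMax ≤ (SimpleGraph.turanGraph (Fintype.card V) r).specMax := by
  classical
  obtain ⟨x, hx0, hx1, hx⟩ := exists_perron (restr G univ)
  obtain ⟨χ, hχ, hmaj⟩ := majorize G x hx0 r univ (fun S _ => hfree S)
  rw [← restr_univ G, ← quad_perron _ x _ hx1 hx, quad_restr]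
  calc _ ≤ _ := Finset.sum_le_sum fun v hv => mul_le_mul_of_nonneg_left (hmaj v hv) (hx0 v)
    _ ≤ _ := multipartite_le_of_sum univ χ r hχ x _ hl
      ((sum_le_turan_sum (Fintype.card V) r hr _ hl (fun i => #{v | χ v = i}) (by
        rw [← Finset.card_univ]
        exact (Finset.card_eq_sum_card_fiberwise
          (fun v hv => Finset.mem_coe.2 (Finset.mem_range.2 (hχ v hv)))).symm)).trans
        (turan_part_sum_le (Fintype.card V) r hr hl))
    _ = _ := by rw [hx1, mul_one]

/-- Zeroing the entry of the Perron vector at a deleted vertex `u` gives a test vector for the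
remaining graph. -/
theorem specMax_erase {V : Type*} [Fintype V] [DecidableEq V]
    (G : SimpleGraph V) (U : Finset V) (x : V → ℝ) (l : ℝ)
    (hx1 : ∑ v, x v ^ 2 = 1) (hx : ∀ v, nbSum (restr G U) x v = l * x v) (u : V) :
    l * (1 - 2 * x u ^ 2) ≤ (restr G (U.erase u)).specMax * (1 - x u ^ 2) := by
  classical
  have h := quad_le_specMax (restr G (U.erase u)) (x + Pi.single u (-x u))
  have hy : (x + Pi.single u (-x u) : V → ℝ) u = 0 := by simp
  have heq : ∑ v, (x + Pi.single u (-x u) : V → ℝ) v *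
      nbSum (restr G (U.erase u)) (x + Pi.single u (-x u)) v =
      ∑ v, (x + Pi.single u (-x u) : V → ℝ) v *
      nbSum (restr G U) (x + Pi.single u (-x u)) v := by
    refine Finset.sum_congr rfl fun v _ => ?_
    by_cases hv : v = u
    · rw [hv, hy, zero_mul, zero_mul]
    · congr 1
      rw [nbSum_restr, nbSum_restr]
      simp only [Finset.mem_erase, hv, ne_eq, not_false_eq_true, true_and]
      congr 1
      refine Finset.sum_subset (Finset.erase_subset _ _) fun w hw hw2 => ?_
      have : w = u := by
        by_contra hne
        exact hw2 (Finset.mem_erase.2 ⟨hne, hw⟩)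
      rw [this, hy, ite_self]
  rw [heq, nbSum_add_single, sum_sq_add_single, quad_perron _ x l hx1 hx, hx1, hx] at h
  calc _ = l + 2 * -x u * (l * x u) := by ring
    _ ≤ _ := h
    _ = _ := by ring

/-- The computation behind `exists_dense_subset`: `m` is the order, `l` the spectral radius and `d` a
degree. If `d < (α - 2 ε) m`, then replacing `d` by `(α - 2 ε) m` and `l` by its lower bound
`α m - ε` in `h` leads to `ε m ≤ 2 ε / (α - 2 ε) + 1`, which contradicts `2 < ε m`. -/
theorem degree_estimate (α ε m l d : ℝ) (hα : 1 / 2 ≤ α) (hα1 : α ≤ 1) (hε : 0 < ε)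
    (hε64 : ε ≤ 1 / 64) (hm : 2 < ε * m) (hl : α * m - ε ≤ l) (hd0 : 0 ≤ d)
    (h : (α - ε) * l ^ 2 ≤ d * ((α - ε) + l - (α - ε) * m + (α - ε) * d)) :
    (α - 2 * ε) * m ≤ d := by
  by_contra! hlt
  have hm0 : 0 < m := by nlinarith
  have hm128 : 128 < m := by nlinarith
  obtain ⟨a, ha⟩ : ∃ a, a = α - ε := ⟨_, rfl⟩
  obtain ⟨δ, hδ⟩ : ∃ δ, δ = α - 2 * ε := ⟨_, rfl⟩
  rw [← ha] at h
  rw [← hδ] at hlt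
  have ha0 : 0 < a := by linarith
  have ha1 : a ≤ 1 := by linarith
  have hδ4 : 1 / 4 ≤ δ := by linarith
  have hc : 0 ≤ a + l - a * m := by
    have : α * m - ε - a * m = ε * m - ε := by rw [ha]; ring
    nlinarith
  have h1 : a * l ^ 2 ≤ δ * m * (a + l - a * m + a * (δ * m)) := by
    have e1 : d * (a + l - a * m) ≤ δ * m * (a + l - a * m) :=
      mul_le_mul_of_nonneg_right hlt.le hc
    have e2 : d * d ≤ (δ * m) * (δ * m) := mul_self_le_mul_self hd0 hlt.le
    have e3 : a * (d * d) ≤ a * ((δ * m) * (δ * m)) := mul_le_mul_of_nonneg_left e2 ha0.le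
    nlinarith
  obtain ⟨k, hk⟩ : ∃ k, k = α * m - ε := ⟨_, rfl⟩
  rw [← hk] at hl
  have hkm : δ * m ≤ 2 * a * k := by
    have : 0 ≤ (2 * α - 1) * (a * m) := by
      apply mul_nonneg (by linarith); positivity
    have e : 2 * a * k - δ * m = (2 * α - 1) * (a * m) + (a - δ) * m - 2 * a * ε := by
      rw [hk]; ring
    have : (a - δ) * m = ε * m := by rw [ha, hδ]; ring
    nlinarith
  have h2 : a * k ^ 2 - δ * m * k ≤ δ * m * (a - a * m + a * (δ * m)) := by
    have : 0 ≤ (l - k) * (a * (l + k) - δ * m) := by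
      apply mul_nonneg (by linarith)
      nlinarith
    nlinarith
  have h3 : m ^ 2 * (ε * (4 * a ^ 2 - δ)) + a * ε ^ 2 ≤ m * (2 * a * α * ε - δ * ε + δ * a) := by
    have : m ^ 2 * (ε * (4 * a ^ 2 - δ)) + a * ε ^ 2 - m * (2 * a * α * ε - δ * ε + δ * a)
        = a * k ^ 2 - δ * m * k - δ * m * (a - a * m + a * (δ * m)) := by
      rw [hk, hδ, ha]; ring
    linarith
  have h4 : δ ≤ 4 * a ^ 2 - δ := by rw [ha, hδ]; nlinarith
  have h5 : m * (m * (ε * δ)) ≤ m * (2 * ε + δ) := by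
    have e1 : m ^ 2 * (ε * δ) ≤ m ^ 2 * (ε * (4 * a ^ 2 - δ)) := by gcongr
    have e2 : 2 * a * α * ε - δ * ε + δ * a ≤ 2 * ε + δ := by
      have : a * α ≤ 1 := by nlinarith
      nlinarith
    have e3 := mul_le_mul_of_nonneg_left e2 hm0.le
    have e4 : 0 ≤ a * ε ^ 2 := by positivity
    nlinarith
  have h6 := le_of_mul_le_mul_left h5 hm0
  nlinarith

open scoped Classical in
/-- The spectral part of the argument. The set `U` maximizes `μ(G[U]) - (1 - 1/r - ε) |U|` with
`ε = 1 / (4 r ^ 4)`. -/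
theorem exists_dense_subset {V : Type*} [Fintype V] [DecidableEq V] (G : SimpleGraph V)
    (r n : ℕ) (hr : 2 ≤ r) (hcard : Fintype.card V = n) (hn : 64 * r ^ 8 < n)
    (hmu : (SimpleGraph.turanGraph n r).specMax < G.specMax) :
    ∃ U : Finset V, (n : ℝ) / (4 * r ^ 4) ≤ #U ∧
      (∀ u ∈ U, (1 - 1 / r - 1 / (2 * (r : ℝ) ^ 4)) * #U ≤
        #{w ∈ U | G.Adj u w}) ∧
      ∃ S ⊆ U, G.IsNClique (r + 1) S := by
  have hn0 : 0 < n := by omega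
  have : Nonempty V := Fintype.card_pos_iff.1 (by omega)
  have hr2 : (2 : ℝ) ≤ r := by exact_mod_cast hr
  have hnR : 64 * (r : ℝ) ^ 8 < n := by exact_mod_cast hn
  have hnpos : (0 : ℝ) < n := by exact_mod_cast hn0
  obtain ⟨ε, hε⟩ : ∃ ε : ℝ, ε = 1 / (4 * (r : ℝ) ^ 4) := ⟨_, rfl⟩
  obtain ⟨α, hα⟩ : ∃ α : ℝ, α = 1 - 1 / (r : ℝ) := ⟨_, rfl⟩
  have hε0 : 0 < ε := by rw [hε]; positivity
  have hr4 : (16 : ℝ) ≤ (r : ℝ) ^ 4 := by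
    calc (16 : ℝ) = 2 ^ 4 := by norm_num
      _ ≤ _ := by gcongr
  have hε64 : ε ≤ 1 / 64 := by
    rw [hε]; apply one_div_le_one_div_of_le <;> linarith
  have hα2 : 1 / 2 ≤ α := by
    have : 1 / (r : ℝ) ≤ 1 / 2 := one_div_le_one_div_of_le (by norm_num) hr2
    linarith
  have hα1 : α ≤ 1 := by
    have : 0 ≤ 1 / (r : ℝ) := by positivity
    linarith
  have hεn : 16 * (r : ℝ) ^ 4 < ε * n := by
    rw [hε, div_mul_eq_mul_div, one_mul, lt_div_iff₀ (by positivity)]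
    nlinarith
  -- The error term of the average degree bound for the Turán graph is at most `ε / 2`.
  have herr : (r : ℝ) / (4 * n) ≤ ε / 2 := by
    rw [hε, div_div, div_le_div_iff₀ (by positivity) (by positivity)]
    have : (r : ℝ) ^ 5 ≤ (r : ℝ) ^ 8 := pow_le_pow_right₀ (by linarith) (by norm_num)
    nlinarith
  have hturan := turan_lower n r (by omega) hn0
  rw [← hα] at hturan
  have hTpos : 0 < (SimpleGraph.turanGraph n r).specMax := by nlinarith
  obtain ⟨U, -, hU⟩ := (univ : Finset (Finset V)).exists_max_image
    (fun U => (restr G U).specMax - (α - ε) * #U) ⟨univ, Finset.mem_univ _⟩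
  obtain ⟨l, hldef⟩ : ∃ l, l = (restr G U).specMax := ⟨_, rfl⟩
  obtain ⟨m, hm⟩ : ∃ m : ℝ, m = #U := ⟨_, rfl⟩
  have hΦ : α * n - ε / 2 - (α - ε) * n ≤ l - (α - ε) * m := by
    have := hU univ (Finset.mem_univ _)
    rw [restr_univ, Finset.card_univ, hcard, ← hldef, ← hm] at this
    linarith
  have hlm : l ≤ m := by rw [hldef, hm]; exact specMax_restr_le_card G U
  have hmn : m ≤ n := by
    rw [hm, ← hcard]; exact_mod_cast Finset.card_le_univ U
  have hmge : ε * n ≤ m := by nlinarith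
  have hεm : 2 < ε * m := by
    have e1 : ε * (16 * (r : ℝ) ^ 4) = 4 := by rw [hε]; field_simp; norm_num
    have e2 : ε * (16 * (r : ℝ) ^ 4) ≤ ε * m := by gcongr; linarith
    linarith
  have hll : α * m - ε ≤ l := by nlinarith
  have hl0 : 0 < l := by nlinarith
  refine ⟨U, ?_, ?_, ?_⟩
  · rw [← hm]
    refine le_trans (le_of_eq ?_) hmge
    rw [hε]; ring
  · intro u hu
    obtain ⟨x, hx0, hx1, hx⟩ := exists_perron (restr G U)
    rw [← hldef] at hx
    have hxU : ∀ v, v ∉ U → x v = 0 := by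
      intro v hv
      have := hx v
      rw [nbSum_restr, if_neg hv] at this
      rcases mul_eq_zero.1 this.symm with h | h
      · exact absurd h hl0.ne'
      · exact h
    have ha0 : 0 < α - ε := by linarith
    -- Maximality of `U` forces every entry of the Perron vector to be about `m ^ (-1/2)`.
    have hxlow : ∀ v ∈ U, (α - ε) ≤ (α - ε + l) * x v ^ 2 := by
      intro v hv
      have h1 := specMax_erase G U x l hx1 hx v
      have h2 := hU (U.erase v) (Finset.mem_univ _)
      rw [← hldef, Finset.card_erase_of_mem hv,
        Nat.cast_sub (Finset.card_pos.2 ⟨v, hv⟩), ← hm] at h2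
      have h3 : x v ^ 2 ≤ 1 := by
        have := sum_sq_le_one {v} x hx1
        simpa using this
      have h4 : (restr G (U.erase v)).specMax ≤ l - (α - ε) := by
        push_cast at h2; linarith
      have h5 := mul_le_mul_of_nonneg_right h4 (sub_nonneg.2 h3)
      nlinarith
    obtain ⟨d, hd⟩ : ∃ d : ℝ, d = #{w ∈ U | G.Adj u w} := ⟨_, rfl⟩
    have hsplit : ∑ w ∈ U with G.Adj u w, x w ^ 2 + ∑ w ∈ U with ¬ G.Adj u w, x w ^ 2 = 1 := by
      rw [Finset.sum_filter_add_sum_filter_not, ← hx1]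
      exact Finset.sum_subset (Finset.subset_univ U) fun v _ hv => by rw [hxU v hv]; norm_num
    have hnot : (m - d) * (α - ε) ≤ (α - ε + l) * ∑ w ∈ U with ¬ G.Adj u w, x w ^ 2 := by
      have hc : (#{w ∈ U | ¬ G.Adj u w} : ℝ) = m - d := by
        rw [hm, hd, ← Finset.card_filter_add_card_filter_not (s := U) (G.Adj u)]
        push_cast; ring
      rw [← hc, ← nsmul_eq_mul, Finset.mul_sum]
      exact Finset.card_nsmul_le_sum _ _ _ fun w hw => hxlow w (Finset.mem_filter.1 hw).1
    have hcs : (l * x u) ^ 2 ≤ d * ∑ w ∈ U with G.Adj u w, x w ^ 2 := by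
      rw [← hx u, nbSum_restr, if_pos hu, ← Finset.sum_filter, hd]
      exact sq_sum_le_card_mul_sum_sq
    have hd0 : 0 ≤ d := by rw [hd]; positivity
    have := degree_estimate α ε m l d hα2 hα1 hε0 hε64 hεm hll hd0 (by
      have e1 := hxlow u hu
      have e2 : l ^ 2 * (α - ε) ≤ l ^ 2 * ((α - ε + l) * x u ^ 2) := by gcongr
      have e3 : (α - ε + l) * (l * x u) ^ 2 ≤
        (α - ε + l) * (d * ∑ w ∈ U with G.Adj u w, x w ^ 2) := by gcongr
      have e4 : (α - ε + l) * ∑ w ∈ U with G.Adj u w, x w ^ 2 ≤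
        (α - ε + l) - (m - d) * (α - ε) := by
        have : ∑ w ∈ U with G.Adj u w, x w ^ 2 = 1 - ∑ w ∈ U with ¬ G.Adj u w, x w ^ 2 := by
          linarith
        rw [this]; linarith
      calc (α - ε) * l ^ 2 = l ^ 2 * (α - ε) := mul_comm _ _
        _ ≤ l ^ 2 * ((α - ε + l) * x u ^ 2) := e2
        _ = (α - ε + l) * (l * x u) ^ 2 := by ring
        _ ≤ (α - ε + l) * (d * ∑ w ∈ U with G.Adj u w, x w ^ 2) := e3
        _ = d * ((α - ε + l) * ∑ w ∈ U with G.Adj u w, x w ^ 2) := by ring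
        _ ≤ d * ((α - ε + l) - (m - d) * (α - ε)) := mul_le_mul_of_nonneg_left e4 hd0
        _ = _ := by ring)
    rw [← hm, ← hd]
    refine le_trans (le_of_eq ?_) this
    rw [hα, hε]; ring
  · by_contra! hfree
    by_cases hUu : U = univ
    · rw [hUu] at hfree
      have h1 := spectral_turan G r (by omega) (by rw [hcard]; exact hTpos)
        (fun S => hfree S (Finset.subset_univ S))
      rw [hcard] at h1
      linarith
    · have h1 := specMax_restr_le_alpha G U r (by omega) hfree
      rw [← hldef, ← hm, ← hα] at h1
      have h2 : m + 1 ≤ n := by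
        have := Finset.card_lt_card (Finset.ssubset_univ_iff.2 hUu)
        rw [Finset.card_univ, hcard] at this
        rw [hm]; exact_mod_cast this
      nlinarith


/-! ### Extending families of tuples -/

open scoped Classical in
/-- Double counting over `w`: a vertex `w` seeing `d` vertices of the clique `S` contributes
`d (d - 1)` ordered pairs, which is at least the chord value through `d = r - 1` and `d = r`. -/
theorem exists_large_codegree {V : Type*} (G : SimpleGraph V) (r : ℕ)
    (hr : 2 ≤ r) (U S : Finset V) (D : ℝ)
    (hD : ∀ u ∈ U, (#{w ∈ U | ¬ G.Adj u w} : ℝ) ≤ D) (hS : S ⊆ U) (hcl : G.IsNClique (r + 1) S) :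
    ∃ u ∈ S, ∃ v ∈ S, G.Adj u v ∧
      ((r : ℝ) - 1) * ((r + 2) * #U - 2 * (r + 1) * D) / (r * (r + 1)) ≤
        #{w ∈ U | G.Adj u w ∧ G.Adj v w} := by
  obtain ⟨m, hm⟩ : ∃ m : ℝ, m = #U := ⟨_, rfl⟩
  rw [← hm]
  have hr2 : (2 : ℝ) ≤ r := by exact_mod_cast hr
  have hcardoff : (#S.offDiag : ℝ) = r * (r + 1) := by
    rw [Finset.offDiag_card, hcl.card_eq]
    rw [Nat.cast_sub (Nat.le_mul_self _)]
    push_cast; ring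
  have hne : S.offDiag.Nonempty := by
    rw [← Finset.card_pos]
    have : (0 : ℝ) < #S.offDiag := by rw [hcardoff]; positivity
    exact_mod_cast this
  have hdc : ∑ p ∈ S.offDiag, (#{w ∈ U | G.Adj p.1 w ∧ G.Adj p.2 w} : ℝ) =
      ∑ w ∈ U, ((#{u ∈ S | G.Adj u w} : ℝ) * #{u ∈ S | G.Adj u w} - #{u ∈ S | G.Adj u w}) := by
    have h1 : ∀ w ∈ U, ((#{u ∈ S | G.Adj u w} : ℝ) * #{u ∈ S | G.Adj u w}
        - #{u ∈ S | G.Adj u w}) = ∑ p ∈ S.offDiag, if G.Adj p.1 w ∧ G.Adj p.2 w then 1 else 0 := by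
      intro w _
      have : S.offDiag.filter (fun p => G.Adj p.1 w ∧ G.Adj p.2 w) =
          (S.filter (G.Adj · w)).offDiag := by
        ext p; simp only [Finset.mem_filter, Finset.mem_offDiag]; tauto
      rw [Finset.sum_boole, this, Finset.offDiag_card, Nat.cast_sub (Nat.le_mul_self _)]
      push_cast; rfl
    rw [Finset.sum_congr rfl h1, Finset.sum_comm]
    refine Finset.sum_congr rfl fun p _ => ?_
    rw [Finset.sum_boole]
  have hdeg : ((r : ℝ) + 1) * (m - D) ≤ ∑ w ∈ U, (#{u ∈ S | G.Adj u w} : ℝ) := by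
    have h1 : ∑ w ∈ U, (#{u ∈ S | G.Adj u w} : ℝ) = ∑ u ∈ S, (#{w ∈ U | G.Adj u w} : ℝ) := by
      simp only [← Finset.sum_boole]
      exact Finset.sum_comm
    have h2 : ∀ u ∈ S, m - D ≤ (#{w ∈ U | G.Adj u w} : ℝ) := by
      intro u hu
      have := hD u (hS hu)
      have h3 : (#{w ∈ U | G.Adj u w} : ℝ) + #{w ∈ U | ¬ G.Adj u w} = m := by
        rw [hm]; exact_mod_cast Finset.card_filter_add_card_filter_not (s := U) (G.Adj u)
      linarith
    rw [h1]
    have h4 := Finset.card_nsmul_le_sum _ _ _ h2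
    rw [hcl.card_eq, nsmul_eq_mul] at h4
    push_cast at h4
    exact h4
  have hpt : ∀ w ∈ U, ((r : ℝ) - 1) * (r - 2) + 2 * (r - 1) * (#{u ∈ S | G.Adj u w} - (r - 1)) ≤
      (#{u ∈ S | G.Adj u w} : ℝ) * #{u ∈ S | G.Adj u w} - #{u ∈ S | G.Adj u w} := by
    intro w _
    have hint : (0 : ℝ) ≤ ((#{u ∈ S | G.Adj u w} : ℝ) - r) * (#{u ∈ S | G.Adj u w} - r + 1) := by
      rcases le_or_gt r (#{u ∈ S | G.Adj u w}) with h | h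
      · have : (r : ℝ) ≤ #{u ∈ S | G.Adj u w} := by exact_mod_cast h
        nlinarith
      · have : (#{u ∈ S | G.Adj u w} : ℝ) + 1 ≤ r := by exact_mod_cast h
        nlinarith
    nlinarith
  have hsum := Finset.sum_le_sum hpt
  rw [← hdc] at hsum
  have hlhs : ∑ w ∈ U, (((r : ℝ) - 1) * (r - 2) +
      2 * (r - 1) * (#{u ∈ S | G.Adj u w} - (r - 1))) =
      m * ((r - 1) * (r - 2)) + 2 * (r - 1) * (∑ w ∈ U, (#{u ∈ S | G.Adj u w} : ℝ)
        - m * (r - 1)) := by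
    rw [Finset.sum_add_distrib, Finset.sum_const, nsmul_eq_mul, ← Finset.mul_sum,
      Finset.sum_sub_distrib, Finset.sum_const, nsmul_eq_mul, ← hm]
  rw [hlhs] at hsum
  have hbig : ∑ p ∈ S.offDiag, ((r : ℝ) - 1) * ((r + 2) * m - 2 * (r + 1) * D) / (r * (r + 1)) ≤
      ∑ p ∈ S.offDiag, (#{w ∈ U | G.Adj p.1 w ∧ G.Adj p.2 w} : ℝ) := by
    rw [Finset.sum_const, nsmul_eq_mul, hcardoff, mul_div_cancel₀ _ (by positivity)]
    have : (r - 1 : ℝ) * ((r + 1) * (m - D)) ≤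
        (r - 1) * ∑ w ∈ U, (#{u ∈ S | G.Adj u w} : ℝ) :=
      mul_le_mul_of_nonneg_left hdeg (by linarith)
    linarith
  obtain ⟨p, hp, hle⟩ := Finset.exists_le_of_sum_le hne hbig
  rw [Finset.mem_offDiag] at hp
  exact ⟨p.1, hp.1, p.2, hp.2.1, hcl.isClique hp.1 hp.2.1 hp.2.2, hle⟩

open scoped Classical in
/-- One extension step. Each tuple `τ j`, `j ∈ J`, extends in at least `κ |U|` ways, so many
vertices `w` extend at least a `κ / 2` fraction of the tuples, and by the pigeonhole principle
many of them extend exactly the same ones. -/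
theorem extension_step {V : Type*} (U : Finset V) (P : ℕ → (ℕ → V) → Prop)
    (k : ℕ) (κ : ℝ) (hκ : 0 < κ) (hU : U.Nonempty)
    (hext : ∀ τ, P k τ → κ * #U ≤ #{w ∈ U | P (k + 1) (Function.update τ k w)})
    (J : Finset ℕ) (hJ : J.Nonempty) (τ : ℕ → ℕ → V) (hP : ∀ j ∈ J, P k (τ j)) (q : ℕ)
    (hq : (q : ℝ) ≤ κ / 2 * #J) :
    ∃ J' ⊆ J, #J' = q ∧ ∃ W ⊆ U, κ / 2 * #U / 2 ^ #J ≤ (#W : ℝ) ∧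
      ∀ w ∈ W, ∀ j ∈ J', P (k + 1) (Function.update (τ j) k w) := by
  let Jw : V → Finset ℕ := fun w => {j ∈ J | P (k + 1) (Function.update (τ j) k w)}
  let H : Finset V := {w ∈ U | q ≤ #(Jw w)}
  have hJpos : (0 : ℝ) < #J := by exact_mod_cast hJ.card_pos
  have hsum : (#J : ℝ) * (κ * #U) ≤ ∑ w ∈ U, (#(Jw w) : ℝ) := by
    have h1 : ∑ w ∈ U, (#(Jw w) : ℝ) =
        ∑ j ∈ J, (#{w ∈ U | P (k + 1) (Function.update (τ j) k w)} : ℝ) := by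
      simp only [Jw, ← Finset.sum_boole]
      exact Finset.sum_comm
    rw [h1, ← nsmul_eq_mul]
    exact Finset.card_nsmul_le_sum _ _ _ fun j hj => hext (τ j) (hP j hj)
  have hup : ∑ w ∈ U, (#(Jw w) : ℝ) ≤ #H * #J + #U * (κ / 2 * #J) := by
    have h1 : ∀ w ∈ U, (#(Jw w) : ℝ) ≤ (if q ≤ #(Jw w) then (#J : ℝ) else 0) + κ / 2 * #J := by
      intro w _
      have hle : (#(Jw w) : ℝ) ≤ #J := by
        exact_mod_cast Finset.card_le_card (Finset.filter_subset _ _)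
      have hq0 : (0 : ℝ) ≤ q := Nat.cast_nonneg _
      split_ifs with h
      · linarith
      · have : (#(Jw w) : ℝ) ≤ q := by exact_mod_cast (not_le.1 h).le
        linarith
    refine (Finset.sum_le_sum h1).trans (le_of_eq ?_)
    rw [Finset.sum_add_distrib, ← Finset.sum_filter, Finset.sum_const, Finset.sum_const,
      nsmul_eq_mul, nsmul_eq_mul]
  have hH : κ / 2 * #U ≤ (#H : ℝ) := by
    have : (#J : ℝ) * (κ / 2 * #U) ≤ #J * #H := by linarith
    exact le_of_mul_le_mul_left this hJpos
  have hHne : H.Nonempty := by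
    rw [← Finset.card_pos]
    have h1 : (0 : ℝ) < #U := by exact_mod_cast hU.card_pos
    have h2 : (0 : ℝ) < #H := lt_of_lt_of_le (by positivity) hH
    exact_mod_cast h2
  have hmaps : ∀ w ∈ H, Jw w ∈ {J' ∈ J.powerset | q ≤ #J'} := fun w hw =>
    Finset.mem_filter.2 ⟨Finset.mem_powerset.2 (Finset.filter_subset _ _),
      (Finset.mem_filter.1 hw).2⟩
  obtain ⟨J₀, hJ₀, hfib⟩ := Finset.exists_le_card_fiber_of_nsmul_le_card_of_maps_to
    (b := κ / 2 * #U / 2 ^ #J) hmaps ⟨_, hmaps _ hHne.choose_spec⟩ (by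
      rw [nsmul_eq_mul]
      have hc : (#{J' ∈ J.powerset | q ≤ #J'} : ℝ) ≤ 2 ^ #J := by
        have := Finset.card_le_card (Finset.filter_subset (fun J' => q ≤ #J') J.powerset)
        rw [Finset.card_powerset] at this
        exact_mod_cast this
      calc _ ≤ (2 : ℝ) ^ #J * (κ / 2 * #U / 2 ^ #J) := by gcongr
        _ = κ / 2 * #U := mul_div_cancel₀ _ (by positivity)
        _ ≤ _ := hH)
  rw [Finset.mem_filter, Finset.mem_powerset] at hJ₀
  obtain ⟨J', hJ', hc⟩ := Finset.exists_subset_card_eq hJ₀.2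
  refine ⟨J', hJ'.trans hJ₀.1, hc, H.filter (fun w => Jw w = J₀), ?_, hfib, ?_⟩
  · exact (Finset.filter_subset _ _).trans (Finset.filter_subset _ _)
  · intro w hw j hj
    have := hJ' hj
    rw [← (Finset.mem_filter.1 hw).2] at this
    exact (Finset.mem_filter.1 this).2

/-- Disjoint tuples, any two of which are adjacent across different positions: their columns are
the parts of a complete multipartite graph. -/
structure CrossAdjacent {V : Type*} (G : SimpleGraph V) (k : ℕ) (J : Finset ℕ)
    (τ : ℕ → ℕ → V) : Prop where
  adj : ∀ j ∈ J, ∀ j' ∈ J, ∀ i < k, ∀ i' < k, i ≠ i' → G.Adj (τ j i) (τ j' i')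
  inj : ∀ i < k, ∀ j ∈ J, ∀ j' ∈ J, τ j i = τ j' i → j = j'

open scoped Classical in
/-- Iterating the extension step, with the number of tuples divided by `M` each time. -/
theorem exists_crossAdjacent {V : Type*} [Nonempty V] (G : SimpleGraph V) (U : Finset V)
    (P : ℕ → (ℕ → V) → Prop) (r : ℕ) (κ : ℝ) (hκ : 0 < κ) (hU : U.Nonempty)
    (hP0 : ∀ τ, P 0 τ)
    (hadj : ∀ k τ, P (k + 1) τ → ∀ i < k, G.Adj (τ i) (τ k))
    (hext : ∀ k < r, ∀ τ, P k τ →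
      κ * #U ≤ #{w ∈ U | P (k + 1) (Function.update τ k w)})
    (s M : ℕ) (hs : 0 < s) (hM : 2 ≤ κ * M)
    (hlarge : (s * M ^ r : ℕ) ≤ κ / 2 * #U / 2 ^ (s * M ^ r)) :
    ∀ k < r, ∃ (J : Finset ℕ) (τ : ℕ → ℕ → V), #J = s * M ^ (r - k) ∧ (∀ j ∈ J, P k (τ j)) ∧
      CrossAdjacent G k J τ := by
  have hM0 : 0 < M := by
    rcases Nat.eq_zero_or_pos M with h | h
    · subst h; norm_num at hM
    · exact h
  intro k
  induction k with
  | zero =>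
    intro _
    exact ⟨range (s * M ^ r), fun _ _ => Classical.arbitrary V, by simp, fun j _ => hP0 _,
      ⟨by simp, by simp⟩⟩
  | succ k ih =>
    intro hk
    obtain ⟨J, τ, hJc, hP, hX⟩ := ih (by omega)
    have hpow : s * M ^ (r - k) = s * M ^ (r - (k + 1)) * M := by
      rw [mul_assoc, ← pow_succ]; congr 2; omega
    obtain ⟨J', hJ'J, hJ'c, W, hWU, hWc, hW⟩ := extension_step U P k κ hκ hU
      (hext k (by omega)) J (by rw [← Finset.card_pos, hJc]; positivity) τ hP
      (s * M ^ (r - (k + 1))) (by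
        rw [hJc, hpow]
        push_cast
        have : (0 : ℝ) ≤ s * M ^ (r - (k + 1)) := by positivity
        nlinarith)
    have hle : ∀ k, s * M ^ (r - k) ≤ s * M ^ r := fun k =>
      Nat.mul_le_mul_left _ (Nat.pow_le_pow_right hM0 (by omega))
    have hJW : #J' ≤ #W := by
      have h1 : κ / 2 * #U / 2 ^ (s * M ^ r) ≤ κ / 2 * #U / (2 : ℝ) ^ #J := by
        gcongr
        · norm_num
        · rw [hJc]; exact hle k
      have h2 : (#J' : ℝ) ≤ (s * M ^ r : ℕ) := by
        rw [hJ'c]; exact_mod_cast hle (k + 1)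
      exact_mod_cast h2.trans (hlarge.trans (h1.trans hWc))
    obtain ⟨W', hW'W, hW'c⟩ := Finset.exists_subset_card_eq hJW
    let e := Finset.equivOfCardEq hW'c.symm
    let g : ℕ → V := fun j => if h : j ∈ J' then e ⟨j, h⟩ else Classical.arbitrary V
    have hgW : ∀ j ∈ J', g j ∈ W := by
      intro j hj
      simp only [g, hj, dif_pos]
      exact hW'W (e ⟨j, hj⟩).2
    have hginj : ∀ j ∈ J', ∀ j' ∈ J', g j = g j' → j = j' := by
      intro j hj j' hj' h
      simp only [g, hj, hj', dif_pos] at h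
      have := e.injective (Subtype.ext h)
      simpa using this
    have hcross : ∀ j ∈ J', ∀ j' ∈ J', ∀ i < k, G.Adj (τ j i) (g j') := by
      intro j hj j' hj' i hi
      have := hadj k _ (hW _ (hgW j' hj') j hj) i hi
      rwa [Function.update_self, Function.update_of_ne hi.ne] at this
    refine ⟨J', fun j => Function.update (τ j) k (g j), hJ'c,
      fun j hj => hW _ (hgW j hj) j hj, ⟨?_, ?_⟩⟩
    · intro j hj j' hj' i hi i' hi' hne
      rcases Nat.lt_succ_iff_lt_or_eq.1 hi with hik | rfl
      · rcases Nat.lt_succ_iff_lt_or_eq.1 hi' with hik' | rfl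
        · rw [Function.update_of_ne hik.ne, Function.update_of_ne hik'.ne]
          exact hX.adj j (hJ'J hj) j' (hJ'J hj') i hik i' hik' hne
        · rw [Function.update_of_ne hne, Function.update_self]
          exact hcross j hj j' hj' i hik
      · rcases Nat.lt_succ_iff_lt_or_eq.1 hi' with hik' | h
        · rw [Function.update_of_ne hne.symm, Function.update_self]
          exact (hcross j' hj' j hj i' hik').symm
        · exact absurd h.symm hne
    · intro i hi j hj j' hj' h
      rcases Nat.lt_succ_iff_lt_or_eq.1 hi with hik | rfl
      · rw [Function.update_of_ne hik.ne, Function.update_of_ne hik.ne] at h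
        exact hX.inj i hik j (hJ'J hj) j' (hJ'J hj') h
      · rw [Function.update_self, Function.update_self] at h
        exact hginj j hj j' hj' h


/-! ### Good tuples and the parts of the multipartite graph -/

open scoped Classical in
/-- Union bound: `k` vertices with at most `D` non-neighbours each. -/
theorem card_common_ge {V : Type*} (G : SimpleGraph V) (U A : Finset V) (hA : A ⊆ U) (D : ℝ)
    (hD : ∀ u ∈ U, (#{w ∈ U | ¬ G.Adj u w} : ℝ) ≤ D) (τ : ℕ → V) (k : ℕ)
    (hτ : ∀ i < k, τ i ∈ U) :
    (#A : ℝ) - k * D ≤ #{y ∈ A | ∀ i < k, G.Adj (τ i) y} := by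
  induction k with
  | zero => simp
  | succ k ih =>
    have h1 := ih fun i hi => hτ i (by omega)
    have h2 := hD _ (hτ k (by omega))
    have h3 : {y ∈ A | ∀ i < k, G.Adj (τ i) y} ⊆
        {y ∈ A | ∀ i < k + 1, G.Adj (τ i) y} ∪ {w ∈ U | ¬ G.Adj (τ k) w} := by
      intro y hy
      rw [Finset.mem_filter] at hy
      rw [Finset.mem_union, Finset.mem_filter, Finset.mem_filter]
      by_cases h : G.Adj (τ k) y
      · refine Or.inl ⟨hy.1, fun i hi => ?_⟩
        rcases Nat.lt_succ_iff_lt_or_eq.1 hi with hi | rfl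
        · exact hy.2 i hi
        · exact h
      · exact Or.inr ⟨hA hy.1, h⟩
    have h4 : (#{y ∈ A | ∀ i < k, G.Adj (τ i) y} : ℝ) ≤
        #{y ∈ A | ∀ i < k + 1, G.Adj (τ i) y} + #{w ∈ U | ¬ G.Adj (τ k) w} := by
      exact_mod_cast (Finset.card_le_card h3).trans (Finset.card_union_le _ _)
    push_cast
    linarith

open scoped Classical in
/-- The first `k` entries of `τ` are pairwise adjacent and, apart from position `q`, lie in `N`.
Once the entries `0, …, q` are chosen, at least `b` vertices of `N` are adjacent to all of
them. -/
structure GoodTuple {V : Type*} (G : SimpleGraph V) (N : Finset V) (q : ℕ) (b : ℝ) (k : ℕ)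
    (τ : ℕ → V) : Prop where
  mem : ∀ i < k, i ≠ q → τ i ∈ N
  adj : ∀ i < k, ∀ j < k, i < j → G.Adj (τ i) (τ j)
  card : k = q + 1 → b ≤ #{y ∈ N | ∀ i < q + 1, G.Adj (τ i) y}

open scoped Classical in
theorem GoodTuple.update {V : Type*} {G : SimpleGraph V} {N : Finset V} {q : ℕ} {b : ℝ} {k : ℕ}
    {τ : ℕ → V} (h : GoodTuple G N q b k τ) (w : V) (hw : k ≠ q → w ∈ N)
    (hadj : ∀ i < k, G.Adj (τ i) w)
    (hcard : k = q → b ≤ #{y ∈ N | (∀ i < q, G.Adj (τ i) y) ∧ G.Adj w y}) :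
    GoodTuple G N q b (k + 1) (Function.update τ k w) := by
  refine ⟨fun i hi hiq => ?_, fun i hi j hj hij => ?_, fun hk => ?_⟩
  · rcases Nat.lt_succ_iff_lt_or_eq.1 hi with hi | rfl
    · rw [Function.update_of_ne hi.ne]; exact h.mem i hi hiq
    · rw [Function.update_self]; exact hw hiq
  · rw [Function.update_of_ne (by omega : i ≠ k)]
    rcases Nat.lt_succ_iff_lt_or_eq.1 hj with hj | rfl
    · rw [Function.update_of_ne hj.ne]; exact h.adj i (by omega) j hj hij
    · rw [Function.update_self]; exact hadj i hij
  · obtain rfl : k = q := by omega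
    refine (hcard rfl).trans ?_
    have : ∀ y, (∀ i < k + 1, G.Adj (Function.update τ k w i) y) ↔
        (∀ i < k, G.Adj (τ i) y) ∧ G.Adj w y := by
      intro y
      constructor
      · intro hy
        refine ⟨fun i hi => ?_, ?_⟩
        · have := hy i (by omega)
          rwa [Function.update_of_ne hi.ne] at this
        · have := hy k (by omega)
          rwa [Function.update_self] at this
      · rintro ⟨hy, hwy⟩ i hi
        rcases Nat.lt_succ_iff_lt_or_eq.1 hi with hi | rfl
        · rw [Function.update_of_ne hi.ne]; exact hy i hi
        · rw [Function.update_self]; exact hwy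
    refine Nat.cast_le.2 (Finset.card_le_card fun y hy => ?_)
    rw [Finset.mem_filter] at hy ⊢
    exact ⟨hy.1, (this y).2 hy.2⟩

open scoped Classical in
/-- Every good tuple extends in at least `κ |U|` ways. At position `q` this is double counting:
the common neighbourhood `Y` of the previous entries inside `N` is large, and each `y ∈ Y` has
many common neighbours with these entries, so many candidates `w` have many neighbours in
`Y`. -/
theorem GoodTuple.card_extensions {V : Type*} (G : SimpleGraph V) (U N : Finset V) (hNU : N ⊆ U)
    (D : ℝ) (hD0 : 0 ≤ D) (hD : ∀ u ∈ U, (#{w ∈ U | ¬ G.Adj u w} : ℝ) ≤ D) (q : ℕ)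
    (κ η β : ℝ) (hκ : 0 < κ) (hκη : κ ≤ η) (hκβ : κ ≤ β) (hβ : κ ≤ (β - κ) * η)
    (hU : U.Nonempty) (hN : η * #U ≤ #N - q * D) (hUD : β * #U ≤ #U - (q + 1) * D) (k : ℕ)
    (hk : k < q + 2) (τ : ℕ → V) (hτ : GoodTuple G N q (κ * #U) k τ) :
    κ * #U ≤ #{w ∈ U | GoodTuple G N q (κ * #U) (k + 1) (Function.update τ k w)} := by
  have hm : (0 : ℝ) < #U := by exact_mod_cast hU.card_pos
  rcases lt_trichotomy k q with hkq | rfl | hkq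
  · have h1 := card_common_ge G U N hNU D hD τ k fun i hi => hNU (hτ.mem i hi (by omega))
    have h2 : (#{y ∈ N | ∀ i < k, G.Adj (τ i) y} : ℝ) ≤
        #{w ∈ U | GoodTuple G N q (κ * #U) (k + 1) (Function.update τ k w)} := by
      refine Nat.cast_le.2 (Finset.card_le_card fun y hy => ?_)
      rw [Finset.mem_filter] at hy
      exact Finset.mem_filter.2 ⟨hNU hy.1, hτ.update y (fun _ => hy.1) hy.2 (by omega)⟩
    have h3 : (k : ℝ) * D ≤ q * D := by gcongr
    have h4 : κ * #U ≤ η * #U := by gcongr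
    linarith
  · set Y := {y ∈ N | ∀ i < k, G.Adj (τ i) y} with hY
    set C := {w ∈ U | ∀ i < k, G.Adj (τ i) w} with hC
    have hτU : ∀ i < k, τ i ∈ U := fun i hi => hNU (hτ.mem i hi (by omega))
    have hYc : η * #U ≤ #Y := hN.trans (card_common_ge G U N hNU D hD τ k hτU)
    have hyC : ∀ y ∈ Y, β * #U ≤ (#{w ∈ C | G.Adj w y} : ℝ) := by
      intro y hy
      have hyN := (Finset.mem_filter.1 hy).1
      have h1 := card_common_ge G U U subset_rfl D hD (Function.update τ k y) (k + 1) (by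
        intro i hi
        rcases Nat.lt_succ_iff_lt_or_eq.1 hi with hi | rfl
        · rw [Function.update_of_ne hi.ne]; exact hτU i hi
        · rw [Function.update_self]; exact hNU hyN)
      push_cast at h1
      refine hUD.trans (h1.trans (Nat.cast_le.2 (Finset.card_le_card fun w hw => ?_)))
      rw [Finset.mem_filter] at hw
      rw [Finset.mem_filter, hC, Finset.mem_filter]
      refine ⟨⟨hw.1, fun i hi => ?_⟩, ?_⟩
      · have := hw.2 i (by omega)
        rwa [Function.update_of_ne hi.ne] at this
      · have := hw.2 k (by omega)
        rw [Function.update_self] at this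
        exact this.symm
    have hdc : ∑ w ∈ C, (#{y ∈ Y | G.Adj w y} : ℝ) = ∑ y ∈ Y, (#{w ∈ C | G.Adj w y} : ℝ) := by
      simp only [← Finset.sum_boole]
      exact Finset.sum_comm
    have hlow : (#Y : ℝ) * (β * #U) ≤ ∑ w ∈ C, (#{y ∈ Y | G.Adj w y} : ℝ) := by
      rw [hdc, ← nsmul_eq_mul]
      exact Finset.card_nsmul_le_sum _ _ _ hyC
    set H := {w ∈ C | κ * #U ≤ (#{y ∈ Y | G.Adj w y} : ℝ)} with hH
    have hup : ∑ w ∈ C, (#{y ∈ Y | G.Adj w y} : ℝ) ≤ #H * #Y + #U * (κ * #U) := by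
      have h1 : ∀ w ∈ C, (#{y ∈ Y | G.Adj w y} : ℝ) ≤
          (if κ * #U ≤ (#{y ∈ Y | G.Adj w y} : ℝ) then (#Y : ℝ) else 0) + κ * #U := by
        intro w _
        have hle : (#{y ∈ Y | G.Adj w y} : ℝ) ≤ #Y := by
          exact_mod_cast Finset.card_le_card (Finset.filter_subset _ _)
        have : 0 < κ * #U := by positivity
        split_ifs with h
        · linarith
        · linarith [not_le.1 h]
      refine (Finset.sum_le_sum h1).trans ?_
      rw [Finset.sum_add_distrib, ← Finset.sum_filter, Finset.sum_const, Finset.sum_const,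
        nsmul_eq_mul, nsmul_eq_mul]
      have : (#C : ℝ) ≤ #U := by
        exact_mod_cast Finset.card_le_card (Finset.filter_subset _ _)
      gcongr
    have hHU : (#H : ℝ) ≤
        #{w ∈ U | GoodTuple G N k (κ * #U) (k + 1) (Function.update τ k w)} := by
      refine Nat.cast_le.2 (Finset.card_le_card fun w hw => ?_)
      rw [hH, Finset.mem_filter, hC, Finset.mem_filter] at hw
      refine Finset.mem_filter.2 ⟨hw.1.1, hτ.update w (fun h => absurd rfl h) hw.1.2 fun _ => ?_⟩
      rw [hY, Finset.filter_filter] at hw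
      exact hw.2
    have hYpos : (0 : ℝ) < #Y := lt_of_lt_of_le (mul_pos (hκ.trans_le hκη) hm) hYc
    have h1 : (#U : ℝ) * (κ * #U) ≤ (β - κ) * #U * #Y :=
      calc (#U : ℝ) * (κ * #U) ≤ #U * ((β - κ) * η * #U) := by gcongr
        _ = (β - κ) * #U * (η * #U) := by ring
        _ ≤ (β - κ) * #U * #Y := by
          have : 0 ≤ (β - κ) * #U := mul_nonneg (by linarith) hm.le
          gcongr
    have h2 : κ * #U * #Y ≤ #H * #Y := by linarith
    exact (le_of_mul_le_mul_right h2 hYpos).trans hHU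
  · obtain rfl : k = q + 1 := by omega
    refine (hτ.card rfl).trans (Nat.cast_le.2 (Finset.card_le_card fun y hy => ?_))
    rw [Finset.mem_filter] at hy
    exact Finset.mem_filter.2 ⟨hNU hy.1, hτ.update y (fun _ => hy.1) hy.2 (by omega)⟩

open scoped Classical in
/-- The columns of a large family of good tuples. -/
theorem exists_columns {V : Type*} (G : SimpleGraph V) (U N : Finset V) (hNU : N ⊆ U)
    (D : ℝ) (hD0 : 0 ≤ D)
    (hD : ∀ u ∈ U, (#{w ∈ U | ¬ G.Adj u w} : ℝ) ≤ D) (q : ℕ)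
    (κ η β : ℝ) (hκ : 0 < κ) (hκη : κ ≤ η) (hκβ : κ ≤ β) (hβ : κ ≤ (β - κ) * η)
    (hU : U.Nonempty) (hN : η * #U ≤ #N - q * D) (hUD : β * #U ≤ #U - (q + 1) * D)
    (s M : ℕ) (y : ℝ) (hs : 0 < s) (hM : 2 ≤ κ * M)
    (hlarge : (s * M ^ (q + 2) : ℕ) ≤ κ / 2 * #U / 2 ^ (s * M ^ (q + 2)))
    (hy : y ≤ κ / 2 * #U / 2 ^ (s * M ^ (q + 2))) :
    ∃ B : ℕ → Finset V, (∀ i < q + 1, #(B i) = s) ∧ #(B (q + 1)) = ⌈y⌉₊ ∧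
      (∀ i < q + 2, i ≠ q → B i ⊆ N) ∧
      ∀ i < q + 2, ∀ j < q + 2, i ≠ j → ∀ x ∈ B i, ∀ y ∈ B j, G.Adj x y := by
  have : Nonempty V := ⟨hU.choose⟩
  have hM0 : 0 < M := by
    rcases Nat.eq_zero_or_pos M with h | h
    · subst h; norm_num at hM
    · exact h
  have hext := GoodTuple.card_extensions G U N hNU D hD0 hD q κ η β hκ hκη hκβ hβ hU hN hUD
  obtain ⟨J, τ, hJc, hP, hX⟩ := exists_crossAdjacent G U (GoodTuple G N q (κ * #U)) (q + 2) κ hκ hU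
    (fun τ => ⟨by simp, by simp, by simp⟩)
    (fun k τ h i hi => h.adj i (by omega) k (by omega) hi)
    hext s M hs hM hlarge (q + 1) (by omega)
  have hJc' : #J = s * M := by rw [hJc, show q + 2 - (q + 1) = 1 by omega, pow_one]
  obtain ⟨J', hJ'J, hJ'c, W, hWU, hWc, hW⟩ := extension_step U (GoodTuple G N q (κ * #U)) (q + 1)
    κ hκ hU (hext (q + 1) (by omega)) J (by rw [← Finset.card_pos, hJc']; positivity) τ hP s (by
      rw [hJc']
      push_cast
      have : (0 : ℝ) ≤ s := by positivity
      nlinarith)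
  have hJZ : #J ≤ s * M ^ (q + 2) := by
    rw [hJc]
    exact Nat.mul_le_mul_left _ (Nat.pow_le_pow_right hM0 (by omega))
  have hyW : ⌈y⌉₊ ≤ #W := by
    refine Nat.ceil_le.2 (hy.trans (le_trans ?_ hWc))
    gcongr
    norm_num
  obtain ⟨W', hW'W, hW'c⟩ := Finset.exists_subset_card_eq hyW
  have hJ'ne : J'.Nonempty := by rw [← Finset.card_pos, hJ'c]; exact hs
  refine ⟨fun i => if i = q + 1 then W' else J'.image fun j => τ j i, fun i hi => ?_, ?_,
    fun i hi hiq x hx => ?_, fun i hi j hj hij x hx y hy => ?_⟩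
  · dsimp only
    rw [if_neg hi.ne, Finset.card_image_of_injOn, hJ'c]
    intro j hj j' hj' h
    exact hX.inj i hi j (hJ'J hj) j' (hJ'J hj') h
  · dsimp only
    rw [if_pos rfl, hW'c]
  · obtain ⟨j₀, hj₀⟩ := hJ'ne
    dsimp only at hx
    split_ifs at hx with h
    · have := (hW x (hW'W hx) j₀ hj₀).mem (q + 1) (by omega) (by omega)
      rwa [Function.update_self] at this
    · obtain ⟨j, hj, rfl⟩ := Finset.mem_image.1 hx
      exact (hP j (hJ'J hj)).mem i (by omega) hiq
  · have key : ∀ i < q + 1, ∀ j ∈ J', ∀ w ∈ W', G.Adj (τ j i) w := by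
      intro i hi j hj w hw
      have := (hW w (hW'W hw) j hj).adj i (by omega) (q + 1) (by omega) hi
      rwa [Function.update_self, Function.update_of_ne hi.ne] at this
    dsimp only at hx hy
    split_ifs at hx hy with h1 h2 h2
    · omega
    · obtain ⟨j', hj', rfl⟩ := Finset.mem_image.1 hy
      exact (key j (by omega) j' hj' x hx).symm
    · obtain ⟨j', hj', rfl⟩ := Finset.mem_image.1 hx
      exact key i (by omega) j' hj' y hy
    · obtain ⟨j', hj', rfl⟩ := Finset.mem_image.1 hx
      obtain ⟨k', hk', rfl⟩ := Finset.mem_image.1 hy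
      exact hX.adj j' (hJ'J hj') k' (hJ'J hk') i (by omega) j (by omega) hij

/-- The extra edge `uv` is placed in the column `q`; all the other columns lie in the common
neighbourhood of `u` and `v`. -/
theorem containsKPartitePlus_of_columns {V : Type*} (G : SimpleGraph V) (q s t : ℕ) (hs : 2 ≤ s)
    (u v : V) (huv : G.Adj u v) (B : ℕ → Finset V) (hBs : ∀ i < q + 1, #(B i) = s)
    (hBt : #(B (q + 1)) = t)
    (hBN : ∀ i < q + 2, i ≠ q → ∀ y ∈ B i, G.Adj u y ∧ G.Adj v y)
    (hB : ∀ i < q + 2, ∀ j < q + 2, i ≠ j → ∀ x ∈ B i, ∀ y ∈ B j, G.Adj x y) :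
    G.ContainsKPartitePlus (fun i : Fin (q + 2) => if (i : ℕ) < q + 2 - 1 then s else t)
      ⟨0, by omega⟩ := by
  classical
  obtain ⟨A₀, h1, h2, hA₀⟩ := Finset.exists_subsuperset_card_eq
    (Finset.subset_union_right : ({u, v} : Finset V) ⊆ B q ∪ {u, v})
    (Finset.card_le_two.trans hs)
    (by rw [← hBs q (by omega)]; exact Finset.card_le_card Finset.subset_union_left)
  let σ : ℕ → ℕ := fun i => if i = 0 then q else if i < q + 1 then i - 1 else q + 1
  have hσ : ∀ i < q + 2, σ i < q + 2 := by intro i hi; grind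
  have hσq : ∀ i < q + 2, i ≠ 0 → σ i ≠ q := by intro i hi; grind
  have hσi : ∀ i < q + 2, ∀ j < q + 2, i ≠ j → σ i ≠ σ j := by intro i hi j hj; grind
  let A : Fin (q + 2) → Finset V := fun i => if (i : ℕ) = 0 then A₀ else B (σ i)
  have hA0 : ∀ j < q + 2, j ≠ 0 → ∀ x ∈ A₀, ∀ y ∈ B (σ j), G.Adj x y := by
    intro j hj hj0 x hx y hy
    have huvy := hBN _ (hσ j hj) (hσq j hj hj0) y hy
    have hx' := h2 hx
    simp only [Finset.mem_union, Finset.mem_insert, Finset.mem_singleton] at hx'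
    rcases hx' with hx' | rfl | rfl
    · exact hB q (by omega) _ (hσ j hj) (hσq j hj hj0).symm x hx' y hy
    · exact huvy.1
    · exact huvy.2
  have hAadj : ∀ i j, i ≠ j → ∀ x ∈ A i, ∀ y ∈ A j, G.Adj x y := by
    intro i j hij x hx y hy
    have hij' : (i : ℕ) ≠ j := fun h => hij (Fin.ext h)
    simp only [A] at hx hy
    split_ifs at hx hy with hi hj hj
    · omega
    · exact hA0 j j.2 hj x hx y hy
    · exact (hA0 i i.2 hi y hy x hx).symm
    · exact hB _ (hσ i i.2) _ (hσ j j.2) (hσi i i.2 j j.2 hij') x hx y hy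
  refine ⟨A, fun i j hij => ?_, fun i => ?_, hAadj, u, ?_, v, ?_, huv.ne, huv⟩
  · refine Finset.disjoint_left.2 ?_
    exact fun x hx hx' => G.irrefl (hAadj i j hij x hx x hx')
  · have := i.2
    simp only [A]
    split_ifs with h h' h'
    · exact hA₀
    · omega
    · exact hBs _ (by grind)
    · have : σ i = q + 1 := by grind
      rw [this, hBt]
  · exact h1 (by simp)
  · exact h1 (by simp)

/-! ### Numerical estimates -/

/-- Here `Z` is the number of tuples at the start of the iteration. In `4 ^ Z` one factor `2 ^ Z` is
the loss in the pigeonhole principle and the other one absorbs `Z`. -/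
theorem size_estimates (r n : ℕ) (hr : 2 ≤ r) (hn : 2 ≤ n) (c : ℝ)
    (hc1 : 2 / Real.log n ≤ c) (hc2 : c ≤ ((r : ℝ) ^ ((2 * r + 9) * (r + 1)))⁻¹) (s Z : ℕ)
    (hs : s = ⌊c * Real.log n⌋₊) (hZ : Z = s * (16 * r ^ 4) ^ r) :
    2 ≤ s ∧ 64 * r ^ 8 < n ∧ 64 * (r : ℝ) ^ 8 * 4 ^ Z ≤ (n : ℝ) ^ Real.sqrt c ∧
      Real.sqrt c ≤ 1 := by
  have hr2 : (2 : ℝ) ≤ r := by exact_mod_cast hr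
  have hn2 : (2 : ℝ) ≤ n := by exact_mod_cast hn
  obtain ⟨L, hL⟩ : ∃ L, L = Real.log n := ⟨_, rfl⟩
  rw [← hL] at hc1 hs
  have hLpos : 0 < L := by rw [hL]; exact Real.log_pos (by linarith)
  have hcL : 2 ≤ c * L := by rwa [div_le_iff₀ hLpos] at hc1
  have hcpos : 0 < c := by
    by_contra h
    have := mul_nonpos_of_nonpos_of_nonneg (not_lt.1 h) hLpos.le
    linarith
  obtain ⟨x, hx⟩ : ∃ x, x = Real.sqrt c := ⟨_, rfl⟩
  rw [← hx]
  have hxpos : 0 < x := by rw [hx]; exact Real.sqrt_pos.2 hcpos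
  have hxx : x * x = c := by rw [hx]; exact Real.mul_self_sqrt hcpos.le
  -- `2 (8 r + 3) ≤ (2 r + 9) (r + 1)` is `(r - 1) (2 r - 3) ≥ 0`.
  have hexp : 2 * (8 * r + 3) ≤ (2 * r + 9) * (r + 1) := by
    obtain ⟨q, rfl⟩ : ∃ q, r = q + 2 := ⟨r - 2, by omega⟩
    nlinarith
  obtain ⟨K, hK⟩ : ∃ K : ℝ, K = (r : ℝ) ^ (8 * r + 3) := ⟨_, rfl⟩
  have hKpos : 0 < K := by rw [hK]; positivity
  have hxK : x * K ≤ 1 := by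
    have h1 : K ^ 2 ≤ (r : ℝ) ^ ((2 * r + 9) * (r + 1)) := by
      rw [hK, ← pow_mul]
      exact pow_le_pow_right₀ (by linarith) (by linarith)
    have h2 : c * K ^ 2 ≤ 1 := by
      have h3 : c * (r : ℝ) ^ ((2 * r + 9) * (r + 1)) ≤ 1 := by
        rwa [← le_div_iff₀ (by positivity), one_div]
      exact le_trans (by gcongr) h3
    have h4 : (x * K) ^ 2 ≤ 1 ^ 2 := by nlinarith
    exact (pow_le_pow_iff_left₀ (by positivity) zero_le_one two_ne_zero).1 h4
  have hxL : 2 * K ≤ x * L := by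
    have h1 : 2 ≤ x * (x * L) := by nlinarith
    have h2 : 2 * K ≤ x * K * (x * L) := by nlinarith
    have h3 : 0 < x * L := by positivity
    nlinarith
  have hr8 : 64 * (r : ℝ) ^ 8 ≤ x * L / 64 := by
    have h1 : (r : ℝ) ^ 19 ≤ K := by
      rw [hK]; exact pow_le_pow_right₀ (by linarith) (by omega)
    have h2 : (2 : ℝ) ^ 11 ≤ (r : ℝ) ^ 11 := by gcongr
    have h3 : (r : ℝ) ^ 19 = r ^ 11 * r ^ 8 := by ring
    have h4 : (2 : ℝ) ^ 11 * (r : ℝ) ^ 8 ≤ r ^ 11 * r ^ 8 := by gcongr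
    norm_num at h4
    linarith
  have hx1 : x ≤ 1 := by
    have : 1 ≤ K := by rw [hK]; exact one_le_pow₀ (by linarith)
    nlinarith
  have hZle : (Z : ℝ) ≤ x * L / 8 := by
    have h1 : (s : ℝ) ≤ c * L := by rw [hs]; exact Nat.floor_le (by positivity)
    have h2 : (16 * (r : ℝ) ^ 4) ^ r ≤ (r : ℝ) ^ (8 * r) := by
      rw [pow_mul]
      have : (16 : ℝ) ≤ (r : ℝ) ^ 4 := by
        calc (16 : ℝ) = 2 ^ 4 := by norm_num
          _ ≤ (r : ℝ) ^ 4 := by gcongr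
      have h3 : (r : ℝ) ^ 8 = r ^ 4 * r ^ 4 := by ring
      rw [h3]
      gcongr
    have h3 : (2 : ℝ) ^ 3 ≤ (r : ℝ) ^ 3 := by gcongr
    have h4 : x * ((r : ℝ) ^ (8 * r) * 8) ≤ 1 := by
      refine le_trans ?_ hxK
      rw [hK, pow_add]
      have : (8 : ℝ) ≤ (r : ℝ) ^ 3 := by linarith
      gcongr
    rw [hZ]
    push_cast
    calc (s : ℝ) * (16 * (r : ℝ) ^ 4) ^ r ≤ (c * L) * (r : ℝ) ^ (8 * r) := by gcongr
      _ = x * ((r : ℝ) ^ (8 * r) * 8) * (x * L / 8) := by rw [← hxx]; ring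
      _ ≤ 1 * (x * L / 8) := by gcongr
      _ = _ := one_mul _
  refine ⟨by rw [hs]; exact Nat.le_floor (by exact_mod_cast hcL), ?_, ?_, hx1⟩
  · have h1 : L ≤ n - 1 := by rw [hL]; exact Real.log_le_sub_one_of_pos (by linarith)
    have h2 : x * L ≤ 1 * L := by gcongr
    have h3 : 64 * (r : ℝ) ^ 8 < n := by linarith
    exact_mod_cast h3
  · have hlog4 : Real.log 4 ≤ 2 := by
      have h1 : Real.log 4 = 2 * Real.log 2 := by
        rw [show (4 : ℝ) = 2 ^ 2 by norm_num, Real.log_pow]; norm_num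
      have := Real.log_two_lt_d9
      linarith
    have h4 : (4 : ℝ) ^ Z ≤ Real.exp (x * L / 4) := by
      rw [← Real.rpow_natCast, Real.rpow_def_of_pos (by norm_num)]
      refine Real.exp_le_exp.2 ?_
      have : (0 : ℝ) ≤ Z := Nat.cast_nonneg _
      nlinarith
    have h5 : 64 * (r : ℝ) ^ 8 ≤ Real.exp (x * L / 64) := by
      have := Real.add_one_le_exp (x * L / 64)
      linarith
    calc 64 * (r : ℝ) ^ 8 * 4 ^ Z ≤ Real.exp (x * L / 64) * Real.exp (x * L / 4) := by gcongr
      _ = Real.exp (x * L / 64 + x * L / 4) := (Real.exp_add _ _).symm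
      _ ≤ Real.exp (L * x) := by
        refine Real.exp_le_exp.2 ?_
        have : 0 < x * L := by positivity
        linarith
      _ = (n : ℝ) ^ x := by rw [Real.rpow_def_of_pos (by linarith), hL]

/-- What is left of the common neighbourhood of `u` and `v` after removing the non-neighbours of
`r - 2` vertices; the margin is positive because `m = |U|` and the bound
`(1 / r + 1 / (2 r ^ 4)) m` on non-degrees exceeds `m / r` only slightly. -/
theorem codegree_estimate (r m : ℝ) (hr : 2 ≤ r) (hm : 0 ≤ m) :
    1 / (2 * r ^ 3) * m ≤
      (r - 1) * ((r + 2) * m - 2 * (r + 1) * ((1 / r + 1 / (2 * r ^ 4)) * m)) / (r * (r + 1)) -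
        (r - 2) * ((1 / r + 1 / (2 * r ^ 4)) * m) := by
  have h0 : 0 < r := by linarith
  have key : (r - 1) * ((r + 2) * m - 2 * (r + 1) * ((1 / r + 1 / (2 * r ^ 4)) * m)) /
      (r * (r + 1)) - (r - 2) * ((1 / r + 1 / (2 * r ^ 4)) * m) - 1 / (2 * r ^ 3) * m =
      (2 * r ^ 3 - 2 * r ^ 2 + 2 * r + 2) / (2 * r ^ 5 * (r + 1)) * m := by
    field_simp
    ring
  have h1 : 0 ≤ 2 * r ^ 3 - 2 * r ^ 2 + 2 * r + 2 := by nlinarith [sq_nonneg r]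
  have h2 : 0 ≤ (2 * r ^ 3 - 2 * r ^ 2 + 2 * r + 2) / (2 * r ^ 5 * (r + 1)) * m := by positivity
  linarith

theorem common_neighbor_estimate (r m : ℝ) (hr : 2 ≤ r) (hm : 0 ≤ m) :
    1 / (2 * r) * m ≤ m - (r - 1) * ((1 / r + 1 / (2 * r ^ 4)) * m) := by
  have h0 : 0 < r := by linarith
  have key : m - (r - 1) * ((1 / r + 1 / (2 * r ^ 4)) * m) - 1 / (2 * r) * m =
      (r ^ 3 - r + 1) / (2 * r ^ 4) * m := by
    field_simp
    ring
  have h1 : 0 ≤ r ^ 3 - r + 1 := by nlinarith [sq_nonneg r]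
  have h2 : 0 ≤ (r ^ 3 - r + 1) / (2 * r ^ 4) * m := by positivity
  linarith

theorem specMax_eq_zero {V : Type*} [Fintype V] [DecidableEq V] [Subsingleton V]
    (G : SimpleGraph V) : G.specMax = 0 := by
  classical
  rcases isEmpty_or_nonempty V with hV | hV
  · unfold SimpleGraph.specMax
    exact Real.iSup_of_isEmpty _
  · obtain ⟨x, -, hx1, hx⟩ := exists_perron G
    rw [← quad_perron G x _ hx1 hx]
    refine Finset.sum_eq_zero fun v _ => ?_
    have : nbSum G x v = 0 :=
      Finset.sum_eq_zero fun w _ => by rw [Subsingleton.elim w v]; simp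
    rw [this, mul_zero]

end

/-- **Theorem 2** (Nikiforov, "Spectral saturation"). Let `r ≥ 2`,
`2/ln n ≤ c ≤ r^(-(2r+9)(r+1))`, and `G` be a graph of order `n`. If `μ(G) > μ(T_r(n))`,
then `G` contains a copy of `K_r^+(⌊c ln n⌋, …, ⌊c ln n⌋, ⌈n^(1-√c)⌉)`. -/
theorem spectral_KrPlus {V : Type*} [Fintype V] [DecidableEq V] (r n : ℕ) (hr : 2 ≤ r)
    (c : ℝ) (hc1 : 2 / Real.log n ≤ c) (hc2 : c ≤ ((r : ℝ) ^ ((2 * r + 9) * (r + 1)))⁻¹)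
    (G : SimpleGraph V) (hcard : Fintype.card V = n)
    (hmu : (SimpleGraph.turanGraph n r).specMax < G.specMax) :
    G.ContainsKPartitePlus
      (fun i : Fin r => if (i : ℕ) < r - 1 then ⌊c * Real.log n⌋₊
        else ⌈(n : ℝ) ^ (1 - Real.sqrt c)⌉₊)
      ⟨0, by omega⟩ := by
  classical
  obtain ⟨q, rfl⟩ : ∃ q, r = q + 2 := ⟨r - 2, by omega⟩
  -- For `n ≤ 1` the logarithm is `0`, so the hypotheses on `c` say little, but `hmu` fails.
  have hn : 2 ≤ n := by
    by_contra h
    have hV : Subsingleton V := Fintype.card_le_one_iff_subsingleton.1 (by omega)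
    have hF : Subsingleton (Fin n) :=
      Fintype.card_le_one_iff_subsingleton.1 (by rw [Fintype.card_fin]; omega)
    rw [specMax_eq_zero, specMax_eq_zero] at hmu
    exact lt_irrefl _ hmu
  obtain ⟨s, hs⟩ : ∃ s, s = ⌊c * Real.log n⌋₊ := ⟨_, rfl⟩
  obtain ⟨Z, hZ⟩ : ∃ Z, Z = s * (16 * (q + 2) ^ 4) ^ (q + 2) := ⟨_, rfl⟩
  obtain ⟨hs2, hnr, hpow, hx1⟩ := size_estimates (q + 2) n hr hn c hc1 hc2 s Z hs hZ
  obtain ⟨U, hUc, hUd, S, hSU, hS⟩ := exists_dense_subset G (q + 2) n hr hcard hnr hmu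
  obtain ⟨R, hR⟩ : ∃ R : ℝ, R = (q + 2 : ℕ) := ⟨_, rfl⟩
  rw [← hR] at hpow hUc hUd
  have hqR : (q : ℝ) = R - 2 := by rw [hR]; push_cast; ring
  have hR2 : 2 ≤ R := by rw [hR]; exact_mod_cast hr
  have hR0 : 0 < R := by linarith
  have hn0 : (0 : ℝ) < n := by exact_mod_cast (by omega : 0 < n)
  have hm0 : (0 : ℝ) < U.card := lt_of_lt_of_le (by positivity) hUc
  have hU : U.Nonempty := by rw [← Finset.card_pos]; exact_mod_cast hm0
  obtain ⟨D, hDdef⟩ : ∃ D : ℝ, D = (1 / R + 1 / (2 * R ^ 4)) * U.card := ⟨_, rfl⟩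
  have hD : ∀ u ∈ U, (Finset.card {w ∈ U | ¬ G.Adj u w} : ℝ) ≤ D := by
    intro u hu
    have h1 := hUd u hu
    have h2 : (Finset.card {w ∈ U | G.Adj u w} : ℝ) +
        Finset.card {w ∈ U | ¬ G.Adj u w} = U.card := by
      exact_mod_cast Finset.card_filter_add_card_filter_not (s := U) (G.Adj u)
    rw [hDdef]
    linarith
  obtain ⟨u, huS, v, hvS, huv, hcod⟩ := exists_large_codegree G (q + 2) hr U S D hD hSU hS
  rw [← hR] at hcod
  have hN : 1 / (2 * R ^ 3) * U.card ≤
      Finset.card {w ∈ U | G.Adj u w ∧ G.Adj v w} - (q : ℝ) * D := by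
    have := codegree_estimate R U.card hR2 hm0.le
    rw [← hDdef] at this
    rw [hqR]
    linarith
  have hUD : 1 / (2 * R) * U.card ≤ U.card - ((q : ℝ) + 1) * D := by
    have := common_neighbor_estimate R U.card hR2 hm0.le
    rw [← hDdef] at this
    rw [hqR]
    linarith
  have hm4 : (n : ℝ) / (64 * R ^ 8 * 2 ^ Z) ≤ 1 / (8 * R ^ 4) / 2 * U.card / 2 ^ Z :=
    calc (n : ℝ) / (64 * R ^ 8 * 2 ^ Z) = 1 / (8 * R ^ 4) / 2 * (n / (4 * R ^ 4)) / 2 ^ Z := by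
          field_simp; norm_num
      _ ≤ _ := by gcongr
  have h24 : (2 : ℝ) ^ Z * 2 ^ Z = 4 ^ Z := by rw [← mul_pow]; norm_num
  have hZ2 : (Z : ℝ) ≤ 2 ^ Z := by exact_mod_cast Nat.lt_two_pow_self.le
  have h1Z : (1 : ℝ) ≤ 2 ^ Z := one_le_pow₀ (by norm_num)
  have hlarge : (Z : ℝ) ≤ 1 / (8 * R ^ 4) / 2 * U.card / 2 ^ Z := by
    refine le_trans ?_ hm4
    rw [le_div_iff₀ (by positivity)]
    calc (Z : ℝ) * (64 * R ^ 8 * 2 ^ Z) ≤ 2 ^ Z * (64 * R ^ 8 * 2 ^ Z) := by gcongr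
      _ = 64 * R ^ 8 * 4 ^ Z := by rw [← h24]; ring
      _ ≤ (n : ℝ) ^ Real.sqrt c := hpow
      _ ≤ (n : ℝ) ^ (1 : ℝ) :=
        Real.rpow_le_rpow_of_exponent_le (by exact_mod_cast (by omega : 1 ≤ n)) hx1
      _ = n := Real.rpow_one _
  have hy : (n : ℝ) ^ (1 - Real.sqrt c) ≤ 1 / (8 * R ^ 4) / 2 * U.card / 2 ^ Z := by
    refine le_trans ?_ hm4
    rw [Real.rpow_sub hn0, Real.rpow_one]
    refine div_le_div_of_nonneg_left hn0.le (by positivity) (le_trans ?_ hpow)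
    rw [← h24]
    refine mul_le_mul_of_nonneg_left ?_ (by positivity)
    nlinarith
  have hκβ : 1 / (8 * R ^ 4) ≤ 1 / (2 * R) :=
    one_div_le_one_div_of_le (by positivity) (by nlinarith [pow_le_pow_left₀ (by norm_num) hR2 3])
  have hκη : 1 / (8 * R ^ 4) ≤ 1 / (2 * R ^ 3) :=
    one_div_le_one_div_of_le (by positivity) (by nlinarith [pow_pos hR0 3])
  have hβ : 1 / (8 * R ^ 4) ≤ (1 / (2 * R) - 1 / (8 * R ^ 4)) * (1 / (2 * R ^ 3)) := by
    have key : (1 / (2 * R) - 1 / (8 * R ^ 4)) * (1 / (2 * R ^ 3)) - 1 / (8 * R ^ 4) =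
        (2 * R ^ 3 - 1) / (16 * R ^ 7) := by
      field_simp
      ring
    have h1 : 0 ≤ 2 * R ^ 3 - 1 := by
      linarith [pow_le_pow_left₀ (by norm_num : (0 : ℝ) ≤ 2) hR2 3]
    have h2 : 0 ≤ (2 * R ^ 3 - 1) / (16 * R ^ 7) := by positivity
    linarith
  obtain ⟨B, hBs, hBt, hBN, hB⟩ := exists_columns G U {w ∈ U | G.Adj u w ∧ G.Adj v w}
    (Finset.filter_subset _ _) D (by rw [hDdef]; positivity) hD q (1 / (8 * R ^ 4))
    (1 / (2 * R ^ 3)) (1 / (2 * R)) (by positivity) hκη hκβ hβ hU hN hUD s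
    (16 * (q + 2) ^ 4) ((n : ℝ) ^ (1 - Real.sqrt c)) (by omega)
    (by
      have : ((16 * (q + 2) ^ 4 : ℕ) : ℝ) = 16 * R ^ 4 := by rw [hR]; push_cast; ring
      rw [this]
      refine le_of_eq ?_
      field_simp
      norm_num)
    (by rw [← hZ]; exact hlarge) (by rw [← hZ]; exact hy)
  rw [← hs]
  exact containsKPartitePlus_of_columns G q s _ hs2 u v huv B hBs hBt
    (fun i hi hiq y hy => (Finset.mem_filter.1 (hBN i hi hiq hy)).2) hB
end
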